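/- arXiv:1804.11092 — 3 statements merged into one kernel-verified Lean document; each statement's English description precedes it below -/
import Mathlib

section
/- Let d ≥ 2, let D ⊂ ℝ^d be a bounded open set and x ∈ D. Let f : S^{d−1} → ℝ be bounded and measurable with ∫_{S^{d−1}} f(θ) dσ(θ) = 0, let u : D → ℝ be bounded and Hölder continuous with some exponent α ∈ (0,1], and let β : S^{d−1} → (0,∞) be continuous. For ε > 0 set V(x,ε) = {x} ∪ {y ∈ ℝ^d : 0 < |x−y| ≤ ε β((x−y)/|x−y|)}. Then lim_{ε→0⁺} ∫_{D∖V(x,ε)} f((x−y)/|x−y|) |x−y|^{−d} u(y) dy = p.v.∫_D f((x−y)/|x−y|) |x−y|^{−d} u(y) dy − u(x) ∫_{S^{d−1}} f(θ) log β(θ) dσ(θ). In particular the limit of the integrals over D minus a shrinking non-spherical exclusion volume depends on the shape β of the exclusion volume. -/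
/-!
After the substitution `z = x - y`, extend `u` by zero outside `D` to get `v z = u (x - z)`, and let
`K z = f (z/‖z‖) ‖z‖⁻ᵈ`. Choose `R` with `ball x R ⊆ D` and split
`v = w + v 0 · 1_{ball 0 R}`. Near the origin `|K w| ≲ ‖z‖^(α-d)` by Hölder continuity, and
elsewhere `K w` is bounded with bounded support, so `K w` is integrable
(`integrable_dirKernel_mul`), and its integral over the complement of any exclusion volume
shrinking to the origin tends to `L = ∫ K w` (`tendsto_integral_outside`), whatever the shape.

The remaining term is computed exactly: in polar coordinates the integral of `K` over
`{ε β(z/‖z‖) < ‖z‖ < R}` equals `∫ f(θ) (log R - log ε - log β(θ)) dσ(θ) = -∫ f log β dσ`, because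
`f` has mean zero (`integral_dirKernel_shell`). The limit for the shape `β` is therefore
`L - u(x) ∫ f log β dσ` (`tendsto_dirKernel_outside`), and `β = 1` shows that `L` is the principal
value. Only the values of `f` and `β` on the unit sphere matter, so both may be replaced by
bounded measurable functions on the whole space, with `β` still bounded away from zero.
-/

open MeasureTheory Metric Filter Topology NNReal

/-! ### Polar coordinates -/

/-- Integration in polar coordinates on `ℝᵈ`; `volumeIoiPow (d - 1)` is the measure `r ^ (d - 1) dr`. -/
theorem integral_polar {d : ℕ} (hd : 1 ≤ d) (G : EuclideanSpace ℝ (Fin d) → ℝ) :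
    ∫ z, G z = ∫ p : sphere (0 : EuclideanSpace ℝ (Fin d)) 1 × Set.Ioi (0 : ℝ),
      G ((p.2 : ℝ) • (p.1 : EuclideanSpace ℝ (Fin d)))
        ∂((volume : Measure (EuclideanSpace ℝ (Fin d))).toSphere.prod
          (Measure.volumeIoiPow (d - 1))) := by
  have : Nonempty (Fin d) := ⟨⟨0, hd⟩⟩
  have h := (volume : Measure (EuclideanSpace ℝ (Fin d))).measurePreserving_homeomorphUnitSphereProd
  rw [finrank_euclideanSpace_fin] at h
  have h3 : ∫ z, G z = ∫ z : ({0}ᶜ : Set (EuclideanSpace ℝ (Fin d))), G z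
      ∂(Measure.comap Subtype.val volume) := by
    rw [integral_subtype_comap (measurableSet_singleton _).compl, restrict_compl_singleton]
  rw [h3, ← h.integral_comp
    (homeomorphUnitSphereProd (EuclideanSpace ℝ (Fin d))).measurableEmbedding]
  refine integral_congr_ae (Eventually.of_forall fun z => ?_)
  have hz : ‖(z : EuclideanSpace ℝ (Fin d))‖ ≠ 0 := norm_ne_zero_iff.2 z.2
  simp [smul_smul, hz]

theorem integrable_polar {d : ℕ} (hd : 1 ≤ d) {G : EuclideanSpace ℝ (Fin d) → ℝ}
    (hG : Integrable G) :
    Integrable (fun p : sphere (0 : EuclideanSpace ℝ (Fin d)) 1 × Set.Ioi (0 : ℝ) =>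
      G ((p.2 : ℝ) • (p.1 : EuclideanSpace ℝ (Fin d))))
        ((volume : Measure (EuclideanSpace ℝ (Fin d))).toSphere.prod
          (Measure.volumeIoiPow (d - 1))) := by
  have : Nonempty (Fin d) := ⟨⟨0, hd⟩⟩
  have h := (volume : Measure (EuclideanSpace ℝ (Fin d))).measurePreserving_homeomorphUnitSphereProd
  rw [finrank_euclideanSpace_fin] at h
  rw [← h.integrable_comp_emb (Homeomorph.measurableEmbedding _)]
  have h2 := (integrableOn_iff_comap_subtypeVal (s := {(0 : EuclideanSpace ℝ (Fin d))}ᶜ)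
    (measurableSet_singleton _).compl).1 (hG.integrableOn)
  refine h2.congr (Eventually.of_forall fun z => ?_)
  have hz : ‖(z : EuclideanSpace ℝ (Fin d))‖ ≠ 0 := norm_ne_zero_iff.2 z.2
  simp [smul_smul, hz]

theorem integral_volumeIoiPow (n : ℕ) (g : ℝ → ℝ) :
    ∫ r : Set.Ioi (0 : ℝ), g r ∂(Measure.volumeIoiPow n) = ∫ r in Set.Ioi (0 : ℝ), r ^ n * g r := by
  rw [Measure.volumeIoiPow, integral_withDensity_eq_integral_toReal_smul (by fun_prop) (by simp),
    ← integral_subtype_comap measurableSet_Ioi]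
  refine integral_congr_ae (Eventually.of_forall fun r => ?_)
  have : (0:ℝ) ≤ (r : ℝ) ^ n := pow_nonneg r.2.out.le n
  simp [ENNReal.toReal_ofReal this]

/-- The radial part of the kernel, integrated in polar coordinates, is `∫ dr / r` over `(a, R)`. -/
theorem integral_radial {d : ℕ} (hd : 1 ≤ d) {a R : ℝ} (ha : 0 < a) (haR : a ≤ R) :
    ∫ r in Set.Ioi (0 : ℝ), r ^ (d - 1) * (Set.Ioo a R).indicator (fun r => (r ^ d)⁻¹) r
      = Real.log R - Real.log a := by
  have h1 : ∀ r ∈ Set.Ioi (0 : ℝ), r ^ (d - 1) * (Set.Ioo a R).indicator (fun r => (r ^ d)⁻¹) r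
      = (Set.Ioo a R).indicator (fun r => r⁻¹) r := by
    intro r hr
    have hr : (0 : ℝ) < r := hr
    by_cases h : r ∈ Set.Ioo a R
    · simp only [Set.indicator_of_mem h]
      obtain ⟨k, rfl⟩ : ∃ k, d = k + 1 := ⟨d - 1, by omega⟩
      simp only [Nat.add_sub_cancel]
      rw [pow_succ]
      field_simp
    · simp [h]
  rw [setIntegral_congr_fun measurableSet_Ioi h1, setIntegral_indicator measurableSet_Ioo,
    Set.inter_eq_right.2 (show Set.Ioo a R ⊆ Set.Ioi 0 from fun r hr => ha.trans hr.1),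
    ← integral_Ioc_eq_integral_Ioo,
    ← intervalIntegral.integral_of_le haR, integral_inv_of_pos ha (ha.trans_le haR),
    Real.log_div (ha.trans_le haR).ne' ha.ne']

/-! ### The homogeneous kernel on shells -/

/-- The homogeneous kernel `f (z / ‖z‖) / ‖z‖ ^ d` of degree `-d` with angular part `f`. At `z = 0` its
value is a junk value that plays no role in the integrals. -/
noncomputable def dirKernel {d : ℕ} (f : EuclideanSpace ℝ (Fin d) → ℝ)
    (z : EuclideanSpace ℝ (Fin d)) : ℝ :=
  f (‖z‖⁻¹ • z) * (‖z‖ ^ d)⁻¹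

theorem measurable_dirKernel {d : ℕ} {f : EuclideanSpace ℝ (Fin d) → ℝ} (hf : Measurable f) :
    Measurable (dirKernel f) := by
  unfold dirKernel
  exact (hf.comp (by fun_prop)).mul (by fun_prop)

theorem measurableSet_outside {d : ℕ} {β : EuclideanSpace ℝ (Fin d) → ℝ} (hβ : Measurable β)
    (ε : ℝ) :
    MeasurableSet {z : EuclideanSpace ℝ (Fin d) | ε * β (‖z‖⁻¹ • z) < ‖z‖} :=
  measurableSet_lt (measurable_const.mul (hβ.comp (by fun_prop))) (by fun_prop)

theorem abs_dirKernel_le {d : ℕ} {f : EuclideanSpace ℝ (Fin d) → ℝ} {M r : ℝ}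
    (hfM : ∀ z, |f z| ≤ M) (hr : 0 < r) {z : EuclideanSpace ℝ (Fin d)} (hz : r ≤ ‖z‖) :
    |dirKernel f z| ≤ M * (r ^ d)⁻¹ := by
  have hM : 0 ≤ M := (abs_nonneg _).trans (hfM 0)
  rw [dirKernel, abs_mul, abs_of_nonneg (a := (‖z‖ ^ d)⁻¹) (by positivity)]
  gcongr
  exact hfM _

theorem integrableOn_dirKernel_shell {d : ℕ} {f β : EuclideanSpace ℝ (Fin d) → ℝ} {M b ε R : ℝ}
    (hf : Measurable f) (hfM : ∀ z, |f z| ≤ M) (hβ : Measurable β) (hb : 0 < b)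
    (hbβ : ∀ z, b ≤ β z) (hε : 0 < ε) :
    IntegrableOn (dirKernel f) ({z | ε * β (‖z‖⁻¹ • z) < ‖z‖} ∩ ball 0 R) := by
  refine Measure.integrableOn_of_bounded (M := M * ((ε * b) ^ d)⁻¹) ?_
    (measurable_dirKernel hf).aestronglyMeasurable ?_
  · exact ((measure_mono Set.inter_subset_right).trans_lt measure_ball_lt_top).ne
  · filter_upwards [ae_restrict_mem ((measurableSet_outside hβ ε).inter measurableSet_ball)] with z hz
    exact abs_dirKernel_le hfM (by positivity)
      ((mul_le_mul_of_nonneg_left (hbβ _) hε.le).trans hz.1.le)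

/-- The integral of the kernel over `{ε β(z/‖z‖) < ‖z‖ < R}` depends on neither `ε` nor `R`
as long as `ε * B ≤ R`: the terms `log R` and `log ε` are multiplied by the mean of `f`, which vanishes. -/
theorem integral_dirKernel_shell {d : ℕ} (hd : 1 ≤ d) {f β : EuclideanSpace ℝ (Fin d) → ℝ}
    {M b B ε R : ℝ}
    (hf : Measurable f) (hfM : ∀ z, |f z| ≤ M)
    (hf0 : (∫ θ : sphere (0 : EuclideanSpace ℝ (Fin d)) 1,
        f θ ∂((volume : Measure (EuclideanSpace ℝ (Fin d))).toSphere)) = 0)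
    (hβ : Measurable β) (hb : 0 < b)
    (hbβ : ∀ z, b ≤ β z) (hβB : ∀ z, β z ≤ B) (hε : 0 < ε) (hεR : ε * B ≤ R) :
    ∫ z in {z | ε * β (‖z‖⁻¹ • z) < ‖z‖} ∩ ball 0 R, dirKernel f z
      = - ∫ θ : sphere (0 : EuclideanSpace ℝ (Fin d)) 1,
        f θ * Real.log (β θ) ∂((volume : Measure (EuclideanSpace ℝ (Fin d))).toSphere) := by
  have hms := (measurableSet_outside hβ ε).inter (measurableSet_ball (x := 0) (ε := R))
  have hint := integrableOn_dirKernel_shell (R := R) hf hfM hβ hb hbβ hε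
  rw [← integrable_indicator_iff hms] at hint
  have hint2 := integrable_polar hd hint
  rw [← integral_indicator hms, integral_polar hd, integral_prod _ hint2]
  have key : ∀ θ : sphere (0 : EuclideanSpace ℝ (Fin d)) 1,
      ∫ r : Set.Ioi (0 : ℝ), ({z | ε * β (‖z‖⁻¹ • z) < ‖z‖} ∩ ball 0 R).indicator (dirKernel f)
        ((r : ℝ) • (θ : EuclideanSpace ℝ (Fin d))) ∂(Measure.volumeIoiPow (d - 1))
      = (Real.log R - Real.log ε) * f θ - f θ * Real.log (β θ) := by
    intro θ
    have hβθ : 0 < β θ := hb.trans_le (hbβ _)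
    have h1 : ∀ r : Set.Ioi (0 : ℝ),
        ({z | ε * β (‖z‖⁻¹ • z) < ‖z‖} ∩ ball 0 R).indicator (dirKernel f)
          ((r : ℝ) • (θ : EuclideanSpace ℝ (Fin d)))
        = f θ * (Set.Ioo (ε * β θ) R).indicator (fun r => (r ^ d)⁻¹) (r : ℝ) := by
      classical
      rintro ⟨r, hr⟩
      have hr : 0 < r := hr
      have hn : ‖r • (θ : EuclideanSpace ℝ (Fin d))‖ = r := by
        simp [norm_smul, abs_of_pos hr]
      have hdir : r⁻¹ • r • (θ : EuclideanSpace ℝ (Fin d)) = θ := by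
        rw [smul_smul, inv_mul_cancel₀ hr.ne', one_smul]
      simp [Set.indicator_apply, dirKernel, hn, hdir]
    simp_rw [h1]
    rw [integral_const_mul, integral_volumeIoiPow _
        (fun r => (Set.Ioo (ε * β θ) R).indicator (fun r => (r ^ d)⁻¹) r),
      integral_radial hd (by positivity)
      ((mul_le_mul_of_nonneg_left (hβB _) hε.le).trans hεR), Real.log_mul hε.ne' hβθ.ne']
    ring
  simp_rw [key]
  have hfi : Integrable (fun θ : sphere (0 : EuclideanSpace ℝ (Fin d)) 1 => f θ)
      (volume : Measure (EuclideanSpace ℝ (Fin d))).toSphere :=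
    Integrable.of_bound (hf.comp measurable_subtype_coe).aestronglyMeasurable M
      (Eventually.of_forall fun θ => hfM θ)
  have hfl : Integrable (fun θ : sphere (0 : EuclideanSpace ℝ (Fin d)) 1 => f θ * Real.log (β θ))
      (volume : Measure (EuclideanSpace ℝ (Fin d))).toSphere := by
    refine hfi.mul_bdd (c := max |Real.log b| |Real.log B|)
      ((Real.measurable_log.comp (hβ.comp measurable_subtype_coe)).aestronglyMeasurable)
      (Eventually.of_forall fun θ => ?_)
    rw [Real.norm_eq_abs]
    exact abs_le_max_abs_abs (Real.log_le_log hb (hbβ _))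
      (Real.log_le_log (hb.trans_le (hbβ _)) (hβB _))
  rw [integral_sub (hfi.const_mul _) hfl, integral_const_mul, hf0]
  ring

/-! ### Limits over shrinking exclusion volumes -/

/-- Subtracting `v 0` on `ball 0 R` makes the singular integrand absolutely integrable: the Hölder
bound gives `‖z‖ ^ (α - d)` inside this ball, and outside it the kernel is bounded while `v` is
bounded with bounded support. -/
theorem integrable_dirKernel_mul {d : ℕ} (hd : 1 ≤ d) {f v : EuclideanSpace ℝ (Fin d) → ℝ}
    {M A T R C α : ℝ}
    (hf : Measurable f) (hfM : ∀ z, |f z| ≤ M)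
    (hv : Measurable v) (hvA : ∀ z, |v z| ≤ A) (hvT : ∀ z, T ≤ ‖z‖ → v z = 0)
    (hR : 0 < R) (hα : 0 < α) (hC : ∀ z, ‖z‖ < R → |v z - v 0| ≤ C * ‖z‖ ^ α) :
    Integrable fun z => dirKernel f z * (v z - (ball 0 R).indicator (fun _ => v 0) z) := by
  have : Nonempty (Fin d) := ⟨⟨0, hd⟩⟩
  have hM : 0 ≤ M := (abs_nonneg _).trans (hfM 0)
  have hA : 0 ≤ A := (abs_nonneg _).trans (hvA 0)
  have h1 : IntegrableOn (fun z : EuclideanSpace ℝ (Fin d) => (‖z‖ ^ d)⁻¹ * ‖z‖ ^ α)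
      (ball 0 R) := by
    refine (integrableOn_fun_norm_addHaar (E := EuclideanSpace ℝ (Fin d)) volume
      (f := fun r : ℝ => (r ^ d)⁻¹ * r ^ α)).2 ?_
    rw [finrank_euclideanSpace_fin]
    refine (((intervalIntegral.integrableOn_Ioo_rpow_iff (s := α - 1) hR).2
      (by linarith))).congr_fun (fun r hr => ?_) measurableSet_Ioo
    have hr : 0 < r := hr.1
    obtain ⟨k, rfl⟩ : ∃ k, d = k + 1 := ⟨d - 1, by omega⟩
    simp only [Nat.add_sub_cancel, smul_eq_mul]
    rw [Real.rpow_sub hr, Real.rpow_one, pow_succ]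
    field_simp
  have h2 : IntegrableOn (fun _ : EuclideanSpace ℝ (Fin d) => M * (R ^ d)⁻¹ * A) (ball 0 T) :=
    integrableOn_const measure_ball_lt_top.ne
  have h3 := ((integrable_indicator_iff measurableSet_ball).2 (h1.const_mul (M * C))).add
    ((integrable_indicator_iff measurableSet_ball).2 h2)
  refine h3.mono' ((measurable_dirKernel hf).mul
    (hv.sub (measurable_const.indicator measurableSet_ball))).aestronglyMeasurable
    (Eventually.of_forall fun z => ?_)
  rw [Real.norm_eq_abs, abs_mul, Pi.add_apply]
  by_cases hz : ‖z‖ < R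
  · have hz' : z ∈ ball (0 : EuclideanSpace ℝ (Fin d)) R := by simpa using hz
    rw [Set.indicator_of_mem hz', Set.indicator_of_mem hz']
    have h4 : 0 ≤ (ball (0 : EuclideanSpace ℝ (Fin d)) T).indicator
        (fun _ => M * (R ^ d)⁻¹ * A) z := Set.indicator_nonneg (fun _ _ => by positivity) _
    have h5 : |dirKernel f z| ≤ M * (‖z‖ ^ d)⁻¹ := by
      rw [dirKernel, abs_mul, abs_of_nonneg (a := (‖z‖ ^ d)⁻¹) (by positivity)]
      gcongr
      exact hfM _
    calc _ ≤ (M * (‖z‖ ^ d)⁻¹) * (C * ‖z‖ ^ α) :=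
          mul_le_mul h5 (hC z hz) (abs_nonneg _) (by positivity)
      _ ≤ _ := by linarith
  · have hz' : z ∉ ball (0 : EuclideanSpace ℝ (Fin d)) R := by simpa using hz
    rw [Set.indicator_of_notMem hz', Set.indicator_of_notMem hz', zero_add, sub_zero]
    by_cases hT : ‖z‖ < T
    · rw [Set.indicator_of_mem (by simpa using hT)]
      exact mul_le_mul (abs_dirKernel_le hfM hR (not_lt.1 hz)) (hvA z) (abs_nonneg _)
        (by positivity)
    · rw [Set.indicator_of_notMem (by simpa using hT), hvT z (not_lt.1 hT)]
      simp

/-- For an integrable function the shape of the shrinking exclusion volume does not affect the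
limit. The hypothesis `G 0 = 0` makes the pointwise convergence hold at the origin as well. -/
theorem tendsto_integral_outside {d : ℕ} {β G : EuclideanSpace ℝ (Fin d) → ℝ}
    (hβ : Measurable β) (hG : Integrable G) (hG0 : G 0 = 0) :
    Tendsto (fun ε : ℝ => ∫ z in {z | ε * β (‖z‖⁻¹ • z) < ‖z‖}, G z) (𝓝[>] 0)
      (𝓝 (∫ z, G z)) := by
  simp_rw [← integral_indicator (measurableSet_outside hβ _)]
  refine tendsto_integral_filter_of_dominated_convergence (fun z => ‖G z‖)
    (Eventually.of_forall fun ε =>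
      hG.aestronglyMeasurable.indicator (measurableSet_outside hβ ε))
    (Eventually.of_forall fun ε => Eventually.of_forall fun z => norm_indicator_le_norm_self _ _)
    hG.norm (Eventually.of_forall fun z => ?_)
  rcases eq_or_ne z 0 with rfl | hz
  · simp [Set.indicator_apply, hG0]
  · have h1 : Tendsto (fun ε : ℝ => ε * β (‖z‖⁻¹ • z)) (𝓝[>] 0) (𝓝 0) := by
      have : Tendsto (fun ε : ℝ => ε * β (‖z‖⁻¹ • z)) (𝓝 0) (𝓝 (0 * β (‖z‖⁻¹ • z))) :=
        tendsto_id.mul_const _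
      rw [zero_mul] at this
      exact this.mono_left nhdsWithin_le_nhds
    refine tendsto_const_nhds.congr' ?_
    filter_upwards [h1.eventually (gt_mem_nhds (norm_pos_iff.2 hz))] with ε hε
    rw [Set.indicator_of_mem (by exact hε)]

/-- The limit over the exterior of the exclusion volume of shape `β`, in coordinates centred at the
singularity. Its first term, an absolutely convergent integral, does not involve `β`. -/
theorem tendsto_dirKernel_outside {d : ℕ} (hd : 1 ≤ d) {f β v : EuclideanSpace ℝ (Fin d) → ℝ}
    {M b B A T R C α : ℝ}
    (hf : Measurable f) (hfM : ∀ z, |f z| ≤ M)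
    (hf0 : (∫ θ : sphere (0 : EuclideanSpace ℝ (Fin d)) 1,
        f θ ∂((volume : Measure (EuclideanSpace ℝ (Fin d))).toSphere)) = 0)
    (hβ : Measurable β) (hb : 0 < b) (hbβ : ∀ z, b ≤ β z) (hβB : ∀ z, β z ≤ B)
    (hv : Measurable v) (hvA : ∀ z, |v z| ≤ A) (hvT : ∀ z, T ≤ ‖z‖ → v z = 0)
    (hR : 0 < R) (hα : 0 < α) (hC : ∀ z, ‖z‖ < R → |v z - v 0| ≤ C * ‖z‖ ^ α) :
    Tendsto (fun ε : ℝ => ∫ z in {z | ε * β (‖z‖⁻¹ • z) < ‖z‖}, dirKernel f z * v z) (𝓝[>] 0)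
      (𝓝 ((∫ z, dirKernel f z * (v z - (ball 0 R).indicator (fun _ => v 0) z)) -
        v 0 * ∫ θ : sphere (0 : EuclideanSpace ℝ (Fin d)) 1,
          f θ * Real.log (β θ) ∂((volume : Measure (EuclideanSpace ℝ (Fin d))).toSphere))) := by
  have hint := integrable_dirKernel_mul hd hf hfM hv hvA hvT hR hα hC
  have h1 := tendsto_integral_outside hβ hint (by simp [hR])
  refine (h1.sub_const _).congr' ?_
  have hB : 0 < B := hb.trans_le ((hbβ 0).trans (hβB 0))
  -- Once `ε * B ≤ R` the exclusion volume lies inside the closed ball of radius `R`.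
  filter_upwards [Ioo_mem_nhdsGT (show 0 < R / B by positivity)] with ε hε
  have hεR : ε * B ≤ R := ((lt_div_iff₀ hB).1 hε.2).le
  have hshell := integral_dirKernel_shell hd hf hfM hf0 hβ hb hbβ hβB hε.1 hεR
  have hshelli := integrableOn_dirKernel_shell (R := R) hf hfM hβ hb hbβ hε.1
  set V := {z : EuclideanSpace ℝ (Fin d) | ε * β (‖z‖⁻¹ • z) < ‖z‖}
  have h2 : ∀ z, dirKernel f z * v z
      = dirKernel f z * (v z - (ball 0 R).indicator (fun _ => v 0) z)
        + v 0 * (ball 0 R).indicator (dirKernel f) z := by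
    intro z
    by_cases hz : z ∈ ball (0 : EuclideanSpace ℝ (Fin d)) R
    · simp only [Set.indicator_of_mem hz]; ring
    · simp only [Set.indicator_of_notMem hz]; ring
  simp_rw [h2]
  rw [integral_add hint.integrableOn, integral_const_mul, setIntegral_indicator measurableSet_ball,
    hshell]
  · ring
  · refine Integrable.const_mul ?_ _
    rw [integrable_indicator_iff measurableSet_ball, IntegrableOn,
      Measure.restrict_restrict measurableSet_ball, Set.inter_comm]
    exact hshelli

/-! ### Reduction to coordinates centred at the singularity -/

theorem exists_measurable_extension {d : ℕ} {h : EuclideanSpace ℝ (Fin d) → ℝ} (c : ℝ)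
    (hh : Measurable fun θ : sphere (0 : EuclideanSpace ℝ (Fin d)) 1 => h θ) :
    ∃ g : EuclideanSpace ℝ (Fin d) → ℝ, Measurable g ∧
      (∀ θ ∈ sphere (0 : EuclideanSpace ℝ (Fin d)) 1, g θ = h θ) ∧
      (∀ z ∉ sphere (0 : EuclideanSpace ℝ (Fin d)) 1, g z = c) := by
  have he : MeasurableEmbedding (Subtype.val : sphere (0 : EuclideanSpace ℝ (Fin d)) 1 → _) :=
    MeasurableEmbedding.subtype_coe isClosed_sphere.measurableSet
  refine ⟨Function.extend Subtype.val (fun θ : sphere (0 : EuclideanSpace ℝ (Fin d)) 1 => h θ)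
    (fun _ => c), he.measurable_extend hh measurable_const, fun θ hθ => ?_, fun z hz => ?_⟩
  · exact he.injective.extend_apply _ _ (⟨θ, hθ⟩ : sphere (0 : EuclideanSpace ℝ (Fin d)) 1)
  · exact Function.extend_apply' _ _ _ (by rintro ⟨θ, rfl⟩; exact hz θ.2)

theorem inv_norm_smul_mem_sphere {d : ℕ} {z : EuclideanSpace ℝ (Fin d)} (hz : z ≠ 0) :
    ‖z‖⁻¹ • z ∈ sphere (0 : EuclideanSpace ℝ (Fin d)) 1 := by
  simp [norm_smul, hz]

/-- The substitution `z = x - y`, with `u` extended by zero outside `D`. The set `V` is the exclusion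
volume of shape `β` around `x`; for `β = 1` it is a closed ball. -/
theorem setIntegral_diff_eq {d : ℕ} {D V : Set (EuclideanSpace ℝ (Fin d))} (hD : IsOpen D)
    {x : EuclideanSpace ℝ (Fin d)} {f f' β u : EuclideanSpace ℝ (Fin d) → ℝ} {ε : ℝ}
    (hff' : ∀ θ ∈ sphere (0 : EuclideanSpace ℝ (Fin d)) 1, f' θ = f θ)
    (hβ : Measurable β) (hxV : x ∈ V)
    (hV : ∀ y, y ∉ V ↔ ε * β (‖x - y‖⁻¹ • (x - y)) < ‖x - y‖) :
    ∫ y in D \ V, f (‖x - y‖⁻¹ • (x - y)) * (‖x - y‖ ^ d)⁻¹ * u y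
      = ∫ z in {z | ε * β (‖z‖⁻¹ • z) < ‖z‖}, dirKernel f' z * D.indicator u (x - z) := by
  classical
  have hms : MeasurableSet (D \ V) := by
    have : D \ V = D ∩ (fun y => x - y) ⁻¹' {z | ε * β (‖z‖⁻¹ • z) < ‖z‖} := by
      ext y
      simp [hV]
    rw [this]
    exact hD.measurableSet.inter ((measurableSet_outside hβ ε).preimage (by fun_prop))
  rw [← integral_indicator hms, ← integral_indicator (measurableSet_outside hβ ε),
    ← integral_sub_left_eq_self _ volume x]
  congr 1
  funext z
  have hV' := hV (x - z)
  rw [sub_sub_cancel] at hV'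
  simp only [Set.indicator_apply, Set.mem_sdiff, hV', Set.mem_ofPred_eq, sub_sub_cancel]
  by_cases h1 : ε * β (‖z‖⁻¹ • z) < ‖z‖
  · have hz : z ≠ 0 := by
      rintro rfl
      exact (hV'.2 h1) (by simpa using hxV)
    by_cases h2 : x - z ∈ D
    · simp [h1, h2, dirKernel, hff' _ (inv_norm_smul_mem_sphere hz)]
    · simp [h2]
  · simp [h1]

/-! ### The limit formula -/

/-- **Non-spherical exclusion volumes for singular integrals (Mikhlin).**
With the hypotheses of the existence theorem for the principal value, if the exclusion
volume `V(x,ε) = {x} ∪ {y : 0 < |x−y| ≤ ε β((x−y)/|x−y|)}` has shape given by a continuous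
positive function `β` on the unit sphere, then the limit of the integrals over `D ∖ V(x,ε)`
equals the principal value (limit `L` over balls) minus the correction term
`u(x) ∫_{S^{d−1}} f(θ) log β(θ) dσ(θ)`. -/
theorem singular_integral_nonspherical_exclusion
    (d : ℕ) (hd : 2 ≤ d)
    (D : Set (EuclideanSpace ℝ (Fin d))) (hDopen : IsOpen D) (hDbdd : Bornology.IsBounded D)
    (x : EuclideanSpace ℝ (Fin d)) (hx : x ∈ D)
    (f : EuclideanSpace ℝ (Fin d) → ℝ)
    (hf_meas : Measurable fun θ : Metric.sphere (0 : EuclideanSpace ℝ (Fin d)) 1 => f θ)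
    (hf_bdd : ∃ C : ℝ, ∀ θ ∈ Metric.sphere (0 : EuclideanSpace ℝ (Fin d)) 1, |f θ| ≤ C)
    (hf_mean : (∫ θ : Metric.sphere (0 : EuclideanSpace ℝ (Fin d)) 1,
        f θ ∂((volume : Measure (EuclideanSpace ℝ (Fin d))).toSphere)) = 0)
    (u : EuclideanSpace ℝ (Fin d) → ℝ)
    (hu_bdd : ∃ C : ℝ, ∀ y ∈ D, |u y| ≤ C)
    (α : ℝ≥0) (hα0 : 0 < α) (hα1 : α ≤ 1)
    (C : ℝ≥0) (hu_holder : HolderOnWith C α u D)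
    (β : EuclideanSpace ℝ (Fin d) → ℝ)
    (hβ_pos : ∀ θ ∈ Metric.sphere (0 : EuclideanSpace ℝ (Fin d)) 1, 0 < β θ)
    (hβ_cont : Continuous fun θ : Metric.sphere (0 : EuclideanSpace ℝ (Fin d)) 1 => β θ) :
    ∃ L : ℝ,
      Tendsto
        (fun ε : ℝ =>
          ∫ y in D \ Metric.closedBall x ε,
            f (‖x - y‖⁻¹ • (x - y)) * (‖x - y‖ ^ d)⁻¹ * u y)
        (𝓝[>] (0 : ℝ)) (𝓝 L) ∧
      Tendsto
        (fun ε : ℝ =>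
          ∫ y in D \ ({x} ∪ {y : EuclideanSpace ℝ (Fin d) |
              0 < ‖x - y‖ ∧ ‖x - y‖ ≤ ε * β (‖x - y‖⁻¹ • (x - y))}),
            f (‖x - y‖⁻¹ • (x - y)) * (‖x - y‖ ^ d)⁻¹ * u y)
        (𝓝[>] (0 : ℝ))
        (𝓝 (L - u x * ∫ θ : Metric.sphere (0 : EuclideanSpace ℝ (Fin d)) 1,
            f θ * Real.log (β θ) ∂((volume : Measure (EuclideanSpace ℝ (Fin d))).toSphere))) := by
  classical
  have hd1 : 1 ≤ d := by omega
  have : Nonempty (Fin d) := ⟨⟨0, hd1⟩⟩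
  obtain ⟨M, hM⟩ := hf_bdd
  obtain ⟨A, hA⟩ := hu_bdd
  obtain ⟨f', hf'm, hf', hf'0⟩ := exists_measurable_extension 0 hf_meas
  obtain ⟨β', hβ'm, hβ', hβ'1⟩ := exists_measurable_extension 1 hβ_cont.measurable
  have hne : Nonempty (sphere (0 : EuclideanSpace ℝ (Fin d)) 1) :=
    (NormedSpace.sphere_nonempty.2 zero_le_one).to_subtype
  obtain ⟨θ₀, -, hθ₀⟩ := isCompact_univ.exists_isMinOn Set.univ_nonempty hβ_cont.continuousOn
  obtain ⟨θ₁, -, hθ₁⟩ := isCompact_univ.exists_isMaxOn Set.univ_nonempty hβ_cont.continuousOn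
  have hM0 : 0 ≤ M := (abs_nonneg _).trans (hM θ₀ θ₀.2)
  have hA0 : 0 ≤ A := (abs_nonneg _).trans (hA x hx)
  have hf'M : ∀ z, |f' z| ≤ M := fun z => by
    by_cases hz : z ∈ sphere (0 : EuclideanSpace ℝ (Fin d)) 1
    · rw [hf' z hz]; exact hM z hz
    · rw [hf'0 z hz]; simpa using hM0
  have hβ'lo : ∀ z, min (β θ₀) 1 ≤ β' z := fun z => by
    by_cases hz : z ∈ sphere (0 : EuclideanSpace ℝ (Fin d)) 1
    · rw [hβ' z hz]; exact (min_le_left _ _).trans (hθ₀ (Set.mem_univ ⟨z, hz⟩))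
    · rw [hβ'1 z hz]; exact min_le_right _ _
  have hβ'hi : ∀ z, β' z ≤ max (β θ₁) 1 := fun z => by
    by_cases hz : z ∈ sphere (0 : EuclideanSpace ℝ (Fin d)) 1
    · rw [hβ' z hz]; exact le_max_of_le_left (hθ₁ (Set.mem_univ ⟨z, hz⟩))
    · rw [hβ'1 z hz]; exact le_max_right _ _
  have hb : 0 < min (β θ₀) 1 := lt_min (hβ_pos θ₀ θ₀.2) one_pos
  have hf'mean : (∫ θ : sphere (0 : EuclideanSpace ℝ (Fin d)) 1,
      f' θ ∂((volume : Measure (EuclideanSpace ℝ (Fin d))).toSphere)) = 0 := by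
    rw [← hf_mean]
    exact integral_congr_ae (Eventually.of_forall fun θ => hf' θ θ.2)
  have hu_cont : ContinuousOn u D := hu_holder.continuousOn hα0
  have hum : Measurable (D.indicator u) := by
    rw [← Set.piecewise_eq_indicator]
    exact hu_cont.measurable_piecewise continuousOn_const hDopen.measurableSet
  let v : EuclideanSpace ℝ (Fin d) → ℝ := fun z => D.indicator u (x - z)
  have hvm : Measurable v := hum.comp (by fun_prop)
  have hvA : ∀ z, |v z| ≤ A := fun z => by
    by_cases hz : x - z ∈ D
    · simpa [v, hz] using hA _ hz
    · simpa [v, hz] using hA0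
  have hv0 : v 0 = u x := by simp [v, hx]
  obtain ⟨T, hT⟩ := hDbdd.subset_ball x
  have hvT : ∀ z, T ≤ ‖z‖ → v z = 0 := fun z hz => by
    refine Set.indicator_of_notMem (fun h => ?_) _
    have := hT h
    simp only [mem_ball, dist_eq_norm, sub_sub_cancel_left, norm_neg] at this
    exact this.not_ge hz
  obtain ⟨R, hR, hRD⟩ := Metric.isOpen_iff.1 hDopen x hx
  have hC : ∀ z, ‖z‖ < R → |v z - v 0| ≤ C * ‖z‖ ^ (α : ℝ) := fun z hz => by
    have hzD : x - z ∈ D := hRD (by simpa [dist_eq_norm] using hz)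
    have h := hu_holder.dist_le hzD hx
    rw [hv0]
    simpa [v, hzD, Real.dist_eq, dist_eq_norm] using h
  -- Applied below to the given shape and to the constant shape `1`, with the same first term.
  have main := fun {β'' : EuclideanSpace ℝ (Fin d) → ℝ} {b B : ℝ} (h1 : Measurable β'')
      (h2 : 0 < b) (h3 : ∀ z, b ≤ β'' z) (h4 : ∀ z, β'' z ≤ B) =>
    tendsto_dirKernel_outside hd1 hf'm hf'M hf'mean h1 h2 h3 h4 hvm hvA hvT hR
      (NNReal.coe_pos.2 hα0) hC
  refine ⟨∫ z, dirKernel f' z * (v z - (ball 0 R).indicator (fun _ => v 0) z), ?_, ?_⟩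
  · have h := main (β'' := fun _ => 1) measurable_const one_pos (fun _ => le_rfl) (fun _ => le_rfl)
    simp only [Real.log_one, mul_zero, integral_zero, sub_zero] at h
    refine h.congr' ?_
    filter_upwards [self_mem_nhdsWithin] with ε hε
    have hε : 0 < ε := hε
    refine (setIntegral_diff_eq hDopen (β := fun _ => 1) hf' measurable_const
      (mem_closedBall_self hε.le) fun y => ?_).symm
    simp [dist_eq_norm, norm_sub_rev]
  · have h := main hβ'm hb hβ'lo hβ'hi
    have hlog : ∫ θ : sphere (0 : EuclideanSpace ℝ (Fin d)) 1,
        f' θ * Real.log (β' θ) ∂((volume : Measure (EuclideanSpace ℝ (Fin d))).toSphere)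
        = ∫ θ : sphere (0 : EuclideanSpace ℝ (Fin d)) 1,
        f θ * Real.log (β θ) ∂((volume : Measure (EuclideanSpace ℝ (Fin d))).toSphere) :=
      integral_congr_ae (Eventually.of_forall fun θ => by
        simp only [hf' θ θ.2, hβ' θ θ.2])
    rw [hlog, hv0] at h
    rw [hv0]
    refine h.congr' ?_
    filter_upwards [self_mem_nhdsWithin] with ε hε
    have hε : 0 < ε := hε
    refine (setIntegral_diff_eq hDopen hf' hβ'm (by simp) fun y => ?_).symm
    rcases eq_or_ne y x with rfl | hyx
    · have : 0 < β' 0 := hb.trans_le (hβ'lo 0)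
      simp only [Set.mem_union, Set.mem_singleton_iff, true_or, not_true_eq_false, sub_self,
        norm_zero, smul_zero, false_iff, not_lt]
      positivity
    · have hs := inv_norm_smul_mem_sphere (sub_ne_zero.2 hyx.symm)
      have hp : 0 < ‖x - y‖ := norm_pos_iff.2 (sub_ne_zero.2 hyx.symm)
      rw [hβ' _ hs]
      simp only [Set.mem_union, Set.mem_singleton_iff, hyx, Set.mem_ofPred_eq, hp, true_and,
        false_or, not_le]
end

section
/- Let d ≥ 2, let D ⊂ ℝ^d be a bounded open set and x ∈ D. Let g : S^{d−1} → ℝ be continuously differentiable (e.g. the restriction to S^{d−1} of a C¹ function on ℝ^d∖{0}), and let u : D → ℝ be bounded and Hölder continuous with some exponent α ∈ (0,1]. Define w(z) = ∫_D g((z−y)/|z−y|) |z−y|^{1−d} u(y) dy for z near x. Then w is differentiable at x and, for each i ∈ {1,…,d}, ∂w/∂x_i (x) = p.v.∫_D ∂/∂x_i [ g((x−y)/|x−y|) |x−y|^{1−d} ] u(y) dy + u(x) ∫_{S^{d−1}} g(θ) θ_i dσ(θ), where the kernel ∂/∂x_i [ g((x−y)/|x−y|) |x−y|^{1−d} ]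 is positively homogeneous of degree −d in x−y and the principal value exists. -/
open MeasureTheory Metric Filter Topology NNReal

/-!
Write `K(v) = g(v/|v|) |v|^{1-d}`. It is `C¹` away from the origin and homogeneous of degree
`1 - d`, and its derivative is homogeneous of degree `-d`. Compactness of the sphere therefore
gives `|K(v)| ≤ M |v|^{1-d}` and `|DK(v)| ≤ M |v|^{-d}`.

Let `Φ` be a smooth radial cut-off function, equal to `1` near the origin and supported in a ball
so small that its translate to `x` lies in `D`. Put `s = x - y` and write
`u(x - s) = V(s) + u(x) Φ(s)`, so that `|V(s)| ≤ A |s|^α`.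

* The potential of `V` can be differentiated under the integral sign
  (`IsKernel.hasFDerivAt_potential`), since `DK · V = O(|s|^{α-d})` is integrable. The difference
  quotients are dominated where `|s| > 2|h|`, and where `|s| ≤ 2|h|` their integral is bounded
  by that of `|s|^{α-d}` over a ball of radius `3|h|`.
* The potential of `Φ` is the convolution of the locally integrable `K` with a test function, so
  the derivative can be moved to `Φ`. In polar coordinates `∫ K ∂ᵢΦ = -Φ(0) ∫ g(θ) θᵢ dσ(θ)`
  (`integral_homKernel_mul_fderiv_radial`), which is the correction term.
* The principal value of `∂ᵢK` against `Φ` vanishes. In polar coordinates it is a multiple of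
  `∫ ∂ᵢK dσ` over the sphere, and this integral is zero (`sphere_integral_fderiv_eq_zero`):
  integrate by parts against a radial function `Ψ` supported in an annulus, and apply the
  formula of the previous item with `Ψ(0) = 0`.
-/

namespace WeaklySingular

/-! ### Polar coordinates and integrable powers of the norm -/

/-- The Euclidean space of dimension `d`. -/
abbrev Euc (d : ℕ) := EuclideanSpace ℝ (Fin d)

theorem nontrivial_euc {d : ℕ} (hd : 2 ≤ d) : Nontrivial (Euc d) := by
  have : Nonempty (Fin d) := ⟨⟨0, by omega⟩⟩
  infer_instance

/-- Integration in polar coordinates of a product of a radial and an angular function. No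
integrability is assumed: both sides use the same junk value `0`. -/
theorem polar {d : ℕ} (f : ℝ → ℝ) (G : Euc d → ℝ) (hd : 2 ≤ d) :
    ∫ s : Euc d, f ‖s‖ * G (‖s‖⁻¹ • s) =
      (∫ r in Set.Ioi (0 : ℝ), r ^ (d - 1) * f r) *
        ∫ θ : sphere (0 : Euc d) 1, G θ ∂((volume : Measure (Euc d)).toSphere) := by
  have := nontrivial_euc hd
  have hmp := (volume : Measure (Euc d)).measurePreserving_homeomorphUnitSphereProd
  have h2 := hmp.integral_comp (homeomorphUnitSphereProd (Euc d)).measurableEmbedding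
    (fun p => G p.1 * f p.2)
  rw [integral_prod_mul (fun θ : sphere (0 : Euc d) 1 => G θ)
    (fun r : Set.Ioi (0 : ℝ) => f r)] at h2
  calc
    ∫ s : Euc d, f ‖s‖ * G (‖s‖⁻¹ • s)
        = ∫ s : ({(0)}ᶜ : Set (Euc d)), f ‖s.1‖ * G (‖s.1‖⁻¹ • s.1)
            ∂(Measure.comap (↑) (volume : Measure (Euc d))) := by
      rw [integral_subtype_comap (measurableSet_singleton _).compl
          fun s : Euc d => f ‖s‖ * G (‖s‖⁻¹ • s), restrict_compl_singleton]
    _ = _ := by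
      rw [mul_comm]
      convert h2 using 2
      · ext s
        simp [mul_comm]
      · simp only [finrank_euclideanSpace, Fintype.card_fin, Measure.volumeIoiPow,
          ENNReal.ofReal]
        rw [integral_withDensity_eq_integral_smul, integral_subtype_comap measurableSet_Ioi
          fun a : ℝ => Real.toNNReal (a ^ (d - 1)) • f a]
        · refine setIntegral_congr_fun measurableSet_Ioi fun x hx => ?_
          rw [NNReal.smul_def, Real.coe_toNNReal _ (pow_nonneg hx.out.le _), smul_eq_mul]
        · exact (measurable_subtype_coe.pow_const _).real_toNNReal

/-- The power `‖v‖ ^ p` of the norm, cut off to zero outside the closed ball of radius `R`. -/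
noncomputable def cutPow (d : ℕ) (p R : ℝ) : Euc d → ℝ :=
  (closedBall (0 : Euc d) R).indicator fun v => ‖v‖ ^ p

theorem cutPow_nonneg {d : ℕ} (p R : ℝ) (v : Euc d) : 0 ≤ cutPow d p R v :=
  Set.indicator_nonneg (fun _ _ => by positivity) v

theorem cutPow_of_le {d : ℕ} (p R : ℝ) {v : Euc d} (h : ‖v‖ ≤ R) :
    cutPow d p R v = ‖v‖ ^ p := by
  simp [cutPow, h]

theorem integrable_cutPow {d : ℕ} (hd : 2 ≤ d) {p : ℝ} (hp : -(d : ℝ) < p) (R : ℝ) :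
    Integrable (cutPow d p R) := by
  have := nontrivial_euc hd
  suffices h : Integrable (cutPow d p (max R 1)) by
    have : cutPow d p R = (closedBall (0 : Euc d) R).indicator (cutPow d p (max R 1)) := by
      ext v
      by_cases hv : ‖v‖ ≤ R <;> simp [cutPow, hv]
    rw [this]
    exact h.indicator measurableSet_closedBall
  have h0 : 0 < max R 1 := by positivity
  generalize max R 1 = R at h0
  have h1 : cutPow d p R = fun v => (Set.Iic R).indicator (fun r => r ^ p) ‖v‖ := by
    ext v
    by_cases hv : ‖v‖ ≤ R <;> simp [cutPow, hv]
  rw [h1, integrable_fun_norm_addHaar, finrank_euclideanSpace, Fintype.card_fin]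
  have h2 : IntegrableOn (fun x : ℝ => x ^ ((d - 1 : ℝ) + p)) (Set.Ioo 0 R) :=
    (intervalIntegral.integrableOn_Ioo_rpow_iff h0).2 (by linarith)
  rw [← integrableOn_Ioc_iff_integrableOn_Ioo] at h2
  rw [← integrable_indicator_iff measurableSet_Ioc] at h2
  rw [← integrable_indicator_iff measurableSet_Ioi]
  refine h2.congr (Eventually.of_forall fun r => ?_)
  by_cases hr : 0 < r
  · by_cases hr2 : r ≤ R
    · simp only [Set.indicator, Set.mem_Ioc, hr, hr2, Set.mem_Ioi, Set.mem_Iic, if_true, and_self,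
        smul_eq_mul]
      rw [Real.rpow_add hr, ← Real.rpow_natCast, Nat.cast_sub (by omega)]
      simp
    · simp [Set.indicator, hr2]
  · simp [Set.indicator, hr]

theorem tendsto_integral_cutPow {d : ℕ} (hd : 2 ≤ d) {p : ℝ} (hp : -(d : ℝ) < p) :
    Tendsto (fun r : ℝ => ∫ v, cutPow d p r v) (𝓝 0) (𝓝 0) := by
  have := nontrivial_euc hd
  have : (0 : ℝ) = ∫ v : Euc d, (0 : ℝ) := by simp
  nth_rw 2 [this]
  refine tendsto_integral_filter_of_dominated_convergence (cutPow d p 1)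
    (Eventually.of_forall fun r => (integrable_cutPow hd hp r).aestronglyMeasurable) ?_
    (integrable_cutPow hd hp 1) ?_
  · filter_upwards [eventually_le_nhds (zero_lt_one' ℝ)] with r hr
    refine Eventually.of_forall fun v => ?_
    rw [Real.norm_of_nonneg (cutPow_nonneg _ _ _)]
    exact Set.indicator_le_indicator_of_subset (closedBall_subset_closedBall hr)
      (fun _ => by positivity) v
  · have h0 : ∀ᵐ v : Euc d, v ≠ 0 := by simp [ae_iff]
    filter_upwards [h0] with v hv
    refine tendsto_const_nhds.congr' ?_
    filter_upwards [eventually_lt_nhds (norm_pos_iff.2 hv)] with r hr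
    simp [cutPow, hr]


/-! ### Differentiating the potential of a density vanishing at the singularity -/

/-- `K` is measurable, differentiable away from the origin, and there `K` and its derivative have
the size, with constant `M`, of functions homogeneous of degree `1 - d` and `-d`. -/
structure IsKernel {d : ℕ} (K : Euc d → ℝ) (M : ℝ) : Prop where
  nonneg : 0 ≤ M
  measurable : Measurable K
  differentiableAt : ∀ v, v ≠ 0 → DifferentiableAt ℝ K v
  bound : ∀ v, v ≠ 0 → |K v| ≤ M * ‖v‖ ^ (1 - d : ℝ)
  bound_fderiv : ∀ v, v ≠ 0 → ‖fderiv ℝ K v‖ ≤ M * ‖v‖ ^ (-d : ℝ)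

theorem ae_add_ne_zero {d : ℕ} (hd : 2 ≤ d) (h : Euc d) : ∀ᵐ s : Euc d, s + h ≠ 0 := by
  have := nontrivial_euc hd
  have h1 : {s : Euc d | s + h = 0} = {-h} := by ext s; simp [eq_neg_iff_add_eq_zero]
  simp [ae_iff, h1]

theorem ae_ne_zero {d : ℕ} (hd : 2 ≤ d) : ∀ᵐ s : Euc d, s ≠ 0 := by
  simpa using ae_add_ne_zero hd 0

namespace IsKernel

variable {d : ℕ} {K : Euc d → ℝ} {M : ℝ}

theorem integrable_mul_shift (hd : 2 ≤ d) (hK : IsKernel K M) {V : Euc d → ℝ}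
    (hV : AEStronglyMeasurable V) {B R : ℝ} (hVB : ∀ s, |V s| ≤ B) (hVR : ∀ s, R < ‖s‖ → V s = 0)
    (h : Euc d) : Integrable fun s => K (s + h) * V s := by
  have h1 : Integrable fun s : Euc d => M * B * cutPow d (1 - d) (R + ‖h‖) (s + h) :=
    ((integrable_cutPow hd (by linarith) _).comp_add_right h).const_mul _
  refine h1.mono' ?_ ?_
  · exact (hK.measurable.comp (measurable_id.add_const h)).aestronglyMeasurable.mul hV
  · filter_upwards [ae_add_ne_zero hd h] with s hs
    have hB : 0 ≤ B := (abs_nonneg _).trans (hVB 0)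
    by_cases hsR : R < ‖s‖
    · rw [hVR s hsR]
      have := hK.nonneg
      have := cutPow_nonneg (1 - d) (R + ‖h‖) (s + h)
      simp only [mul_zero, norm_zero]
      positivity
    · rw [cutPow_of_le _ _ ((norm_add_le _ _).trans (by linarith)), norm_mul, Real.norm_eq_abs,
        Real.norm_eq_abs]
      calc |K (s + h)| * |V s| ≤ (M * ‖s + h‖ ^ (1 - d : ℝ)) * B :=
            mul_le_mul (hK.bound _ hs) (hVB s) (abs_nonneg _)
              (mul_nonneg hK.nonneg (by positivity))
        _ = _ := by ring

theorem integrable_smul_fderiv (hd : 2 ≤ d) (hK : IsKernel K M) {V : Euc d → ℝ}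
    (hV : AEStronglyMeasurable V) {A R α : ℝ} (hα : 0 < α) (hVA : ∀ s, |V s| ≤ A * ‖s‖ ^ α)
    (hVR : ∀ s, R < ‖s‖ → V s = 0) : Integrable fun s => V s • fderiv ℝ K s := by
  have h1 : Integrable fun s : Euc d => M * A * cutPow d (α - d) R s :=
    (integrable_cutPow hd (by linarith) _).const_mul _
  refine h1.mono' (hV.smul (measurable_fderiv ℝ K).aestronglyMeasurable) ?_
  filter_upwards [ae_ne_zero hd] with s hs
  have hs0 := norm_pos_iff.2 hs
  have hA : 0 ≤ A * ‖s‖ ^ α := (abs_nonneg _).trans (hVA s)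
  by_cases hsR : R < ‖s‖
  · rw [hVR s hsR]
    simp [cutPow, hsR]
  · rw [cutPow_of_le _ _ (not_lt.1 hsR), norm_smul, Real.norm_eq_abs]
    calc |V s| * ‖fderiv ℝ K s‖ ≤ (A * ‖s‖ ^ α) * (M * ‖s‖ ^ (-d : ℝ)) :=
          mul_le_mul (hVA s) (hK.bound_fderiv _ hs) (norm_nonneg _) hA
      _ = _ := by rw [sub_eq_add_neg, Real.rpow_add hs0]; ring

/-- First-order Taylor remainder away from the singularity: the mean value inequality on the ball
of radius `‖s‖ / 2` about `s`, which stays at distance `‖s‖ / 2` from the origin. -/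
theorem remainder_far (hK : IsKernel K M) {s h : Euc d} (hs : 2 * ‖h‖ < ‖s‖) :
    |K (s + h) - K s - fderiv ℝ K s h| ≤ M * (2 ^ d + 1) * ‖h‖ * ‖s‖ ^ (-d : ℝ) := by
  have hs0 : 0 < ‖s‖ := lt_of_le_of_lt (by positivity) hs
  have hball : ∀ v ∈ ball s (‖s‖ / 2), ‖s‖ / 2 ≤ ‖v‖ := by
    intro v hv
    rw [mem_ball, dist_eq_norm] at hv
    have := norm_sub_norm_le s v
    rw [norm_sub_rev] at this
    linarith
  have hM := hK.nonneg
  have h1 : ‖K (s + h) - K s‖ ≤ (M * (2 ^ d * ‖s‖ ^ (-d : ℝ))) * ‖s + h - s‖ := by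
    refine (convex_ball s (‖s‖ / 2)).norm_image_sub_le_of_norm_fderiv_le (𝕜 := ℝ) ?_ ?_
      (mem_ball_self (by positivity)) (by rw [mem_ball, dist_eq_norm]; simp; linarith)
    · intro v hv
      exact hK.differentiableAt v (norm_pos_iff.1 (lt_of_lt_of_le (by positivity) (hball v hv)))
    · intro v hv
      have hv0 : 0 < ‖v‖ := lt_of_lt_of_le (by positivity) (hball v hv)
      refine (hK.bound_fderiv v (norm_pos_iff.1 hv0)).trans ?_
      gcongr
      calc ‖v‖ ^ (-d : ℝ) ≤ (‖s‖ / 2) ^ (-d : ℝ) :=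
            Real.rpow_le_rpow_of_nonpos (by positivity) (hball v hv) (by simp)
        _ = 2 ^ d * ‖s‖ ^ (-d : ℝ) := by
          rw [Real.rpow_neg (by positivity), Real.rpow_neg (by positivity), Real.rpow_natCast,
            Real.rpow_natCast, div_pow]
          field_simp
  rw [add_sub_cancel_left, Real.norm_eq_abs] at h1
  have h2 : |fderiv ℝ K s h| ≤ M * ‖s‖ ^ (-d : ℝ) * ‖h‖ :=
    ((fderiv ℝ K s).le_opNorm h).trans
      (mul_le_mul_of_nonneg_right (hK.bound_fderiv s (norm_pos_iff.1 hs0)) (norm_nonneg h))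
  calc _ ≤ |K (s + h) - K s| + |fderiv ℝ K s h| := abs_sub _ _
    _ ≤ _ := by linarith

/-- First-order Taylor remainder near the singularity, where each of the three terms is estimated
separately; the weight `‖s‖ ^ α` gains the factor `‖h‖`. -/
theorem remainder_near (hK : IsKernel K M) {s h : Euc d} {α : ℝ} (hα : 0 < α) (hα1 : α ≤ 1)
    (hs : ‖s‖ ≤ 2 * ‖h‖) (hs0 : s ≠ 0) (hsh : s + h ≠ 0) :
    |K (s + h) - K s - fderiv ℝ K s h| * ‖s‖ ^ α
      ≤ 3 * M * ‖h‖ * (‖s‖ ^ (α - d) + ‖s + h‖ ^ (α - d)) := by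
  have hM := hK.nonneg
  have p1 := norm_pos_iff.2 hs0
  have p2 := norm_pos_iff.2 hsh
  have ph : 0 < ‖h‖ := by linarith
  have e1 : |K (s + h)| * ‖s‖ ^ α ≤ 3 * M * ‖h‖ * ‖s + h‖ ^ (α - d) := by
    have i1 : ‖s‖ ^ α ≤ (3 * ‖h‖) ^ α := Real.rpow_le_rpow p1.le (by linarith) hα.le
    have i2 : ‖s + h‖ ^ (1 - α) ≤ (3 * ‖h‖) ^ (1 - α) :=
      Real.rpow_le_rpow p2.le ((norm_add_le _ _).trans (by linarith)) (by linarith)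
    calc |K (s + h)| * ‖s‖ ^ α ≤ (M * ‖s + h‖ ^ (1 - d : ℝ)) * (3 * ‖h‖) ^ α := by
          gcongr; exact hK.bound _ hsh
      _ = M * ‖s + h‖ ^ (α - d) * ‖s + h‖ ^ (1 - α) * (3 * ‖h‖) ^ α := by
          rw [mul_assoc M (‖s + h‖ ^ (α - d)), ← Real.rpow_add p2]; congr 3; ring
      _ ≤ M * ‖s + h‖ ^ (α - d) * (3 * ‖h‖) ^ (1 - α) * (3 * ‖h‖) ^ α := by gcongr
      _ = 3 * M * ‖h‖ * ‖s + h‖ ^ (α - d) := by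
          rw [mul_assoc _ ((3 * ‖h‖) ^ (1 - α)), ← Real.rpow_add (by positivity)]
          simp; ring
  have e2 : |K s| * ‖s‖ ^ α ≤ 2 * M * ‖h‖ * ‖s‖ ^ (α - d) := by
    calc |K s| * ‖s‖ ^ α ≤ (M * ‖s‖ ^ (1 - d : ℝ)) * ‖s‖ ^ α := by
          gcongr; exact hK.bound _ hs0
      _ = M * ‖s‖ ^ (α - d) * ‖s‖ := by
          rw [mul_assoc, ← Real.rpow_add p1, mul_assoc, ← Real.rpow_add_one p1.ne']; congr 2; ring
      _ ≤ M * ‖s‖ ^ (α - d) * (2 * ‖h‖) := by gcongr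
      _ = _ := by ring
  have e3 : |fderiv ℝ K s h| * ‖s‖ ^ α ≤ M * ‖h‖ * ‖s‖ ^ (α - d) := by
    calc |fderiv ℝ K s h| * ‖s‖ ^ α ≤ (M * ‖s‖ ^ (-d : ℝ) * ‖h‖) * ‖s‖ ^ α := by
          gcongr
          exact ((fderiv ℝ K s).le_opNorm h).trans
            (mul_le_mul_of_nonneg_right (hK.bound_fderiv s hs0) (norm_nonneg h))
      _ = _ := by rw [sub_eq_add_neg, Real.rpow_add p1]; ring
  have e4 : |K (s + h) - K s - fderiv ℝ K s h| ≤ |K (s + h)| + |K s| + |fderiv ℝ K s h| :=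
    (abs_sub _ _).trans (by gcongr; exact abs_sub _ _)
  calc _ ≤ (|K (s + h)| + |K s| + |fderiv ℝ K s h|) * ‖s‖ ^ α := by gcongr
    _ ≤ _ := by linarith

/-- Differentiation under the integral sign at `h = 0`, where the density `V` vanishes to order
`α` at the singularity of the kernel. -/
theorem hasFDerivAt_potential (hd : 2 ≤ d) (hK : IsKernel K M) {V : Euc d → ℝ}
    (hV : AEStronglyMeasurable V) {A R α : ℝ} (hα : 0 < α) (hα1 : α ≤ 1)
    (hVA : ∀ s, |V s| ≤ A * ‖s‖ ^ α) (hVR : ∀ s, R < ‖s‖ → V s = 0) :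
    HasFDerivAt (fun h => ∫ s, K (s + h) * V s) (∫ s, V s • fderiv ℝ K s) 0 := by
  have hM := hK.nonneg
  have hA : 0 ≤ A := by
    have := nontrivial_euc hd
    obtain ⟨s, hs⟩ := exists_norm_eq (Euc d) (zero_le_one' ℝ)
    simpa [hs] using (abs_nonneg _).trans (hVA s)
  have hVB : ∀ s, |V s| ≤ A * (max R 0) ^ α := by
    intro s
    by_cases hs : R < ‖s‖
    · rw [hVR s hs, abs_zero]; positivity
    · refine (hVA s).trans ?_
      gcongr
      exact (not_lt.1 hs).trans (le_max_left _ _)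
  have i1 := fun h => hK.integrable_mul_shift hd hV hVB hVR h
  have i0 : Integrable fun s => K s * V s := by simpa using i1 0
  have i2 := hK.integrable_smul_fderiv hd hV hα hVA hVR
  have i3 : ∀ h, Integrable fun s => V s * fderiv ℝ K s h := fun h => by
    simpa using i2.apply_continuousLinearMap h
  set q : Euc d → Euc d → ℝ := fun h s => ‖h‖⁻¹ * ((K (s + h) - K s - fderiv ℝ K s h) * V s)
    with hq
  have iq : ∀ h, Integrable (q h) := fun h => by
    refine ((((i1 h).sub i0).sub (i3 h)).const_mul ‖h‖⁻¹).congr (Eventually.of_forall fun s => ?_)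
    simp only [hq, Pi.sub_apply]
    ring
  have hint : ∀ h, ∫ s, q h s = ‖h‖⁻¹ * ((∫ s, K (s + h) * V s) - (∫ s, K (s + 0) * V s) -
      (∫ s, V s • fderiv ℝ K s) (h - 0)) := fun h => by
    rw [hq, integral_const_mul, ContinuousLinearMap.integral_apply i2]
    simp only [add_zero, sub_zero, smul_apply, smul_eq_mul]
    have i4 : Integrable fun s => K (s + h) * V s - K s * V s := (i1 h).sub i0
    rw [← integral_sub (i1 h) i0, ← integral_sub i4 (i3 h)]
    congr 2
    ext s
    ring
  rw [hasFDerivAt_iff_tendsto]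
  suffices hmain : Tendsto (fun h => ∫ s, q h s) (𝓝 0) (𝓝 0) by
    refine hmain.norm.congr' (Eventually.of_forall fun h => ?_) |>.trans (by simp)
    simp only [hint, norm_mul, norm_inv, norm_norm, sub_zero]
  -- `S h` is the region where the segment from `s` to `s + h` stays away from the origin
  set S : Euc d → Set (Euc d) := fun h => {s | 2 * ‖h‖ < ‖s‖} with hS
  have hSm : ∀ h, MeasurableSet (S h) := fun h =>
    (isOpen_lt continuous_const continuous_norm).measurableSet
  have hsplit : ∀ h, ∫ s, q h s = (∫ s, (S h).indicator (q h) s) + ∫ s in (S h)ᶜ, q h s := fun h => by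
    rw [integral_indicator (hSm h), integral_add_compl (hSm h) (iq h)]
  simp_rw [hsplit]
  rw [← add_zero (0 : ℝ)]
  refine Tendsto.add ?_ ?_
  · rw [show (𝓝 (0 : ℝ)) = 𝓝 (∫ s : Euc d, (0 : ℝ)) by simp]
    refine tendsto_integral_filter_of_dominated_convergence
      (fun s => M * (2 ^ d + 1) * A * cutPow d (α - d) R s)
      (Eventually.of_forall fun h => ((iq h).indicator (hSm h)).aestronglyMeasurable)
      (Eventually.of_forall fun h => ?_)
      ((integrable_cutPow hd (by linarith) _).const_mul _) ?_
    · refine Eventually.of_forall fun s => ?_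
      have hcp := cutPow_nonneg (α - d) R s
      by_cases hs : s ∈ S h
      · rw [Set.indicator_of_mem hs]
        have hs0 : 0 < ‖s‖ := lt_of_le_of_lt (by positivity) hs
        by_cases hsR : R < ‖s‖
        · simp only [hq, hVR s hsR, mul_zero, norm_zero]
          positivity
        · rw [cutPow_of_le _ _ (not_lt.1 hsR)]
          simp only [hq, norm_mul, norm_inv, Real.norm_eq_abs, abs_norm]
          calc ‖h‖⁻¹ * (|K (s + h) - K s - fderiv ℝ K s h| * |V s|)
              ≤ ‖h‖⁻¹ * ((M * (2 ^ d + 1) * ‖h‖ * ‖s‖ ^ (-d : ℝ)) * (A * ‖s‖ ^ α)) := by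
                gcongr
                · exact hK.remainder_far hs
                · exact hVA s
            _ = (‖h‖⁻¹ * ‖h‖) * (M * (2 ^ d + 1) * A * ‖s‖ ^ (α - d)) := by
                rw [sub_eq_add_neg, Real.rpow_add hs0]; ring
            _ ≤ 1 * (M * (2 ^ d + 1) * A * ‖s‖ ^ (α - d)) := by
                gcongr
                exact inv_mul_le_one
            _ = _ := one_mul _
      · rw [Set.indicator_of_notMem hs, norm_zero]
        positivity
    · filter_upwards [ae_ne_zero hd] with s hs
      have h1 := hasFDerivAt_iff_tendsto.1 (hK.differentiableAt s hs).hasFDerivAt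
      have h2 : Tendsto (fun h : Euc d => s + h) (𝓝 0) (𝓝 s) := by
        simpa using (continuous_const_add s).tendsto (0 : Euc d)
      have h3 := (h1.comp h2).mul_const |V s|
      rw [zero_mul] at h3
      refine squeeze_zero_norm (fun h => ?_) h3
      refine (norm_indicator_le_norm_self _ _).trans (le_of_eq ?_)
      simp [hq, mul_assoc]
  -- on the complement both `s` and `s + h` lie in the ball of radius `3‖h‖`
  · have hr : Tendsto (fun h : Euc d => 3 * ‖h‖) (𝓝 0) (𝓝 0) := by
      have : Continuous fun h : Euc d => 3 * ‖h‖ := by fun_prop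
      simpa using this.tendsto 0
    have hlim : Tendsto (fun h : Euc d => 3 * M * A * (2 * ∫ v, cutPow d (α - d) (3 * ‖h‖) v))
        (𝓝 0) (𝓝 0) := by
      simpa using (((tendsto_integral_cutPow hd (by linarith : -(d : ℝ) < α - d)).comp hr).const_mul
        2).const_mul (3 * M * A)
    refine squeeze_zero_norm (fun h => ?_) hlim
    have ic := integrable_cutPow hd (by linarith : -(d : ℝ) < α - d) (3 * ‖h‖)
    have heq : 3 * M * A * (2 * ∫ v, cutPow d (α - d) (3 * ‖h‖) v) =
        ∫ s, 3 * M * A * (cutPow d (α - d) (3 * ‖h‖) s + cutPow d (α - d) (3 * ‖h‖) (s + h)) := by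
      rw [integral_const_mul, integral_add ic (ic.comp_add_right h), integral_add_right_eq_self]
      ring
    rw [heq, ← integral_indicator (hSm h).compl]
    refine norm_integral_le_of_norm_le ((ic.add (ic.comp_add_right h)).const_mul _) ?_
    filter_upwards [ae_ne_zero hd, ae_add_ne_zero hd h] with s hs hsh
    have c1 := cutPow_nonneg (α - d) (3 * ‖h‖) s
    have c2 := cutPow_nonneg (α - d) (3 * ‖h‖) (s + h)
    by_cases hsS : s ∈ (S h)ᶜ
    · rw [Set.indicator_of_mem hsS]
      have hs2 : ‖s‖ ≤ 2 * ‖h‖ := not_lt.1 hsS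
      have := norm_nonneg h
      rw [cutPow_of_le _ _ (by linarith), cutPow_of_le _ _ ((norm_add_le _ _).trans (by linarith))]
      simp only [hq, norm_mul, norm_inv, Real.norm_eq_abs, abs_norm]
      calc ‖h‖⁻¹ * (|K (s + h) - K s - fderiv ℝ K s h| * |V s|)
          ≤ ‖h‖⁻¹ * (|K (s + h) - K s - fderiv ℝ K s h| * (A * ‖s‖ ^ α)) := by
            gcongr
            exact hVA s
        _ = ‖h‖⁻¹ * A * (|K (s + h) - K s - fderiv ℝ K s h| * ‖s‖ ^ α) := by ring
        _ ≤ ‖h‖⁻¹ * A * (3 * M * ‖h‖ * (‖s‖ ^ (α - d) + ‖s + h‖ ^ (α - d))) := by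
            gcongr ?_ * ?_
            exact hK.remainder_near hα hα1 hs2 hs hsh
        _ = (‖h‖⁻¹ * ‖h‖) * (3 * M * A * (‖s‖ ^ (α - d) + ‖s + h‖ ^ (α - d))) := by ring
        _ ≤ 1 * (3 * M * A * (‖s‖ ^ (α - d) + ‖s + h‖ ^ (α - d))) := by
            gcongr
            exact inv_mul_le_one
        _ = _ := one_mul _
    · rw [Set.indicator_of_notMem hsS, norm_zero]
      positivity

end IsKernel

/-! ### The homogeneous kernel -/

/-- The kernel `g(v/|v|) |v|^{1-d}`, homogeneous of degree `1 - d`. Its value at `v = 0` is `0`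
for `d ≥ 2`, by the convention for negative powers of zero. -/
noncomputable def homKernel (d : ℕ) (g : Euc d → ℝ) (v : Euc d) : ℝ :=
  g (‖v‖⁻¹ • v) * ‖v‖ ^ ((1 : ℝ) - d)

section HomKernel

variable {d : ℕ} {g : Euc d → ℝ}

theorem normalize_smul {t : ℝ} (ht : 0 < t) (v : Euc d) :
    ‖t • v‖⁻¹ • (t • v) = ‖v‖⁻¹ • v := by
  rw [norm_smul, Real.norm_of_nonneg ht.le, smul_smul, mul_inv, mul_right_comm,
    inv_mul_cancel₀ ht.ne', one_mul]

theorem homKernel_smul {t : ℝ} (ht : 0 < t) (v : Euc d) :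
    homKernel d g (t • v) = t ^ ((1 : ℝ) - d) * homKernel d g v := by
  simp only [homKernel]
  rw [normalize_smul ht, norm_smul, Real.norm_of_nonneg ht.le,
    Real.mul_rpow ht.le (norm_nonneg _)]
  ring

theorem fderiv_homKernel_smul {t : ℝ} (ht : 0 < t) (v : Euc d) :
    fderiv ℝ (homKernel d g) (t • v) = t ^ (-(d : ℝ)) • fderiv ℝ (homKernel d g) v := by
  have h1 := fderiv_comp_smul (f := homKernel d g) (x := v) t
  have h2 : (fun x => homKernel d g (t • x)) = fun x => t ^ ((1 : ℝ) - d) • homKernel d g x := by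
    ext x; exact homKernel_smul ht x
  have h3 : fderiv ℝ (fun x => t ^ ((1 : ℝ) - d) • homKernel d g x) v =
      t ^ ((1 : ℝ) - d) • fderiv ℝ (homKernel d g) v := by
    exact congrFun (fderiv_const_smul_field (𝕜 := ℝ) (t ^ ((1 : ℝ) - d))) v
  rw [h2, h3, sub_eq_add_neg, Real.rpow_add ht, Real.rpow_one, mul_smul] at h1
  exact (smul_right_injective _ ht.ne' h1).symm

theorem fderiv_homKernel_eq {v : Euc d} (hv : v ≠ 0) :
    fderiv ℝ (homKernel d g) v =
      ‖v‖ ^ (-(d : ℝ)) • fderiv ℝ (homKernel d g) (‖v‖⁻¹ • v) := by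
  have h0 := norm_pos_iff.2 hv
  rw [← fderiv_homKernel_smul h0, smul_smul, mul_inv_cancel₀ h0.ne', one_smul]

theorem contDiffOn_homKernel (hg : ContDiffOn ℝ 1 g {(0 : Euc d)}ᶜ) :
    ContDiffOn ℝ 1 (homKernel d g) {(0 : Euc d)}ᶜ := by
  intro v hv
  have hv : v ≠ 0 := hv
  have hn : ContDiffAt ℝ 1 (fun v : Euc d => ‖v‖) v := contDiffAt_norm ℝ hv
  have h1 : ContDiffAt ℝ 1 (fun v : Euc d => ‖v‖⁻¹ • v) v :=
    (hn.inv (norm_ne_zero_iff.2 hv)).smul contDiffAt_id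
  have hne : ‖v‖⁻¹ • v ≠ 0 := by simpa using hv
  have h2 : ContDiffAt ℝ 1 g (‖v‖⁻¹ • v) := hg.contDiffAt (isOpen_compl_singleton.mem_nhds hne)
  have h3 : ContDiffAt ℝ 1 (fun v : Euc d => g (‖v‖⁻¹ • v)) v :=
    ContDiffAt.comp (g := g) v h2 h1
  exact (h3.mul (hn.rpow_const_of_ne (norm_ne_zero_iff.2 hv))).contDiffWithinAt

theorem exists_isKernel (hg : ContDiffOn ℝ 1 g {(0 : Euc d)}ᶜ) :
    ∃ M, IsKernel (homKernel d g) M := by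
  have hc := contDiffOn_homKernel hg
  have hsub : sphere (0 : Euc d) 1 ⊆ {(0 : Euc d)}ᶜ := fun v hv h => by
    rw [Set.mem_singleton_iff] at h
    simp [h] at hv
  have hdiff : ∀ v, v ≠ 0 → ContDiffAt ℝ 1 (homKernel d g) v := fun v hv =>
    hc.contDiffAt (isOpen_compl_singleton.mem_nhds hv)
  obtain ⟨M₁, h₁⟩ := (isCompact_sphere (0 : Euc d) 1).exists_bound_of_continuousOn
    (hc.continuousOn.mono hsub)
  obtain ⟨M₂, h₂⟩ := (isCompact_sphere (0 : Euc d) 1).exists_bound_of_continuousOn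
    ((hc.continuousOn_fderiv_of_isOpen isOpen_compl_singleton le_rfl).mono hsub)
  have hmem : ∀ v : Euc d, v ≠ 0 → ‖v‖⁻¹ • v ∈ sphere (0 : Euc d) 1 := fun v hv => by
    simp [norm_smul, hv]
  refine ⟨max 0 (max M₁ M₂), le_max_left _ _, ?_, ?_, ?_, ?_⟩
  · exact measurable_of_continuousOn_compl_singleton 0 hc.continuousOn
  · exact fun v hv => (hdiff v hv).differentiableAt one_ne_zero
  · intro v hv
    have h0 := norm_pos_iff.2 hv
    have h3 := homKernel_smul (g := g) h0 (‖v‖⁻¹ • v)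
    rw [smul_smul, mul_inv_cancel₀ h0.ne', one_smul] at h3
    rw [h3, abs_mul, abs_of_nonneg (by positivity), mul_comm]
    gcongr
    exact (h₁ _ (hmem v hv)).trans ((le_max_left _ _).trans (le_max_right _ _))
  · intro v hv
    have h0 := norm_pos_iff.2 hv
    rw [fderiv_homKernel_eq hv, norm_smul, Real.norm_of_nonneg (by positivity), mul_comm]
    gcongr
    exact (h₂ _ (hmem v hv)).trans ((le_max_right _ _).trans (le_max_right _ _))

end HomKernel

/-! ### Pairing the kernel with radial functions -/

section Radial

variable {d : ℕ} {η : ℝ → ℝ} {R : ℝ}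

theorem contDiff_radial (hη : ContDiff ℝ 1 η) : ContDiff ℝ 1 fun s : Euc d => η (‖s‖ ^ 2) :=
  hη.comp (contDiff_norm_sq ℝ)

theorem hasCompactSupport_radial (hR : 0 ≤ R) (hηR : ∀ t, R ^ 2 ≤ t → η t = 0) :
    HasCompactSupport fun s : Euc d => η (‖s‖ ^ 2) := by
  refine HasCompactSupport.intro (isCompact_closedBall 0 R) fun s hs => hηR _ ?_
  rw [mem_closedBall_zero_iff, not_le] at hs
  gcongr

theorem fderiv_radial (hη : ContDiff ℝ 1 η) (s : Euc d) (i : Fin d) :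
    fderiv ℝ (fun s : Euc d => η (‖s‖ ^ 2)) s (EuclideanSpace.single i 1) =
      deriv η (‖s‖ ^ 2) * (2 * s i) := by
  have h1 : HasDerivAt η (deriv η (‖s‖ ^ 2)) (‖s‖ ^ 2) :=
    (hη.differentiable one_ne_zero _).hasDerivAt
  have h2 := h1.comp_hasFDerivAt s (hasStrictFDerivAt_norm_sq s).hasFDerivAt
  have h3 : fderiv ℝ (fun s : Euc d => η (‖s‖ ^ 2)) s = _ := h2.fderiv
  rw [h3]
  simp [EuclideanSpace.inner_single_right]

theorem integral_deriv_sq (hη : ContDiff ℝ 1 η) (hR : 0 ≤ R)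
    (hηR : ∀ t, R ^ 2 ≤ t → η t = 0) :
    ∫ r in Set.Ioi (0 : ℝ), deriv η (r ^ 2) * (2 * r) = -η 0 := by
  have hd : ∀ r : ℝ, HasDerivAt (fun r : ℝ => η (r ^ 2)) (deriv η (r ^ 2) * (2 * r)) r := by
    intro r
    have h1 : HasDerivAt η (deriv η (r ^ 2)) (r ^ 2) :=
      (hη.differentiable one_ne_zero _).hasDerivAt
    simpa [Function.comp_def] using
      HasDerivAt.comp (h₂ := η) (h := fun r : ℝ => r ^ 2) r h1 (hasDerivAt_pow 2 r)
  have hcs : HasCompactSupport fun r : ℝ => η (r ^ 2) := by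
    refine HasCompactSupport.intro (isCompact_closedBall 0 R) fun s hs => hηR _ ?_
    rw [mem_closedBall_zero_iff, not_le, Real.norm_eq_abs] at hs
    rw [← sq_abs s]
    gcongr
  have hde : deriv (fun r : ℝ => η (r ^ 2)) = fun r => deriv η (r ^ 2) * (2 * r) :=
    funext fun r => (hd r).deriv
  have hcont : Continuous fun r : ℝ => deriv η (r ^ 2) * (2 * r) := by
    have := hη.continuous_deriv le_rfl
    fun_prop
  have hcs' := hcs.deriv
  rw [hde] at hcs'
  have hlim : Tendsto (fun r : ℝ => η (r ^ 2)) atTop (𝓝 0) := by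
    refine tendsto_const_nhds.congr' ?_
    filter_upwards [eventually_ge_atTop R] with r hr
    exact (hηR _ (by gcongr)).symm
  rw [integral_Ioi_of_hasDerivAt_of_tendsto (hd 0).continuousAt.continuousWithinAt
    (fun r _ => hd r) (hcont.integrable_of_hasCompactSupport hcs').integrableOn hlim]
  simp

/-- The pairing of the kernel with the gradient of a radial function sees only the value of that
function at the origin, because `K(s) |s|^{d-1}` depends only on the direction of `s`. -/
theorem integral_homKernel_mul_fderiv_radial (hd : 2 ≤ d) (g : Euc d → ℝ) (hη : ContDiff ℝ 1 η)
    (hR : 0 ≤ R) (hηR : ∀ t, R ^ 2 ≤ t → η t = 0) (i : Fin d) :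
    ∫ s, homKernel d g s *
        fderiv ℝ (fun s : Euc d => η (‖s‖ ^ 2)) s (EuclideanSpace.single i 1) =
      -η 0 * ∫ θ : sphere (0 : Euc d) 1, g θ * (θ : Euc d) i
        ∂((volume : Measure (Euc d)).toSphere) := by
  rw [← integral_deriv_sq hη hR hηR]
  have h1 := polar (fun r => r ^ ((1 : ℝ) - d) * (deriv η (r ^ 2) * (2 * r)))
    (fun v : Euc d => g v * v i) hd
  have h2 : ∫ r in Set.Ioi (0 : ℝ), r ^ (d - 1) * (r ^ ((1 : ℝ) - d) *
      (deriv η (r ^ 2) * (2 * r))) = ∫ r in Set.Ioi (0 : ℝ), deriv η (r ^ 2) * (2 * r) := by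
    refine setIntegral_congr_fun measurableSet_Ioi fun r hr => ?_
    have hr : 0 < r := hr
    rw [← mul_assoc, ← Real.rpow_natCast, ← Real.rpow_add hr, Nat.cast_sub (by omega)]
    simp
  rw [h2] at h1
  rw [← h1]
  congr 1
  ext s
  rw [fderiv_radial hη, homKernel]
  by_cases hs : s = 0
  · simp [hs]
  · have := norm_ne_zero_iff.2 hs
    simp only [PiLp.smul_apply, smul_eq_mul]
    field_simp

/-- The radial integral carries the weight `r^{d-1} r^{-d} = r⁻¹`. No integrability is assumed,
as in `polar`. -/
theorem integral_fderiv_homKernel_mul_radial (hd : 2 ≤ d) (g : Euc d → ℝ) (f : ℝ → ℝ)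
    (i : Fin d) :
    ∫ s, fderiv ℝ (homKernel d g) s (EuclideanSpace.single i 1) * f ‖s‖ =
      (∫ r in Set.Ioi (0 : ℝ), r⁻¹ * f r) *
        ∫ θ : sphere (0 : Euc d) 1, fderiv ℝ (homKernel d g) θ (EuclideanSpace.single i 1)
          ∂((volume : Measure (Euc d)).toSphere) := by
  have h1 := polar (fun r => r ^ (-(d : ℝ)) * f r)
    (fun v : Euc d => fderiv ℝ (homKernel d g) v (EuclideanSpace.single i 1)) hd
  have h2 : ∫ r in Set.Ioi (0 : ℝ), r ^ (d - 1) * (r ^ (-(d : ℝ)) * f r) =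
      ∫ r in Set.Ioi (0 : ℝ), r⁻¹ * f r := by
    refine setIntegral_congr_fun measurableSet_Ioi fun r hr => ?_
    have hr : 0 < r := hr
    rw [← mul_assoc, ← Real.rpow_natCast, ← Real.rpow_add hr, Nat.cast_sub (by omega),
      ← Real.rpow_neg_one]
    congr 2
    push_cast
    ring
  rw [h2] at h1
  rw [← h1]
  refine integral_congr_ae ?_
  filter_upwards [ae_ne_zero hd] with s hs
  rw [fderiv_homKernel_eq hs]
  simp only [smul_apply, smul_eq_mul]
  ring

/-- Profile, in the variable `t = |s|²`, of a smooth cut-off function: it equals `1` for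
`t ≤ R² / 2` and `0` for `t ≥ R²`. -/
noncomputable def cutoff (R t : ℝ) : ℝ := Real.smoothTransition (2 - 2 * t / R ^ 2)

theorem contDiff_cutoff (R : ℝ) : ContDiff ℝ 2 (cutoff R) := by
  have h : ContDiff ℝ 2 Real.smoothTransition :=
    Real.smoothTransition.contDiff (n := (2 : ℕ∞))
  exact h.comp (by fun_prop)

theorem cutoff_eq_zero (hR : 0 < R) {t : ℝ} (ht : R ^ 2 ≤ t) : cutoff R t = 0 := by
  refine Real.smoothTransition.zero_of_nonpos ?_
  rw [sub_nonpos, le_div_iff₀ (by positivity)]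
  linarith

theorem cutoff_eq_one (hR : 0 < R) {t : ℝ} (ht : t ≤ R ^ 2 / 2) : cutoff R t = 1 := by
  refine Real.smoothTransition.one_of_one_le ?_
  have : 2 * t / R ^ 2 ≤ 1 := by
    rw [div_le_iff₀ (by positivity)]
    linarith
  linarith

theorem cutoff_nonneg (R t : ℝ) : 0 ≤ cutoff R t := Real.smoothTransition.nonneg _

theorem cutoff_le_one (R t : ℝ) : cutoff R t ≤ 1 := Real.smoothTransition.le_one _

/-- The differentiated kernel has mean zero on the sphere; this is the cancellation that makes
the principal value exist. -/
theorem sphere_integral_fderiv_eq_zero (hd : 2 ≤ d) {g : Euc d → ℝ}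
    (hg : ContDiffOn ℝ 1 g {(0 : Euc d)}ᶜ) (i : Fin d) :
    ∫ θ : sphere (0 : Euc d) 1, fderiv ℝ (homKernel d g) θ (EuclideanSpace.single i 1)
      ∂((volume : Measure (Euc d)).toSphere) = 0 := by
  obtain ⟨M, hK⟩ := exists_isKernel hg
  set e : Euc d := EuclideanSpace.single i 1
  -- `ψ` is chosen so that `r⁻¹ ψ(r²)` is minus the derivative of the cut-off `r ↦ cutoff 1 (r²)`,
  -- hence has integral `1` over the half-line
  set ψ : ℝ → ℝ := fun t => -(2 * t * deriv (cutoff 1) t) with hψ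
  have hψc : ContDiff ℝ 1 ψ := by
    have h := (contDiff_succ_iff_deriv (n := 1)).1 (contDiff_cutoff 1)
    have := h.2.2
    fun_prop
  have hψ1 : ∀ t, (2 : ℝ) ^ 2 ≤ t → ψ t = 0 := by
    intro t ht
    have : cutoff 1 =ᶠ[𝓝 t] fun _ => 0 := by
      filter_upwards [lt_mem_nhds (show (1 : ℝ) < t by linarith)] with r hr
      exact cutoff_eq_zero one_pos (by linarith)
    simp [hψ, this.deriv_eq]
  have hψ0 : ∀ t, t < 1 / 2 → ψ t = 0 := by
    intro t ht
    have : cutoff 1 =ᶠ[𝓝 t] fun _ => 1 := by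
      filter_upwards [gt_mem_nhds ht] with r hr
      exact cutoff_eq_one one_pos (by linarith)
    simp [hψ, this.deriv_eq]
  set Ψ : Euc d → ℝ := fun s => ψ (‖s‖ ^ 2) with hΨ
  have hΨc : ContDiff ℝ 1 Ψ := contDiff_radial hψc
  have hΨs : HasCompactSupport Ψ := hasCompactSupport_radial zero_le_two hψ1
  have hΨR : ∀ s, 2 < ‖s‖ → Ψ s = 0 := fun s hs => hψ1 _ (by gcongr)
  have hΨ0 : ∀ s, ‖s‖ < 1 / 2 → Ψ s = 0 := fun s hs => hψ0 _ (by nlinarith [norm_nonneg s])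
  obtain ⟨B, hB⟩ := hΨs.exists_bound_of_continuous hΨc.continuous
  have hDc : Continuous fun s => fderiv ℝ Ψ s e :=
    (hΨc.continuous_fderiv one_ne_zero).clm_apply continuous_const
  have hDs : HasCompactSupport fun s => fderiv ℝ Ψ s e := hΨs.fderiv_apply ℝ e
  obtain ⟨B', hB'⟩ := hDs.exists_bound_of_continuous hDc
  have hDR : ∀ s, 2 < ‖s‖ → fderiv ℝ Ψ s e = 0 := by
    intro s hs
    have : Ψ =ᶠ[𝓝 s] fun _ => 0 := by
      filter_upwards [continuous_norm.tendsto s |>.eventually (lt_mem_nhds hs)] with r hr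
      exact hΨR r hr
    simp [this.fderiv_eq]
  have hB0 : 0 ≤ B := (norm_nonneg _).trans (hB 0)
  have hΨA : ∀ s, |Ψ s| ≤ (2 * B) * ‖s‖ ^ (1 : ℝ) := by
    intro s
    rw [Real.rpow_one]
    by_cases hs : ‖s‖ < 1 / 2
    · rw [hΨ0 s hs, abs_zero]
      positivity
    · exact (hB s).trans (by nlinarith)
  have i1 : Integrable fun s => homKernel d g s * Ψ s := by
    simpa using hK.integrable_mul_shift hd hΨc.continuous.aestronglyMeasurable hB hΨR 0
  have i2 : Integrable fun s => homKernel d g s * fderiv ℝ Ψ s e := by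
    simpa using hK.integrable_mul_shift hd hDc.aestronglyMeasurable hB' hDR 0
  have i3 : Integrable fun s => fderiv ℝ (homKernel d g) s e * Ψ s := by
    simpa [mul_comm] using (hK.integrable_smul_fderiv hd hΨc.continuous.aestronglyMeasurable
      one_pos hΨA hΨR).apply_continuousLinearMap e
  have hsupp : ∀ s ∈ tsupport Ψ, DifferentiableAt ℝ (homKernel d g) s := by
    intro s hs
    refine hK.differentiableAt s fun h0 => ?_
    refine notMem_tsupport_iff_eventuallyEq.2 ?_ (h0 ▸ hs)
    filter_upwards [ball_mem_nhds (0 : Euc d) one_half_pos] with s hs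
    exact hΨ0 s (by simpa using hs)
  have hibp := integral_mul_fderiv_eq_neg_fderiv_mul_of_integrable i3 i2 i1 hsupp
    (fun s _ => hΨc.differentiable one_ne_zero s)
  rw [integral_homKernel_mul_fderiv_radial hd g hψc zero_le_two hψ1 i,
    integral_fderiv_homKernel_mul_radial hd g (fun r => ψ (r ^ 2)) i] at hibp
  have hrad : ∫ r in Set.Ioi (0 : ℝ), r⁻¹ * ψ (r ^ 2) = 1 := by
    have h1 := integral_deriv_sq ((contDiff_cutoff 1).of_le one_le_two) zero_le_one
      (fun t ht => cutoff_eq_zero one_pos ht)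
    rw [cutoff_eq_one one_pos (by norm_num)] at h1
    rw [← neg_inj, ← h1, ← integral_neg]
    refine setIntegral_congr_fun measurableSet_Ioi fun r hr => ?_
    have hr : 0 < r := hr
    simp only [hψ]
    field_simp
  rw [hrad, hψ0 0 (by norm_num)] at hibp
  linarith

end Radial

end WeaklySingular

/-! ### Assembling the derivative -/

open WeaklySingular

/-- **Differentiation of a weakly singular integral.**
For `g` continuously differentiable away from the origin (in particular on the sphere) and `u`
bounded and Hölder continuous, the potential `w(z) = ∫_D g((z−y)/|z−y|)|z−y|^{1−d} u(y) dy`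
is differentiable at `x ∈ D` and its `i`-th partial derivative equals the principal value of
the integral of the differentiated kernel (which is positively homogeneous of degree `−d`)
against `u`, plus the correction term `u(x) ∫_{S^{d−1}} g(θ) θ_i dσ(θ)`. -/
theorem differentiation_weakly_singular_integral
    (d : ℕ) (hd : 2 ≤ d)
    (D : Set (EuclideanSpace ℝ (Fin d))) (hDopen : IsOpen D) (hDbdd : Bornology.IsBounded D)
    (x : EuclideanSpace ℝ (Fin d)) (hx : x ∈ D)
    (g : EuclideanSpace ℝ (Fin d) → ℝ)
    (hg : ContDiffOn ℝ 1 g ({(0 : EuclideanSpace ℝ (Fin d))}ᶜ))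
    (u : EuclideanSpace ℝ (Fin d) → ℝ)
    (hu_bdd : ∃ C : ℝ, ∀ y ∈ D, |u y| ≤ C)
    (α : ℝ≥0) (hα0 : 0 < α) (hα1 : α ≤ 1)
    (C : ℝ≥0) (hu_holder : HolderOnWith C α u D)
    -- the differentiated kernel, as a function of `v = x − y`
    (k : Fin d → EuclideanSpace ℝ (Fin d) → ℝ)
    (hk : k = fun i v =>
      fderiv ℝ (fun z : EuclideanSpace ℝ (Fin d) => g (‖z‖⁻¹ • z) * ‖z‖ ^ ((1 : ℝ) - d)) v
        (EuclideanSpace.single i 1))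
    -- the weakly singular potential
    (w : EuclideanSpace ℝ (Fin d) → ℝ)
    (hw : w = fun z => ∫ y in D, g (‖z - y‖⁻¹ • (z - y)) * ‖z - y‖ ^ ((1 : ℝ) - d) * u y) :
    -- the differentiated kernel is positively homogeneous of degree −d
    (∀ (i : Fin d) (v : EuclideanSpace ℝ (Fin d)), v ≠ 0 → ∀ t : ℝ, 0 < t →
        k i (t • v) = t ^ (-(d : ℝ)) * k i v) ∧
    -- differentiability and the differentiation formula
    ∃ w' : EuclideanSpace ℝ (Fin d) →L[ℝ] ℝ,
      HasFDerivAt w w' x ∧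
      ∀ i : Fin d, ∃ L : ℝ,
        Tendsto
          (fun ε : ℝ => ∫ y in D \ Metric.closedBall x ε, k i (x - y) * u y)
          (𝓝[>] (0 : ℝ)) (𝓝 L) ∧
        w' (EuclideanSpace.single i 1)
          = L + u x * ∫ θ : Metric.sphere (0 : EuclideanSpace ℝ (Fin d)) 1,
              g θ * (θ : EuclideanSpace ℝ (Fin d)) i
                ∂((volume : Measure (EuclideanSpace ℝ (Fin d))).toSphere) := by
  have hkK : ∀ i v, k i v = fderiv ℝ (homKernel d g) v (EuclideanSpace.single i 1) := by
    intro i v; rw [hk]; rfl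
  have hwK : ∀ z, w z = ∫ y in D, homKernel d g (z - y) * u y := by
    intro z; rw [hw]; rfl
  clear hk hw
  refine ⟨fun i v _ t ht => ?_, ?_⟩
  · rw [hkK, hkK, fderiv_homKernel_smul ht]; rfl
  obtain ⟨M, hK⟩ := exists_isKernel hg
  obtain ⟨B, hB⟩ := hu_bdd
  have hα : (0 : ℝ) < α := by exact_mod_cast hα0
  obtain ⟨R, hR, hRD⟩ := Metric.nhds_basis_closedBall.mem_iff.1 (hDopen.mem_nhds hx)
  obtain ⟨R', hR'⟩ := hDbdd.subset_closedBall x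
  have hDm := hDopen.measurableSet
  have hB0 : 0 ≤ B := (abs_nonneg _).trans (hB x hx)
  -- `u(x) • Φ(y - x)` is the part of `u` that carries the value `u(x)`; it is radial about `x`,
  -- smooth, and supported in `D`
  set Φ : Euc d → ℝ := fun s => cutoff R (‖s‖ ^ 2) with hΦ
  have hη : ContDiff ℝ 1 (cutoff R) := (contDiff_cutoff R).of_le one_le_two
  have hηR : ∀ t, R ^ 2 ≤ t → cutoff R t = 0 := fun t ht => cutoff_eq_zero hR ht
  have hΦc : ContDiff ℝ 1 Φ := contDiff_radial hη
  have hΦs : HasCompactSupport Φ := hasCompactSupport_radial hR.le hηR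
  have hΦR : ∀ s, R < ‖s‖ → Φ s = 0 := fun s hs => hηR _ (by gcongr)
  have hΦ1 : ∀ s, |Φ s| ≤ 1 := fun s => by
    rw [abs_of_nonneg (cutoff_nonneg _ _)]; exact cutoff_le_one _ _
  have hΦneg : ∀ s, Φ (-s) = Φ s := fun s => by simp [hΦ]
  -- `U` and `V` are written in the variable `s = x - y`; the remainder `V` vanishes to order `α`
  -- at `s = 0`
  set U : Euc d → ℝ := fun s => D.indicator u (x - s) with hU
  set V : Euc d → ℝ := fun s => U s - u x * Φ s with hVdef
  have hUm : Measurable U := by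
    have h1 : Measurable (D.indicator u) := by
      classical
      have := (hu_holder.continuousOn hα0).measurable_piecewise (g := 0)
        continuous_zero.continuousOn hDm
      rwa [Set.piecewise_eq_indicator] at this
    exact h1.comp (measurable_const.sub measurable_id)
  have hVm : AEStronglyMeasurable V :=
    (hUm.sub (hΦc.continuous.measurable.const_mul _)).aestronglyMeasurable
  have hUR : ∀ s, max R R' < ‖s‖ → U s = 0 := by
    intro s hs
    refine Set.indicator_of_notMem (fun h => ?_) _
    have := hR' h
    rw [mem_closedBall, dist_eq_norm, sub_sub_cancel_left, norm_neg] at this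
    exact absurd ((le_max_right R R').trans_lt hs) (not_lt.2 this)
  have hVR : ∀ s, max R R' < ‖s‖ → V s = 0 := by
    intro s hs
    simp [hVdef, hUR s hs, hΦR s ((le_max_left _ _).trans_lt hs)]
  have hUV : ∀ s, U s = V s + u x * Φ s := fun s => by simp [hVdef]
  have hVA : ∀ s, |V s| ≤ (C + B * ((R / 2) ^ (α : ℝ))⁻¹) * ‖s‖ ^ (α : ℝ) := by
    intro s
    have hRα : 0 < (R / 2) ^ (α : ℝ) := by positivity
    by_cases hs : x - s ∈ D
    · have h1 : |u (x - s) - u x| ≤ C * ‖s‖ ^ (α : ℝ) := by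
        have := hu_holder.dist_le hs hx
        rwa [Real.dist_eq, dist_eq_norm, sub_sub_cancel_left, norm_neg] at this
      have h2 : |1 - Φ s| ≤ ((R / 2) ^ (α : ℝ))⁻¹ * ‖s‖ ^ (α : ℝ) := by
        by_cases hsR : ‖s‖ ^ 2 ≤ R ^ 2 / 2
        · simp only [hΦ, cutoff_eq_one hR hsR, sub_self, abs_zero]
          positivity
        · have h3 : R / 2 ≤ ‖s‖ := by nlinarith [norm_nonneg s]
          have h4 : |1 - Φ s| ≤ 1 := by
            have h5 := cutoff_nonneg R (‖s‖ ^ 2)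
            have h6 := cutoff_le_one R (‖s‖ ^ 2)
            rw [abs_le]
            constructor <;> simp only [hΦ] <;> linarith
          refine h4.trans ?_
          rw [inv_mul_eq_div, le_div_iff₀ hRα, one_mul]
          gcongr
      have h7 : V s = (u (x - s) - u x) + u x * (1 - Φ s) := by
        simp only [hVdef, hU, Set.indicator_of_mem hs]; ring
      calc |V s| ≤ |u (x - s) - u x| + |u x| * |1 - Φ s| := by
            rw [h7, ← abs_mul]; exact abs_add_le _ _
        _ ≤ C * ‖s‖ ^ (α : ℝ) + B * (((R / 2) ^ (α : ℝ))⁻¹ * ‖s‖ ^ (α : ℝ)) := by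
            gcongr
            exact hB x hx
        _ = _ := by ring
    · have h1 : Φ s = 0 := by
        refine hΦR s (not_le.1 fun h => hs (hRD ?_))
        simpa [dist_eq_norm] using h
      simp only [hVdef, hU, Set.indicator_of_notMem hs, h1, mul_zero, sub_zero, abs_zero]
      positivity
  have hVB : ∀ s, |V s| ≤ B + B := by
    intro s
    have h1 : |U s| ≤ B := by
      by_cases hs : x - s ∈ D
      · simpa only [hU, Set.indicator_of_mem hs] using hB _ hs
      · simpa only [hU, Set.indicator_of_notMem hs, abs_zero] using hB0
    have h2 : |u x * Φ s| ≤ B * 1 := by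
      rw [abs_mul]
      exact mul_le_mul (hB x hx) (hΦ1 s) (abs_nonneg _) hB0
    exact (abs_sub _ _).trans (by linarith)
  have hPd := hK.hasFDerivAt_potential hd hVm hα (by exact_mod_cast hα1) hVA hVR
  have hKΦ : ∀ h, Integrable fun s => homKernel d g (s + h) * Φ s := fun h =>
    hK.integrable_mul_shift hd hΦc.continuous.aestronglyMeasurable hΦ1 hΦR h
  have hKloc : LocallyIntegrable (homKernel d g) := by
    refine locallyIntegrable_iff.2 fun S hS => ?_
    obtain ⟨r, hr⟩ := hS.isBounded.subset_closedBall 0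
    have h1 := hK.integrable_mul_shift hd (R := r)
      (V := (closedBall (0 : Euc d) r).indicator fun _ => 1) (B := 1)
      ((measurable_const.indicator measurableSet_closedBall).aestronglyMeasurable)
      (fun s => by by_cases hs : ‖s‖ ≤ r <;> simp [hs]) (fun s hs => by simp [hs]) 0
    have h2 : Integrable ((closedBall (0 : Euc d) r).indicator (homKernel d g)) := by
      refine h1.congr (Eventually.of_forall fun s => ?_)
      by_cases hs : ‖s‖ ≤ r <;> simp [hs]
    exact ((integrable_indicator_iff measurableSet_closedBall).1 h2).mono_set hr
  -- substituting `y = x - s` turns `w` into the potential of `V` plus a convolution with `Φ`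
  have hwsplit : ∀ z, w z = (∫ s, homKernel d g (s + (z - x)) * V s) +
      u x * convolution (homKernel d g) Φ (ContinuousLinearMap.mul ℝ ℝ) volume (z - x) := by
    intro z
    have h1 : convolution (homKernel d g) Φ (ContinuousLinearMap.mul ℝ ℝ) volume (z - x) =
        ∫ s, homKernel d g (s + (z - x)) * Φ s := by
      rw [convolution, ← integral_add_right_eq_self _ (z - x)]
      refine integral_congr_ae (Eventually.of_forall fun s => ?_)
      simp [hΦneg]
    have h2 : w z = ∫ s, homKernel d g (s + (z - x)) * U s := by
      rw [hwK, ← integral_indicator hDm, ← integral_sub_left_eq_self _ _ x]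
      refine integral_congr_ae (Eventually.of_forall fun s => ?_)
      have h3 : z - (x - s) = s + (z - x) := by abel
      by_cases hs : x - s ∈ D <;> simp [hU, hs, h3]
    rw [h1, h2, ← integral_const_mul, ← integral_add
      (hK.integrable_mul_shift hd hVm hVB hVR _) ((hKΦ _).const_mul _)]
    congr 1
    ext s
    rw [hUV]
    ring
  have hQd := hΦs.hasFDerivAt_convolution_right (ContinuousLinearMap.mul ℝ ℝ) hKloc hΦc 0
  have i2 := hK.integrable_smul_fderiv hd hVm hα hVA hVR
  refine ⟨(∫ s, V s • fderiv ℝ (homKernel d g) s) + u x • convolution (homKernel d g)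
      (fderiv ℝ Φ) ((ContinuousLinearMap.mul ℝ ℝ).precompR (Euc d)) volume 0, ?_,
    fun i => ⟨∫ s, fderiv ℝ (homKernel d g) s (EuclideanSpace.single i 1) * V s, ?_, ?_⟩⟩
  · have h1 : HasFDerivAt (fun z : Euc d => z - x) (ContinuousLinearMap.id ℝ (Euc d)) x :=
      (hasFDerivAt_id x).sub_const x
    have h2 : HasFDerivAt (fun h => ∫ s, homKernel d g (s + h) * V s)
        (∫ s, V s • fderiv ℝ (homKernel d g) s) (x - x) := by rwa [sub_self]
    have h3 : HasFDerivAt (convolution (homKernel d g) Φ (ContinuousLinearMap.mul ℝ ℝ) volume)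
        (convolution (homKernel d g) (fderiv ℝ Φ)
          ((ContinuousLinearMap.mul ℝ ℝ).precompR (Euc d)) volume 0) (x - x) := by rwa [sub_self]
    have h4 := (h2.comp (f := fun z => z - x) x h1).add
      ((h3.comp (f := fun z => z - x) x h1).const_mul (u x))
    rw [funext hwsplit]
    simp only [ContinuousLinearMap.comp_id] at h4
    exact h4
  · set e : Euc d := EuclideanSpace.single i 1
    have i3 : Integrable fun s => fderiv ℝ (homKernel d g) s e * V s := by
      simpa [mul_comm] using i2.apply_continuousLinearMap e
    have hSm : ∀ ε : ℝ, MeasurableSet {s : Euc d | ε < ‖s‖} := fun ε =>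
      (isOpen_lt continuous_const continuous_norm).measurableSet
    -- the cut-off constant has zero principal value by the mean-zero property of the kernel
    have hε : ∀ ε : ℝ, 0 < ε → ∫ y in D \ closedBall x ε, k i (x - y) * u y =
        ∫ s, {s : Euc d | ε < ‖s‖}.indicator
          (fun s => fderiv ℝ (homKernel d g) s e * V s) s := by
      intro ε hε
      have h1 : ∫ y in D \ closedBall x ε, k i (x - y) * u y =
          ∫ s, {s : Euc d | ε < ‖s‖}.indicator
            (fun s => fderiv ℝ (homKernel d g) s e * U s) s := by
        rw [← integral_indicator (hDm.diff measurableSet_closedBall),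
          ← integral_sub_left_eq_self _ _ x]
        refine integral_congr_ae (Eventually.of_forall fun s => ?_)
        by_cases hs : x - s ∈ D <;> by_cases hs2 : ε < ‖s‖ <;>
          simp [hU, hs, hs2, hkK, Set.indicator, e]
      have h2 : Integrable fun s => fderiv ℝ (homKernel d g) s e *
          (Set.Ioi ε).indicator (fun r => cutoff R (r ^ 2)) ‖s‖ := by
        have hm : AEStronglyMeasurable
            fun s : Euc d => {s : Euc d | ε < ‖s‖}.indicator Φ s :=
          (hΦc.continuous.measurable.indicator (hSm ε)).aestronglyMeasurable
        have h3 := (hK.integrable_smul_fderiv hd hm (A := ε⁻¹) (R := R) one_pos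
          (fun s => ?_) (fun s hs => ?_)).apply_continuousLinearMap e
        · refine h3.congr (Eventually.of_forall fun s => ?_)
          by_cases hs : ε < ‖s‖ <;> simp [hs, hΦ, mul_comm]
        · rw [Real.rpow_one]
          by_cases hs : ε < ‖s‖
          · rw [Set.indicator_of_mem (by exact hs), inv_mul_eq_div]
            exact (hΦ1 s).trans ((one_le_div hε).2 hs.le)
          · rw [Set.indicator_of_notMem (by exact hs), abs_zero]
            positivity
        · simp [Set.indicator, hΦR s hs]
      have h4 := integral_fderiv_homKernel_mul_radial hd g
        ((Set.Ioi ε).indicator (fun r => cutoff R (r ^ 2))) i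
      rw [sphere_integral_fderiv_eq_zero hd hg, mul_zero] at h4
      rw [h1, ← add_zero (∫ s, {s : Euc d | ε < ‖s‖}.indicator
          (fun s => fderiv ℝ (homKernel d g) s e * V s) s), ← mul_zero (u x), ← h4,
        ← integral_const_mul, ← integral_add (i3.indicator (hSm ε)) (h2.const_mul _)]
      congr 1
      ext s
      by_cases hs : ε < ‖s‖
      · simp only [Set.indicator, Set.mem_ofPred_eq, Set.mem_Ioi, hs, if_true, hUV, hΦ]
        ring
      · simp [hs]
    have hlim : Tendsto (fun ε : ℝ => ∫ s, {s : Euc d | ε < ‖s‖}.indicator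
          (fun s => fderiv ℝ (homKernel d g) s e * V s) s) (𝓝[>] 0)
        (𝓝 (∫ s, fderiv ℝ (homKernel d g) s e * V s)) := by
      refine tendsto_integral_filter_of_dominated_convergence
        (fun s => ‖fderiv ℝ (homKernel d g) s e * V s‖)
        (Eventually.of_forall fun ε => (i3.indicator (hSm ε)).aestronglyMeasurable)
        (Eventually.of_forall fun ε => Eventually.of_forall fun s =>
          norm_indicator_le_norm_self _ _) i3.norm ?_
      filter_upwards [ae_ne_zero hd] with s hs
      refine tendsto_const_nhds.congr' ?_
      filter_upwards [nhdsWithin_le_nhds (eventually_lt_nhds (norm_pos_iff.2 hs))] with ε hε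
      exact (Set.indicator_of_mem (s := {s : Euc d | ε < ‖s‖}) hε
        fun s => fderiv ℝ (homKernel d g) s e * V s).symm
    refine hlim.congr' ?_
    filter_upwards [self_mem_nhdsWithin] with ε hε'
    exact (hε ε hε').symm
  · have h1 := integral_homKernel_mul_fderiv_radial hd g hη hR.le hηR i
    rw [cutoff_eq_one hR (by positivity)] at h1
    rw [add_apply, smul_apply, ContinuousLinearMap.integral_apply i2,
      convolution_precompR_apply _ hKloc (hΦs.fderiv ℝ) (hΦc.continuous_fderiv one_ne_zero)]
    congr 1
    · simp [mul_comm]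
    · rw [smul_eq_mul]
      congr 1
      rw [neg_one_mul] at h1
      rw [← neg_inj, ← h1, convolution, ← integral_neg]
      congr 1
      ext s
      -- the derivative of the even function `Φ` is odd
      simp only [hΦ, fderiv_radial hη, zero_sub, norm_neg, PiLp.neg_apply,
        ContinuousLinearMap.mul_apply']
      ring
end

section
/- Let D ⊂ ℝ³ be a bounded open set, x ∈ D, and u : D → ℝ bounded and Hölder continuous with some exponent α ∈ (0,1]. Let ρ : S² → (0,∞) be Lipschitz continuous and for ε > 0 set V(x,ε) = {x} ∪ { y : 0 < |x−y| ≤ ε ρ((x−y)/|x−y|) } (a shrinking exclusion volume around x, radially convex with respect to x). Let N(z) = ∫_D u(y)/(4π|z−y|) dy be the Newtonian potential of u. Then N is twice differentiable at x and, for all i, j ∈ {1,2,3}: (∂²N/∂x_i∂x_j)(x) = lim_{ε→0⁺} ∫_{D∖V(x,ε)} ∂²/∂x_i∂x_j [ 1/(4π|x−y|) ] u(y) dy − (L_ρ)_{ij} u(x), where (L_ρ)_{ij} = δ_{ij}/3 + (1/(4π)) ∫_{S²} (δ_{ij} − 3θ_iθ_j) log ρ(θ) dσ(θ). -/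
/-!
Extend `u` by zero outside `D` to a density `w`, and write `w = v + u(x) b`, where `b` is a smooth
radial bump centred at `x` and equal to `1` on the unit ball around `x`. Then
`|v(y)| ≤ A |x - y|^α`, since `u` is Hölder continuous near `x`.

*Differentiability.* `hasFDerivAt_singular` allows differentiation under the integral sign at a
point where the density vanishes to an order `β` that makes the differentiated kernel integrable.
With `β = 0` it shows that `N` is differentiable everywhere, with derivative
`∫ w(y) ∇k(z - y) dy`, `k` being the Newtonian kernel. With `β = α` it shows that the part of
this derivative coming from `v` is differentiable at `x`, with derivative the absolutely convergent
integral `∫ v(y) ∇²k(x - y) dy`. For the part coming from `b`, the second derivative can be moved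
onto the bump; in polar coordinates its value at `x` is `-δ_{ij} / 3`
(`exists_hasFDerivAt_bump_potential`).

*The limit.* The truncated integral splits in the same way. Its `v`-part tends to
`∫ v(y) ∂_i∂_j k(x - y) dy` by dominated convergence. Its `b`-part is computed in polar coordinates:
the radial integral from `ε ρ(θ)` is `c - log ε - log ρ(θ)` once `ε ρ ≤ 1`, and the angular factor
`δ_{ij} - 3 θ_i θ_j` has mean zero, so that only
`(4π)⁻¹ ∫ (δ_{ij} - 3 θ_i θ_j) log ρ(θ) dσ(θ)` remains, for every small `ε`
(`integral_bump_mul_indicator_outside`). Comparison of the two computations gives the formula.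
-/

open MeasureTheory Metric Filter Topology NNReal

/-- Euclidean three-space. -/
local notation "E3" => EuclideanSpace ℝ (Fin 3)

/-! ### Differentiation of integrals with singular kernels -/

lemma integrableOn_norm_rpow_ball {s : ℝ} (hs : -3 < s) (r : ℝ) :
    IntegrableOn (fun a : E3 => ‖a‖ ^ s) (ball 0 r) := by
  rw [integrableOn_fun_norm_addHaar volume (f := fun t : ℝ => t ^ s)]
  simp only [finrank_euclideanSpace, Fintype.card_fin, smul_eq_mul]
  rcases le_or_gt r 0 with hr | hr
  · simp [Set.Ioo_eq_empty_of_le hr]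
  have h := (intervalIntegral.integrableOn_Ioo_rpow_iff (s := s + 2) hr).2 (by linarith)
  refine h.congr_fun (fun t ht => ?_) measurableSet_Ioo
  have ht0 : (0 : ℝ) < t := ht.1
  simp only [Nat.add_one_sub_one]
  rw [Real.rpow_add ht0, mul_comm]
  norm_cast

/-- A density that is bounded, with bounded support, is integrable against a kernel whose
singularity at the origin is weaker than `‖a‖ ^ (-3)`. -/
lemma integrable_bdd_smul_of_norm_le {F : Type*} [NormedAddCommGroup F] [NormedSpace ℝ F]
    {k : E3 → F} (hkm : StronglyMeasurable k) {m c : ℝ} (hm : m < 3)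
    (hk : ∀ a ≠ 0, ‖k a‖ ≤ c * ‖a‖ ^ (-m)) {w : E3 → ℝ} (hw : Measurable w) {M R : ℝ}
    (hM : ∀ a, |w a| ≤ M) (hR : ∀ a, R ≤ ‖a‖ → w a = 0) :
    Integrable (fun a => w a • k a) := by
  have h1 := (((integrableOn_norm_rpow_ball (s := -m) (by linarith) R).const_mul c).const_mul M)
  rw [← IntegrableOn, ← integrable_indicator_iff measurableSet_ball] at h1
  refine h1.mono' (hw.stronglyMeasurable.smul hkm).aestronglyMeasurable ?_
  have h0 : ∀ᵐ a : E3, a ≠ 0 := by simp [ae_iff]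
  filter_upwards [h0] with a ha
  by_cases haR : a ∈ ball (0 : E3) R
  · rw [Set.indicator_of_mem haR, norm_smul]
    exact mul_le_mul (hM a) (hk a ha) (norm_nonneg _) ((abs_nonneg _).trans (hM a))
  · rw [Set.indicator_of_notMem haR, hR a (by simpa using haR)]
    simp

lemma integrable_bdd_smul_shift {F : Type*} [NormedAddCommGroup F] [NormedSpace ℝ F]
    {k : E3 → F} (hkm : StronglyMeasurable k) {m c : ℝ} (hm : m < 3)
    (hk : ∀ a ≠ 0, ‖k a‖ ≤ c * ‖a‖ ^ (-m)) {w : E3 → ℝ} (hw : Measurable w) {M R : ℝ}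
    (hM : ∀ a, |w a| ≤ M) (hR : ∀ a, R ≤ ‖a‖ → w a = 0) (h : E3) :
    Integrable (fun a => w a • k (a + h)) := by
  have := (integrable_bdd_smul_of_norm_le hkm hm hk (w := fun b => w (b - h)) (by fun_prop)
    (M := M) (R := R + ‖h‖) (fun a => hM _) (fun a ha => hR _ ?_)).comp_add_right h
  · simpa using this
  · have := norm_sub_norm_le a h
    linarith

/-- Far from the singularity, where `2 * ‖h‖ ≤ ‖a‖`, the first-order Taylor remainder of `k` is
controlled by the size of `k'` on the segment from `a` to `a + h`. -/
lemma singular_far_bound {F : Type*} [NormedAddCommGroup F] [NormedSpace ℝ F]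
    {k : E3 → F} {k' : E3 → E3 →L[ℝ] F} (hk : ∀ a ≠ 0, HasFDerivAt k (k' a) a)
    {m c : ℝ} (hm : 0 ≤ m) (hc : 0 ≤ c)
    (hk' : ∀ a ≠ 0, ‖k' a‖ ≤ c * ‖a‖ ^ (-(m + 1))) {a h : E3} (ha : a ≠ 0)
    (hah : 2 * ‖h‖ ≤ ‖a‖) :
    ‖k (a + h) - k a - k' a h‖ ≤ c * (2 ^ (m + 1) + 1) * ‖a‖ ^ (-(m + 1)) * ‖h‖ := by
  have hna : 0 < ‖a‖ := norm_pos_iff.2 ha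
  have hseg : ∀ z ∈ segment ℝ a (a + h), ‖a‖ / 2 ≤ ‖z‖ := by
    intro z hz
    obtain ⟨t, ht, rfl⟩ := (segment_eq_image' ℝ a (a + h)) ▸ hz
    have h1 : ‖t • (a + h - a)‖ ≤ ‖h‖ := by
      rw [add_sub_cancel_left, norm_smul, Real.norm_of_nonneg ht.1]
      exact mul_le_of_le_one_left (norm_nonneg _) ht.2
    have h2 : ‖a‖ ≤ ‖a + t • (a + h - a)‖ + ‖t • (a + h - a)‖ := norm_le_add_norm_add _ _
    linarith
  have hb : ∀ z ∈ segment ℝ a (a + h), ‖k' z‖ ≤ c * (2 ^ (m + 1)) * ‖a‖ ^ (-(m + 1)) := by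
    intro z hz
    have hz2 := hseg z hz
    have hz0 : z ≠ 0 := by
      rintro rfl
      rw [norm_zero] at hz2
      linarith
    refine (hk' z hz0).trans ?_
    rw [mul_assoc]
    gcongr
    calc ‖z‖ ^ (-(m + 1)) ≤ (‖a‖ / 2) ^ (-(m + 1)) :=
          Real.rpow_le_rpow_of_nonpos (by positivity) hz2 (by linarith)
      _ = _ := by
          rw [Real.div_rpow (by positivity) (by norm_num), Real.rpow_neg (by norm_num : (0:ℝ) ≤ 2)]
          field_simp
  have h1 : ‖k (a + h) - k a‖ ≤ c * (2 ^ (m + 1)) * ‖a‖ ^ (-(m + 1)) * ‖h‖ := by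
    have := (convex_segment a (a + h)).norm_image_sub_le_of_norm_hasFDerivWithin_le (f := k)
      (f' := k') (C := c * (2 ^ (m + 1)) * ‖a‖ ^ (-(m + 1)))
      (fun z hz => (hk z (by
        rintro rfl
        have := hseg 0 hz
        rw [norm_zero] at this
        linarith)).hasFDerivWithinAt) hb (left_mem_segment ℝ a (a + h))
      (right_mem_segment ℝ a (a + h))
    simpa using this
  have h2 : ‖k' a h‖ ≤ c * ‖a‖ ^ (-(m + 1)) * ‖h‖ :=
    (k' a).le_of_opNorm_le (hk' a ha) h
  calc _ ≤ ‖k (a + h) - k a‖ + ‖k' a h‖ := norm_sub_le _ _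
    _ ≤ _ := by linarith

/-- Near the singularity, where `‖a‖ < 2 * ‖h‖`, the three terms of the difference quotient are
estimated separately. The weight `‖a‖ ^ β` of the density pays for the factor `‖h‖⁻¹`, leaving
powers that are integrable around `0` and around `-h`. -/
lemma singular_near_bound {F : Type*} [NormedAddCommGroup F] [NormedSpace ℝ F]
    {k : E3 → F} {k' : E3 → E3 →L[ℝ] F}
    {m c β A : ℝ} (hc : 0 ≤ c) (hβ0 : 0 ≤ β) (hβ1 : β ≤ 1)
    (hkm : ∀ a ≠ 0, ‖k a‖ ≤ c * ‖a‖ ^ (-m))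
    (hk' : ∀ a ≠ 0, ‖k' a‖ ≤ c * ‖a‖ ^ (-(m + 1))) {a h : E3} {t : ℝ}
    (ht : |t| ≤ A * ‖a‖ ^ β) (hA : 0 ≤ A) (ha : a ≠ 0) (hb : a + h ≠ 0)
    (hah : ‖a‖ < 2 * ‖h‖) :
    ‖h‖⁻¹ * ‖t • k (a + h) - t • k a - t • k' a h‖ ≤
      A * c * 3 * ‖a‖ ^ (β - 1 - m) + A * c * 6 * ‖a + h‖ ^ (β - 1 - m) := by
  have hna : 0 < ‖a‖ := norm_pos_iff.2 ha
  have hnb : 0 < ‖a + h‖ := norm_pos_iff.2 hb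
  have hnh : 0 < ‖h‖ := by linarith
  have hb3 : ‖a + h‖ / 3 ≤ ‖h‖ := by linarith [norm_add_le a h]
  -- the two powers of `‖h‖` are traded for powers of the distance to the singularity
  have e1 : ‖a‖ ^ β * ‖h‖⁻¹ ≤ 6 * ‖a + h‖ ^ (β - 1) := by
    calc ‖a‖ ^ β * ‖h‖⁻¹ ≤ (2 * ‖h‖) ^ β * ‖h‖⁻¹ := by gcongr
      _ = 2 ^ β * ‖h‖ ^ (β - 1) := by
        rw [Real.mul_rpow (by norm_num) hnh.le, Real.rpow_sub hnh, Real.rpow_one]; ring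
      _ ≤ 2 * (3 * ‖a + h‖ ^ (β - 1)) := by
        gcongr
        · calc (2:ℝ) ^ β ≤ 2 ^ (1:ℝ) := Real.rpow_le_rpow_of_exponent_le (by norm_num) hβ1
            _ = 2 := Real.rpow_one _
        · calc ‖h‖ ^ (β - 1) ≤ (‖a + h‖ / 3) ^ (β - 1) :=
                Real.rpow_le_rpow_of_nonpos (by positivity) hb3 (by linarith)
            _ = 3 ^ (1 - β) * ‖a + h‖ ^ (β - 1) := by
                rw [Real.div_rpow hnb.le (by norm_num), show β - 1 = -(1 - β) by ring,
                  Real.rpow_neg (by norm_num : (0:ℝ) ≤ 3)]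
                field_simp
            _ ≤ 3 * ‖a + h‖ ^ (β - 1) := by
                gcongr
                calc (3:ℝ) ^ (1 - β) ≤ 3 ^ (1:ℝ) :=
                      Real.rpow_le_rpow_of_exponent_le (by norm_num) (by linarith)
                  _ = 3 := Real.rpow_one _
      _ = _ := by ring
  have e2 : ‖h‖⁻¹ ≤ 2 * ‖a‖⁻¹ := by
    rw [← div_eq_mul_inv, inv_eq_one_div, div_le_div_iff₀ hnh hna]; linarith
  have t1 : ‖h‖⁻¹ * ‖t • k (a + h)‖ ≤ A * c * 6 * ‖a + h‖ ^ (β - 1 - m) := by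
    rw [norm_smul, Real.norm_eq_abs]
    calc ‖h‖⁻¹ * (|t| * ‖k (a + h)‖)
        ≤ ‖h‖⁻¹ * ((A * ‖a‖ ^ β) * (c * ‖a + h‖ ^ (-m))) := by
          gcongr
          exact hkm _ hb
      _ = A * c * (‖a‖ ^ β * ‖h‖⁻¹) * ‖a + h‖ ^ (-m) := by ring
      _ ≤ A * c * (6 * ‖a + h‖ ^ (β - 1)) * ‖a + h‖ ^ (-m) := by gcongr
      _ = _ := by rw [sub_eq_add_neg (β - 1) m, Real.rpow_add hnb]; ring
  have t2 : ‖h‖⁻¹ * ‖t • k a‖ ≤ A * c * 2 * ‖a‖ ^ (β - 1 - m) := by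
    rw [norm_smul, Real.norm_eq_abs]
    calc ‖h‖⁻¹ * (|t| * ‖k a‖)
        ≤ (2 * ‖a‖⁻¹) * ((A * ‖a‖ ^ β) * (c * ‖a‖ ^ (-m))) := by
          gcongr
          exact hkm _ ha
      _ = _ := by
          rw [sub_eq_add_neg (β - 1) m, Real.rpow_add hna, Real.rpow_sub hna, Real.rpow_one]; ring
  have t3 : ‖h‖⁻¹ * ‖t • k' a h‖ ≤ A * c * 1 * ‖a‖ ^ (β - 1 - m) := by
    rw [norm_smul, Real.norm_eq_abs]
    calc ‖h‖⁻¹ * (|t| * ‖k' a h‖)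
        ≤ ‖h‖⁻¹ * ((A * ‖a‖ ^ β) * (c * ‖a‖ ^ (-(m + 1)) * ‖h‖)) := by
          gcongr
          exact (k' a).le_of_opNorm_le (hk' a ha) h
      _ = A * c * (‖a‖ ^ β * ‖a‖ ^ (-(m + 1))) := by field_simp
      _ = _ := by
          rw [← Real.rpow_add hna, show β + -(m + 1) = β - 1 - m by ring]; ring
  calc _ ≤ ‖h‖⁻¹ * (‖t • k (a + h)‖ + ‖t • k a‖ + ‖t • k' a h‖) := by
        gcongr
        exact (norm_sub_le _ _).trans (by gcongr; exact norm_sub_le _ _)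
    _ ≤ _ := by linarith

/-- The case of `hasFDerivAt_singular` where the point of differentiation is the origin of the
increment `h`. The difference quotient `U h` is at most `X + B h (· + h)`, where `X` is a fixed
integrable function and `B h` is supported in a ball that shrinks to the origin; the part below `X`
is handled by dominated convergence, and the integral of `B h` tends to `0`. -/
lemma hasFDerivAt_singular_zero {F : Type*} [NormedAddCommGroup F] [NormedSpace ℝ F]
    [CompleteSpace F]
    {k : E3 → F} {k' : E3 → E3 →L[ℝ] F} (hk : ∀ a ≠ 0, HasFDerivAt k (k' a) a)
    (hkM : StronglyMeasurable k) (hkM' : StronglyMeasurable k')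
    {m c β A R : ℝ} (hm : 0 ≤ m) (hβ0 : 0 ≤ β) (hβ1 : β ≤ 1) (hmβ : m + 1 - β < 3)
    (hc : 0 ≤ c) (hA : 0 ≤ A)
    (hkm : ∀ a ≠ 0, ‖k a‖ ≤ c * ‖a‖ ^ (-m))
    (hk' : ∀ a ≠ 0, ‖k' a‖ ≤ c * ‖a‖ ^ (-(m + 1)))
    {w : E3 → ℝ} (hw : Measurable w) (hwA : ∀ a, |w a| ≤ A * ‖a‖ ^ β)
    (hR : ∀ a, R ≤ ‖a‖ → w a = 0) :
    Integrable (fun a => w a • k' a) ∧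
    HasFDerivAt (fun h => ∫ a, w a • k (a + h)) (∫ a, w a • k' a) 0 := by
  have hM : ∀ a, |w a| ≤ A * |R| ^ β := by
    intro a
    rcases le_or_gt R ‖a‖ with h | h
    · rw [hR a h, abs_zero]; positivity
    · refine (hwA a).trans ?_
      have := h.le.trans (le_abs_self R)
      gcongr
  have hk0 : ∀ᵐ a : E3, a ≠ 0 := by simp [ae_iff]
  have hkb : ∀ h : E3, ∀ᵐ a : E3, a + h ≠ 0 := by
    intro h
    have : ∀ᵐ a : E3, a ≠ -h := by simp [ae_iff]
    filter_upwards [this] with a ha h'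
    exact ha (eq_neg_of_add_eq_zero_left h')
  have hi : ∀ h, Integrable (fun a => w a • k (a + h)) := fun h =>
    integrable_bdd_smul_shift hkM (by linarith) hkm hw hM hR h
  have hgi : ∀ r, IntegrableOn (fun a : E3 => ‖a‖ ^ (β - 1 - m)) (ball 0 r) :=
    fun r => integrableOn_norm_rpow_ball (by linarith) r
  set C1 : ℝ := A * c * (2 ^ (m + 1) + 3) with hC1
  set X : E3 → ℝ := (ball (0 : E3) R).indicator (fun a => C1 * ‖a‖ ^ (β - 1 - m)) with hX
  have hX0 : ∀ a, 0 ≤ X a := fun a => Set.indicator_nonneg (fun a _ => by positivity) a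
  have hXi : Integrable X := (integrable_indicator_iff measurableSet_ball).2 ((hgi R).const_mul C1)
  have hi' : Integrable (fun a => w a • k' a) := by
    refine hXi.mono' (hw.stronglyMeasurable.smul hkM').aestronglyMeasurable ?_
    filter_upwards [hk0] with a ha
    by_cases haR : a ∈ ball (0 : E3) R
    · rw [hX, Set.indicator_of_mem haR, norm_smul, Real.norm_eq_abs]
      calc |w a| * ‖k' a‖ ≤ (A * ‖a‖ ^ β) * (c * ‖a‖ ^ (-(m + 1))) :=
            mul_le_mul (hwA a) (hk' a ha) (norm_nonneg _) (by positivity)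
        _ = A * c * 1 * ‖a‖ ^ (β - 1 - m) := by
          rw [show β - 1 - m = β + -(m + 1) by ring, Real.rpow_add (norm_pos_iff.2 ha)]; ring
        _ ≤ _ := by
          rw [hC1]
          gcongr
          have : (0:ℝ) ≤ 2 ^ (m + 1) := by positivity
          linarith
    · rw [hX, Set.indicator_of_notMem haR, hR a (by simpa using haR)]
      simp
  refine ⟨hi', ?_⟩
  set B : E3 → E3 → ℝ := fun h =>
    (ball (0 : E3) (3 * ‖h‖)).indicator (fun a => A * c * 6 * ‖a‖ ^ (β - 1 - m)) with hB
  have hB0 : ∀ h a, 0 ≤ B h a := fun h a => Set.indicator_nonneg (fun a _ => by positivity) a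
  have hBi : ∀ h, Integrable (B h) := fun h =>
    (integrable_indicator_iff measurableSet_ball).2 ((hgi _).const_mul _)
  set U : E3 → E3 → ℝ := fun h a =>
    ‖h‖⁻¹ * ‖w a • k (a + h) - w a • k a - w a • k' a h‖ with hU
  have hi0 : Integrable (fun a => w a • k a) := by simpa using hi 0
  have hi'h : ∀ h, Integrable (fun a => w a • k' a h) := fun h => by
    simpa using hi'.apply_continuousLinearMap h
  have hUi : ∀ h, Integrable (U h) := fun h =>
    ((((hi h).sub hi0).sub (hi'h h)).norm).const_mul _
  have hU0 : ∀ h a, 0 ≤ U h a := fun h a => by positivity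
  have hUle : ∀ h, ∀ᵐ a, U h a ≤ X a + B h (a + h) := by
    intro h
    filter_upwards [hk0, hkb h] with a ha hb
    by_cases haR : a ∈ ball (0 : E3) R
    swap
    · have : U h a = 0 := by simp [hU, hR a (by simpa using haR)]
      rw [this]
      exact add_nonneg (hX0 _) (hB0 _ _)
    have hXa : X a = C1 * ‖a‖ ^ (β - 1 - m) := Set.indicator_of_mem haR _
    rcases le_or_gt (2 * ‖h‖) ‖a‖ with hah | hah
    · refine le_trans ?_ (le_add_of_nonneg_right (hB0 _ _))
      rw [hXa]
      rcases eq_or_ne h 0 with rfl | hh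
      · simp only [hU, norm_zero, inv_zero, zero_mul]; positivity
      have hnh : 0 < ‖h‖ := norm_pos_iff.2 hh
      have e := singular_far_bound hk hm hc hk' ha hah
      calc U h a = ‖h‖⁻¹ * (|w a| * ‖k (a + h) - k a - k' a h‖) := by
            simp only [hU]
            rw [← smul_sub, ← smul_sub, norm_smul, Real.norm_eq_abs]
        _ ≤ ‖h‖⁻¹ * ((A * ‖a‖ ^ β) *
              (c * (2 ^ (m + 1) + 1) * ‖a‖ ^ (-(m + 1)) * ‖h‖)) := by
            gcongr
            exact hwA a
        _ = A * c * (2 ^ (m + 1) + 1) * ‖a‖ ^ (β - 1 - m) := by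
            rw [show β - 1 - m = β + -(m + 1) by ring, Real.rpow_add (norm_pos_iff.2 ha)]
            field_simp
        _ ≤ _ := by
            rw [hC1]
            gcongr
            norm_num
    · have e := singular_near_bound hc hβ0 hβ1 hkm hk' (hwA a) hA ha hb hah
      have hBa : B h (a + h) = A * c * 6 * ‖a + h‖ ^ (β - 1 - m) := by
        refine Set.indicator_of_mem ?_ _
        rw [mem_ball_zero_iff]
        linarith [norm_add_le a h]
      rw [hXa, hBa]
      refine e.trans ?_
      gcongr
      rw [hC1]
      gcongr
      have : (0:ℝ) ≤ 2 ^ (m + 1) := by positivity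
      linarith
  -- the part of the difference quotient dominated by a fixed integrable function
  have hP : Tendsto (fun h => ∫ a, min (U h a) (X a)) (𝓝 0) (𝓝 0) := by
    have : Tendsto (fun h => ∫ a, min (U h a) (X a)) (𝓝 0) (𝓝 (∫ _ : E3, (0 : ℝ))) := by
      refine tendsto_integral_filter_of_dominated_convergence X ?_ ?_ hXi ?_
      · exact Eventually.of_forall fun h =>
          (hUi h).aestronglyMeasurable.inf hXi.aestronglyMeasurable
      · refine Eventually.of_forall fun h => Eventually.of_forall fun a => ?_
        rw [Real.norm_of_nonneg (le_min (hU0 h a) (hX0 a))]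
        exact min_le_right _ _
      · filter_upwards [hk0] with a ha
        have hd := hasFDerivAt_iff_tendsto.1 ((hk a ha).const_smul (w a))
        have hd2 : Tendsto (fun h => U h a) (𝓝 0) (𝓝 0) := by
          have ht : Tendsto (fun h : E3 => a + h) (𝓝 0) (𝓝 a) := by
            have : Tendsto (fun h : E3 => a + h) (𝓝 0) (𝓝 (a + 0)) :=
              (continuous_const.add continuous_id).tendsto 0
            simpa using this
          refine (hd.comp ht).congr fun h => ?_
          simp [hU]
        exact squeeze_zero (fun h => le_min (hU0 h a) (hX0 a)) (fun h => min_le_left _ _) hd2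
    simpa using this
  have hBt : Tendsto (fun h => ∫ a, B h a) (𝓝 0) (𝓝 0) := by
    have : Tendsto (fun h => ∫ a, B h a) (𝓝 0) (𝓝 (∫ _ : E3, (0 : ℝ))) := by
      refine tendsto_integral_filter_of_dominated_convergence
        ((ball (0 : E3) 3).indicator (fun a => A * c * 6 * ‖a‖ ^ (β - 1 - m))) ?_ ?_
        ((integrable_indicator_iff measurableSet_ball).2 ((hgi _).const_mul _)) ?_
      · exact Eventually.of_forall fun h => (hBi h).aestronglyMeasurable
      · filter_upwards [ball_mem_nhds (0 : E3) one_pos] with h hh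
        refine Eventually.of_forall fun a => ?_
        rw [Real.norm_of_nonneg (hB0 h a)]
        refine Set.indicator_le_indicator_of_subset (ball_subset_ball ?_)
          (fun a => by positivity) a
        rw [mem_ball_zero_iff] at hh
        linarith
      · filter_upwards [hk0] with a ha
        have hna : 0 < ‖a‖ := norm_pos_iff.2 ha
        refine tendsto_const_nhds.congr' ?_
        filter_upwards [ball_mem_nhds (0 : E3) (show 0 < ‖a‖ / 3 by positivity)] with h hh
        rw [mem_ball_zero_iff] at hh
        refine (Set.indicator_of_notMem ?_ _).symm
        rw [mem_ball_zero_iff]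
        linarith
    simpa using this
  rw [hasFDerivAt_iff_tendsto]
  refine squeeze_zero (fun h => by positivity) (fun h => ?_) (by simpa using hP.add hBt)
  have hBih : Integrable (fun a => B h (a + h)) := (hBi h).comp_add_right h
  have hmi : Integrable (fun a => min (U h a) (X a)) := (hUi h).inf hXi
  calc ‖h - 0‖⁻¹ * ‖(∫ a, w a • k (a + h)) - (∫ a, w a • k (a + 0)) - (∫ a, w a • k' a) (h - 0)‖
      = ‖h‖⁻¹ * ‖∫ a, (w a • k (a + h) - w a • k a - w a • k' a h)‖ := by
        have hs : Integrable (fun a => w a • k (a + h) - w a • k a) := (hi h).sub hi0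
        rw [integral_sub hs (hi'h h), integral_sub (hi h) hi0,
          ContinuousLinearMap.integral_apply hi']
        simp
    _ ≤ ∫ a, U h a := by
        rw [hU, integral_const_mul]
        gcongr
        exact norm_integral_le_integral_norm _
    _ ≤ ∫ a, (min (U h a) (X a) + B h (a + h)) := by
        refine integral_mono_ae (hUi h) (hmi.add hBih) ?_
        filter_upwards [hUle h] with a ha
        rcases le_total (U h a) (X a) with h1 | h1
        · simp only [min_eq_left h1]; linarith [hB0 h (a + h)]
        · simpa only [min_eq_right h1] using ha
    _ = _ := by
        rw [integral_add hmi hBih, integral_add_right_eq_self (B h) h]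

/-- Differentiation under the integral sign for a convolution with a kernel `k` on `ℝ³` of size
`‖a‖ ^ (-m)` and derivative of size `‖a‖ ^ (-(m + 1))`, at a point `x` where the density `v`
vanishes to order `β`. The condition `m + 1 - β < 3` says that `‖x - y‖ ^ (β - 1 - m)` is locally
integrable. -/
lemma hasFDerivAt_singular {F : Type*} [NormedAddCommGroup F] [NormedSpace ℝ F]
    [CompleteSpace F]
    {k : E3 → F} {k' : E3 → E3 →L[ℝ] F} (hk : ∀ a ≠ 0, HasFDerivAt k (k' a) a)
    (hkM : StronglyMeasurable k) (hkM' : StronglyMeasurable k')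
    {m c β A R : ℝ} (hm : 0 ≤ m) (hβ0 : 0 ≤ β) (hβ1 : β ≤ 1) (hmβ : m + 1 - β < 3)
    (hc : 0 ≤ c) (hA : 0 ≤ A)
    (hkm : ∀ a ≠ 0, ‖k a‖ ≤ c * ‖a‖ ^ (-m))
    (hk' : ∀ a ≠ 0, ‖k' a‖ ≤ c * ‖a‖ ^ (-(m + 1)))
    {v : E3 → ℝ} (hv : Measurable v) (x : E3) (hvA : ∀ y, |v y| ≤ A * ‖x - y‖ ^ β)
    (hR : ∀ y, R ≤ ‖x - y‖ → v y = 0) :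
    Integrable (fun y => v y • k' (x - y)) ∧
    HasFDerivAt (fun z => ∫ y, v y • k (z - y)) (∫ y, v y • k' (x - y)) x := by
  obtain ⟨h1, h2⟩ := hasFDerivAt_singular_zero hk hkM hkM' hm hβ0 hβ1 hmβ hc hA hkm hk'
    (w := fun a => v (x - a)) (by fun_prop) (R := R)
    (fun a => by simpa using hvA (x - a)) (fun a ha => hR _ (by simpa using ha))
  refine ⟨by simpa using h1.comp_sub_left x, ?_⟩
  have e1 : (∫ y, v y • k' (x - y)) = ∫ a, v (x - a) • k' a := by
    rw [← integral_sub_left_eq_self _ volume x]; simp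
  have e2 : (fun z => ∫ y, v y • k (z - y)) =
      (fun h => ∫ a, v (x - a) • k (a + h)) ∘ (fun z => z - x) := by
    funext z
    simp only [Function.comp]
    rw [← integral_sub_left_eq_self _ volume x]
    congr 1 with a
    congr 2
    abel
  rw [e1, e2]
  have h3 : HasFDerivAt (fun z : E3 => z - x) (ContinuousLinearMap.id ℝ E3) x :=
    (hasFDerivAt_id x).sub_const x
  have h4 := HasFDerivAt.comp x (g := fun h => ∫ a, v (x - a) • k (a + h))
    (by simpa using h2) h3
  simpa using h4

/-! ### The Newtonian kernel and its derivatives -/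

/-- The Euclidean inner product as an `ℝ`-bilinear map; `innerSL` is only conjugate-linear in its
first argument as far as its type is concerned. -/
noncomputable def innerE : E3 →L[ℝ] E3 →L[ℝ] ℝ := innerSL ℝ

lemma innerE_apply (a b : E3) : innerE a b = inner ℝ a b := rfl

lemma norm_innerE (a : E3) : ‖innerE a‖ = ‖a‖ := innerSL_apply_norm ℝ a

/-- The fundamental solution `1 / (4π|a|)` of `-Δ` on `ℝ³`, with value `0` at the origin. -/
noncomputable def newtonKernel (a : E3) : ℝ := (4 * Real.pi)⁻¹ * ‖a‖⁻¹

/-- The gradient of `newtonKernel` as a linear form, with value `0` at the origin. -/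
noncomputable def newtonGrad (a : E3) : E3 →L[ℝ] ℝ :=
  (-(4 * Real.pi)⁻¹ * (‖a‖ ^ 3)⁻¹) • innerE a

/-- The Hessian of `newtonKernel` as a bilinear form, with value `0` at the origin. -/
noncomputable def newtonHess (a : E3) : E3 →L[ℝ] E3 →L[ℝ] ℝ :=
  (-(4 * Real.pi)⁻¹ * (‖a‖ ^ 3)⁻¹) • innerE +
    (3 * (4 * Real.pi)⁻¹ * (‖a‖ ^ 5)⁻¹) • (innerE a).smulRight (innerE a)

lemma hasFDerivAt_norm_E3 {a : E3} (ha : a ≠ 0) :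
    HasFDerivAt (fun a : E3 => ‖a‖) (‖a‖⁻¹ • innerE a) a := by
  have h1 := ((hasStrictFDerivAt_norm_sq a).hasFDerivAt).sqrt
    (by have := norm_pos_iff.2 ha; positivity)
  simp only [Real.sqrt_sq (norm_nonneg _)] at h1
  refine h1.congr_fderiv ?_
  ext v
  simp [innerE_apply]
  ring

lemma hasFDerivAt_inv_norm_pow {a : E3} (ha : a ≠ 0) (n : ℕ) :
    HasFDerivAt (fun a : E3 => (‖a‖ ^ n)⁻¹) ((-n * (‖a‖ ^ (n + 2))⁻¹) • innerE a) a := by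
  have hna : ‖a‖ ≠ 0 := norm_ne_zero_iff.2 ha
  have h1 : HasDerivAt (fun t : ℝ => (t ^ n)⁻¹) (-n * (‖a‖ ^ (n + 1))⁻¹) ‖a‖ := by
    refine ((hasDerivAt_pow n ‖a‖).inv (pow_ne_zero _ hna)).congr_deriv ?_
    rcases n with _ | n
    · simp
    · field_simp
      simp
      ring
  have h2 := h1.comp_hasFDerivAt a (hasFDerivAt_norm_E3 ha)
  refine h2.congr_fderiv ?_
  rw [smul_smul]
  congr 1
  field_simp
  ring

lemma hasFDerivAt_newtonKernel {a : E3} (ha : a ≠ 0) :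
    HasFDerivAt newtonKernel (newtonGrad a) a := by
  have h := (hasFDerivAt_inv_norm_pow ha 1).const_mul ((4 * Real.pi)⁻¹)
  simp only [pow_one] at h
  refine h.congr_fderiv ?_
  rw [newtonGrad, smul_smul]
  congr 1
  push_cast
  ring

lemma hasFDerivAt_newtonGrad {a : E3} (ha : a ≠ 0) :
    HasFDerivAt newtonGrad (newtonHess a) a := by
  have h := ((hasFDerivAt_inv_norm_pow ha 3).const_mul (-(4 * Real.pi)⁻¹)).smul
    innerE.hasFDerivAt
  refine h.congr_fderiv ?_
  ext v w
  simp [newtonHess, innerE_apply]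
  ring

lemma newtonKernel_bound (a : E3) (ha : a ≠ 0) : ‖newtonKernel a‖ ≤ 1 * ‖a‖ ^ (-(1 : ℝ)) := by
  have hpi := Real.pi_gt_three
  rw [newtonKernel, Real.norm_of_nonneg (by positivity), Real.rpow_neg_one]
  gcongr
  exact inv_le_one_of_one_le₀ (by linarith)

lemma newtonGrad_bound (a : E3) (ha : a ≠ 0) :
    ‖newtonGrad a‖ ≤ 1 * ‖a‖ ^ (-(2 : ℝ)) := by
  have hpi := Real.pi_gt_three
  have hna : ‖a‖ ≠ 0 := norm_ne_zero_iff.2 ha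
  rw [newtonGrad, norm_smul, norm_innerE, norm_mul, norm_neg,
    Real.norm_of_nonneg (by positivity), Real.norm_of_nonneg (by positivity),
    Real.rpow_neg (by positivity), Real.rpow_ofNat]
  calc (4 * Real.pi)⁻¹ * (‖a‖ ^ 3)⁻¹ * ‖a‖ = (4 * Real.pi)⁻¹ * (‖a‖ ^ 2)⁻¹ := by
        field_simp
    _ ≤ _ := by
        gcongr
        exact inv_le_one_of_one_le₀ (by linarith)

lemma newtonHess_bound (a : E3) (ha : a ≠ 0) :
    ‖newtonHess a‖ ≤ 1 * ‖a‖ ^ (-(3 : ℝ)) := by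
  have hpi := Real.pi_gt_three
  have hna : 0 < ‖a‖ := norm_pos_iff.2 ha
  rw [Real.rpow_neg (by positivity), Real.rpow_ofNat]
  have h1 : ‖innerE‖ ≤ 1 :=
    ContinuousLinearMap.opNorm_le_bound _ zero_le_one fun v => by
      rw [one_mul]; exact (norm_innerE v).le
  have h2 : ‖(innerE a).smulRight (innerE a)‖ = ‖a‖ * ‖a‖ := by
    rw [ContinuousLinearMap.norm_smulRight_apply, norm_innerE]
  calc ‖newtonHess a‖ ≤ (4 * Real.pi)⁻¹ * (‖a‖ ^ 3)⁻¹ * 1 +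
        3 * (4 * Real.pi)⁻¹ * (‖a‖ ^ 5)⁻¹ * (‖a‖ * ‖a‖) := by
        unfold newtonHess
        refine (ContinuousLinearMap.opNorm_add_le _ _).trans ?_
        rw [norm_smul, norm_smul, h2, norm_mul, norm_neg,
          Real.norm_of_nonneg (by positivity), Real.norm_of_nonneg (by positivity),
          Real.norm_of_nonneg (by positivity)]
        gcongr
    _ = Real.pi⁻¹ * (‖a‖ ^ 3)⁻¹ := by field_simp; norm_num
    _ ≤ _ := by
        gcongr
        exact inv_le_one_of_one_le₀ (by linarith)

lemma stronglyMeasurable_newtonKernel : StronglyMeasurable newtonKernel := by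
  unfold newtonKernel
  exact Measurable.stronglyMeasurable (by fun_prop)

lemma stronglyMeasurable_newtonGrad : StronglyMeasurable newtonGrad := by
  have h1 : StronglyMeasurable fun a : E3 => -(4 * Real.pi)⁻¹ * (‖a‖ ^ 3)⁻¹ :=
    Measurable.stronglyMeasurable (by fun_prop)
  exact h1.smul innerE.continuous.stronglyMeasurable

/-- Addition stated for a normed group, so that it applies to spaces of bilinear maps without
a separate search for a `ContinuousAdd` instance. -/
lemma stronglyMeasurable_add_normed {F : Type*} [NormedAddCommGroup F] {f g : E3 → F}
    (hf : StronglyMeasurable f) (hg : StronglyMeasurable g) :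
    StronglyMeasurable fun a => f a + g a := hf.add hg

lemma stronglyMeasurable_newtonHess : StronglyMeasurable newtonHess := by
  have h1 : StronglyMeasurable fun a : E3 => -(4 * Real.pi)⁻¹ * (‖a‖ ^ 3)⁻¹ :=
    Measurable.stronglyMeasurable (by fun_prop)
  have h2 : StronglyMeasurable fun a : E3 => 3 * (4 * Real.pi)⁻¹ * (‖a‖ ^ 5)⁻¹ :=
    Measurable.stronglyMeasurable (by fun_prop)
  have hc : Continuous fun a : E3 => innerE a := innerE.continuous
  have h3 : Continuous fun a : E3 => (innerE a).smulRight (innerE a) :=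
    ((ContinuousLinearMap.smulRightL ℝ E3 (E3 →L[ℝ] ℝ)).continuous.comp hc).clm_apply hc
  have h4 : StronglyMeasurable fun a : E3 => (-(4 * Real.pi)⁻¹ * (‖a‖ ^ 3)⁻¹) • innerE :=
    h1.smul stronglyMeasurable_const
  have h5 : StronglyMeasurable fun a : E3 =>
      (3 * (4 * Real.pi)⁻¹ * (‖a‖ ^ 5)⁻¹) • (innerE a).smulRight (innerE a) :=
    h2.smul h3.stronglyMeasurable
  exact stronglyMeasurable_add_normed (F := E3 →L[ℝ] E3 →L[ℝ] ℝ) h4 h5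

lemma newtonGrad_apply_single (a : E3) (j : Fin 3) :
    newtonGrad a (EuclideanSpace.single j 1) = -(4 * Real.pi)⁻¹ * (‖a‖ ^ 3)⁻¹ * a j := by
  simp [newtonGrad, innerE_apply, EuclideanSpace.inner_single_right]

/-- The entries of the Hessian in the form `f_{ij}(a/|a|) |a|⁻³`. -/
lemma newtonHess_apply_single (a : E3) (i j : Fin 3) :
    newtonHess a (EuclideanSpace.single i 1) (EuclideanSpace.single j 1) =
      (-(4 * Real.pi)⁻¹ * ((if i = j then (1 : ℝ) else 0)
          - 3 * (‖a‖⁻¹ • a) i * (‖a‖⁻¹ • a) j)) * (‖a‖ ^ 3)⁻¹ := by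
  have : inner ℝ (EuclideanSpace.single i (1:ℝ) : E3) (EuclideanSpace.single j 1) =
      (if i = j then (1 : ℝ) else 0) := by
    simp [EuclideanSpace.inner_single_right, eq_comm]
  simp only [newtonHess, add_apply, smul_apply,
    ContinuousLinearMap.smulRight_apply, innerE_apply, this]
  simp only [EuclideanSpace.inner_single_right, PiLp.smul_apply, smul_eq_mul]
  simp only [conj_trivial, one_mul]
  ring

/-! ### Polar coordinates and moments on the sphere -/

/-- Integration in polar coordinates on `ℝ³`. -/
lemma integral_polar_s6 {F : E3 → ℝ} (hF : Integrable F) :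
    ∫ a, F a = ∫ θ : sphere (0 : E3) 1, (∫ r in Set.Ioi (0 : ℝ), r ^ 2 * F (r • (θ : E3)))
      ∂((volume : Measure E3).toSphere) := by
  have hd : Module.finrank ℝ E3 - 1 = 2 := by simp
  have hmp := (volume : Measure E3).measurePreserving_homeomorphUnitSphereProd
  rw [hd] at hmp
  have hme : MeasurableEmbedding (homeomorphUnitSphereProd E3) :=
    Homeomorph.measurableEmbedding _
  set G : sphere (0 : E3) 1 × Set.Ioi (0 : ℝ) → ℝ := fun p => F ((p.2 : ℝ) • (p.1 : E3)) with hG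
  have hGc : ∀ a : ({0}ᶜ : Set E3), G (homeomorphUnitSphereProd E3 a) = F a := by
    intro a
    have := congrArg Subtype.val ((homeomorphUnitSphereProd E3).symm_apply_apply a)
    simp only [homeomorphUnitSphereProd_symm_apply_coe] at this
    rw [hG]
    simp only [this]
  have hGi : Integrable G
      ((volume : Measure E3).toSphere.prod (Measure.volumeIoiPow 2)) := by
    rw [← hmp.integrable_comp_emb hme]
    have : G ∘ (homeomorphUnitSphereProd E3) = F ∘ Subtype.val := funext hGc
    rw [this, ← integrableOn_iff_comap_subtypeVal (measurableSet_singleton _).compl]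
    exact hF.integrableOn
  calc ∫ a, F a = ∫ a : ({(0)}ᶜ : Set E3), F a ∂((volume : Measure E3).comap Subtype.val) := by
        rw [integral_subtype_comap (measurableSet_singleton _).compl F,
          restrict_compl_singleton]
    _ = ∫ p, G p ∂((volume : Measure E3).toSphere.prod (Measure.volumeIoiPow 2)) := by
        rw [← hmp.integral_comp hme]
        simp only [hGc]
    _ = ∫ θ, (∫ r, G (θ, r) ∂(Measure.volumeIoiPow 2)) ∂((volume : Measure E3).toSphere) :=
        integral_prod _ hGi
    _ = _ := by
        congr 1 with θ
        simp only [Measure.volumeIoiPow, ENNReal.ofReal]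
        rw [integral_withDensity_eq_integral_smul,
          integral_subtype_comap measurableSet_Ioi
            fun r => Real.toNNReal (r ^ 2) • F (r • (θ : E3)),
          setIntegral_congr_fun measurableSet_Ioi fun r hr => ?_]
        · simp only [NNReal.smul_def, Real.coe_toNNReal _ (pow_nonneg (le_of_lt hr) _),
            smul_eq_mul]
        · exact (measurable_subtype_coe.pow_const _).real_toNNReal

lemma sphere_total : (volume : Measure E3).toSphere.real Set.univ = 4 * Real.pi := by
  rw [Measure.toSphere_real_apply_univ, Measure.real, EuclideanSpace.volume_ball_fin_three]
  have : 0 ≤ Real.pi * 4 / 3 := by positivity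
  simp only [ENNReal.ofReal_one, one_pow, one_mul, finrank_euclideanSpace, Fintype.card_fin,
    ENNReal.toReal_ofReal this]
  push_cast
  ring

lemma integrable_sphere_of_continuous {g : sphere (0 : E3) 1 → ℝ} (hg : Continuous g) :
    Integrable g (volume : Measure E3).toSphere := by
  rw [← integrableOn_univ]
  exact hg.continuousOn.integrableOn_compact isCompact_univ

/-- Second moments on the sphere as second moments on the ball, whose symmetries are those of
Lebesgue measure; the factor is the inverse of `∫ r in 0..1, r ^ 4`. -/
lemma integral_sphere_mul_eq (i j : Fin 3) :
    ∫ θ : sphere (0 : E3) 1, (θ : E3) i * (θ : E3) j ∂((volume : Measure E3).toSphere) =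
      5 * ∫ a in ball (0 : E3) 1, a i * a j := by
  have hi : IntegrableOn (fun a : E3 => a i * a j) (ball 0 1) :=
    (ContinuousOn.integrableOn_compact (isCompact_closedBall (0 : E3) 1)
      (by fun_prop)).mono_set ball_subset_closedBall
  rw [← integral_indicator measurableSet_ball,
    integral_polar_s6 ((integrable_indicator_iff measurableSet_ball).2 hi)]
  have : ∀ θ : sphere (0 : E3) 1, (∫ r in Set.Ioi (0 : ℝ), r ^ 2 *
      (ball (0 : E3) 1).indicator (fun a : E3 => a i * a j) (r • (θ : E3))) =
      5⁻¹ * ((θ : E3) i * (θ : E3) j) := by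
    intro θ
    have hθ : ‖(θ : E3)‖ = 1 := by simp
    have e1 : ∀ r ∈ Set.Ioi (0 : ℝ), r ^ 2 *
      (ball (0 : E3) 1).indicator (fun a : E3 => a i * a j) (r • (θ : E3)) =
      (Set.Iio (1 : ℝ)).indicator (fun r => r ^ 4 * ((θ : E3) i * (θ : E3) j)) r := by
      intro r hr
      have hr' : ‖r • (θ : E3)‖ = r := by
        rw [norm_smul, hθ, mul_one, Real.norm_of_nonneg (le_of_lt hr)]
      by_cases h : r < 1
      · rw [Set.indicator_of_mem (by simpa [hr'] using h),
          Set.indicator_of_mem (by simpa using h)]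
        simp only [PiLp.smul_apply, smul_eq_mul]
        ring
      · rw [Set.indicator_of_notMem (by simpa [hr'] using h),
          Set.indicator_of_notMem (by simpa using h), mul_zero]
    rw [setIntegral_congr_fun measurableSet_Ioi e1, integral_indicator measurableSet_Iio,
      Measure.restrict_restrict measurableSet_Iio, Set.inter_comm, Set.Ioi_inter_Iio,
      integral_mul_const, ← integral_Ioc_eq_integral_Ioo,
      ← intervalIntegral.integral_of_le zero_le_one, integral_pow]
    norm_num
  simp only [this]
  rw [integral_const_mul]
  ring

lemma integral_ball_comp_isometry (e : E3 ≃ₗᵢ[ℝ] E3) (g : E3 → ℝ) :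
    ∫ a in ball (0 : E3) 1, g (e a) = ∫ a in ball (0 : E3) 1, g a := by
  have h := (e.measurePreserving).setIntegral_preimage_emb
    e.toHomeomorph.measurableEmbedding g (ball (0 : E3) 1)
  rw [← h]
  congr 2
  ext a
  simp

/-- Second moments of the surface measure, from its invariance under reflections and
permutations of the coordinates. -/
lemma integral_sphere_mul (i j : Fin 3) :
    ∫ θ : sphere (0 : E3) 1, (θ : E3) i * (θ : E3) j ∂((volume : Measure E3).toSphere) =
      if i = j then 4 * Real.pi / 3 else 0 := by
  split_ifs with hij
  · subst hij
    have hs : ∀ k l : Fin 3,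
        (∫ θ : sphere (0 : E3) 1, (θ : E3) k * (θ : E3) k ∂((volume : Measure E3).toSphere)) =
        ∫ θ : sphere (0 : E3) 1, (θ : E3) l * (θ : E3) l ∂((volume : Measure E3).toSphere) := by
      intro k l
      rw [integral_sphere_mul_eq, integral_sphere_mul_eq,
        ← integral_ball_comp_isometry
          (LinearIsometryEquiv.piLpCongrLeft 2 ℝ ℝ (Equiv.swap k l)) (fun a => a k * a k)]
      simp
    have hsum : ∑ k : Fin 3, ∫ θ : sphere (0 : E3) 1, (θ : E3) k * (θ : E3) k
        ∂((volume : Measure E3).toSphere) = 4 * Real.pi := by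
      rw [← integral_finsetSum _ fun k _ => integrable_sphere_of_continuous (by fun_prop)]
      have : ∀ θ : sphere (0 : E3) 1, ∑ k : Fin 3, (θ : E3) k * (θ : E3) k = 1 := by
        intro θ
        have h := EuclideanSpace.real_norm_sq_eq (θ : E3)
        have hθ : ‖(θ : E3)‖ = 1 := by simp
        rw [hθ] at h
        simp only [← pow_two]
        linarith
      simp only [this]
      rw [integral_const, sphere_total]
      simp
    rw [Finset.sum_congr rfl fun k _ => hs k i] at hsum
    simp at hsum
    linarith
  · have h := integral_ball_comp_isometry
      (LinearIsometryEquiv.piLpCongrRight 2 (fun k : Fin 3 =>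
        if k = i then LinearIsometryEquiv.neg ℝ (E := ℝ) else LinearIsometryEquiv.refl ℝ ℝ))
      (fun a => a i * a j)
    have hji : j ≠ i := fun h => hij h.symm
    simp [hji] at h
    rw [integral_sphere_mul_eq]
    rw [integral_neg] at h
    linarith

/-- The angular part of the Hessian of the Newtonian kernel has mean value zero. -/
lemma integral_sphere_angular (i j : Fin 3) :
    ∫ θ : sphere (0 : E3) 1, ((if i = j then (1 : ℝ) else 0) - 3 * (θ : E3) i * (θ : E3) j)
      ∂((volume : Measure E3).toSphere) = 0 := by
  simp only [mul_assoc]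
  rw [integral_sub (integrable_const _) (integrable_sphere_of_continuous (by fun_prop)),
    integral_const, sphere_total, integral_const_mul, integral_sphere_mul]
  split_ifs <;> simp
  ring

/-! ### The potential of a radial bump -/

/-- A smooth cut-off profile, to be evaluated at the squared norm: `1` on `(-∞, 1]` and `0` on
`[2, ∞)`. -/
noncomputable def cutoff (s : ℝ) : ℝ := Real.smoothTransition (2 - s)

lemma cutoff_of_le_one {s : ℝ} (hs : s ≤ 1) : cutoff s = 1 :=
  Real.smoothTransition.one_of_one_le (by linarith)

lemma cutoff_of_two_le {s : ℝ} (hs : 2 ≤ s) : cutoff s = 0 :=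
  Real.smoothTransition.zero_of_nonpos (by linarith)

lemma abs_cutoff_le (s : ℝ) : |cutoff s| ≤ 1 := by
  rw [cutoff, abs_of_nonneg (Real.smoothTransition.nonneg _)]
  exact Real.smoothTransition.le_one _

lemma contDiff_cutoff : ContDiff ℝ 1 cutoff :=
  Real.smoothTransition.contDiff.comp (contDiff_const.sub contDiff_id)

lemma hasDerivAt_cutoff (s : ℝ) : HasDerivAt cutoff (deriv cutoff s) s :=
  (contDiff_cutoff.differentiable one_ne_zero s).hasDerivAt

lemma deriv_cutoff_of_two_lt {s : ℝ} (hs : 2 < s) : deriv cutoff s = 0 := by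
  have : cutoff =ᶠ[𝓝 s] fun _ => 0 := by
    filter_upwards [lt_mem_nhds hs] with t ht
    exact cutoff_of_two_le ht.le
  rw [this.deriv_eq, deriv_const]

lemma continuous_deriv_cutoff : Continuous (deriv cutoff) :=
  contDiff_cutoff.continuous_deriv le_rfl

/-- The radial bump function on `ℝ³` with profile `cutoff`. -/
noncomputable def bump (a : E3) : ℝ := cutoff (‖a‖ ^ 2)

lemma bump_of_norm_le_one {a : E3} (ha : ‖a‖ ≤ 1) : bump a = 1 :=
  cutoff_of_le_one (by nlinarith [norm_nonneg a])

lemma bump_of_two_le_norm {a : E3} (ha : 2 ≤ ‖a‖) : bump a = 0 :=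
  cutoff_of_two_le (by nlinarith)

lemma bump_neg (a : E3) : bump (-a) = bump a := by simp [bump]

lemma contDiff_bump : ContDiff ℝ 1 bump :=
  contDiff_cutoff.comp (contDiff_norm_sq ℝ)

lemma hasCompactSupport_bump : HasCompactSupport bump :=
  HasCompactSupport.intro (isCompact_closedBall (0 : E3) 2) fun a ha =>
    bump_of_two_le_norm (by simpa using (not_le.1 (by simpa using ha)).le)

lemma fderiv_bump_apply_single (a : E3) (i : Fin 3) :
    fderiv ℝ bump a (EuclideanSpace.single i 1) = 2 * deriv cutoff (‖a‖ ^ 2) * a i := by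
  have h := (hasDerivAt_cutoff (‖a‖ ^ 2)).comp_hasFDerivAt a
    (hasStrictFDerivAt_norm_sq a).hasFDerivAt
  have h' : fderiv ℝ bump a = _ := h.fderiv
  rw [h']
  simp [EuclideanSpace.inner_single_right]
  ring

lemma locallyIntegrable_newtonGrad : LocallyIntegrable newtonGrad volume := by
  intro a
  refine ⟨ball 0 (‖a‖ + 1), isOpen_ball.mem_nhds (by simp), ?_⟩
  refine (integrableOn_norm_rpow_ball (s := -2) (by norm_num) _).mono'
    stronglyMeasurable_newtonGrad.aestronglyMeasurable ?_
  have h0 : ∀ᵐ a : E3, a ≠ 0 := by simp [ae_iff]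
  filter_upwards [ae_restrict_of_ae h0] with b hb
  simpa using newtonGrad_bound b hb

lemma integral_mul_deriv_cutoff :
    ∫ r in Set.Ioi (0 : ℝ), r * deriv cutoff (r ^ 2) = -(1 / 2) := by
  have hc : Continuous fun r : ℝ => r * deriv cutoff (r ^ 2) :=
    continuous_id.mul (continuous_deriv_cutoff.comp (continuous_pow 2))
  have hs : HasCompactSupport fun r : ℝ => r * deriv cutoff (r ^ 2) :=
    HasCompactSupport.intro (isCompact_closedBall (0 : ℝ) 2) fun r hr => by
      have h2 : 2 < |r| := by simpa using hr
      have : 2 < r ^ 2 := by rw [← sq_abs]; nlinarith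
      simp [deriv_cutoff_of_two_lt this]
  have h := integral_Ioi_of_hasDerivAt_of_tendsto' (a := 0) (m := 0)
    (f := fun r : ℝ => cutoff (r ^ 2) / 2) (f' := fun r : ℝ => r * deriv cutoff (r ^ 2))
    (fun r _ => by
      refine (((hasDerivAt_cutoff (r ^ 2)).comp r (hasDerivAt_pow 2 r)).div_const 2).congr_deriv ?_
      simp
      ring)
    (hc.integrable_of_hasCompactSupport hs).integrableOn
    (by
      refine tendsto_const_nhds.congr' ?_
      filter_upwards [eventually_ge_atTop (2 : ℝ)] with r hr
      rw [cutoff_of_two_le (by nlinarith), zero_div])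
  rw [h]
  simp [cutoff_of_le_one]

/-- Derivative of a convolution, together with the integrability of its integrand. It is stated for
abstract normed spaces so that the topology on iterated spaces of continuous linear maps is
unified at the level of normed groups. -/
lemma integrable_and_hasFDerivAt_convolution {G F F' : Type*} [NormedAddCommGroup G]
    [NormedSpace ℝ G] [MeasurableSpace G] [BorelSpace G] {μ : Measure G}
    [μ.IsAddLeftInvariant] [SFinite μ]
    [FiniteDimensional ℝ G] [μ.IsNegInvariant] [NormedAddCommGroup F] [NormedSpace ℝ F]
    [NormedAddCommGroup F'] [NormedSpace ℝ F'] (L : F →L[ℝ] ℝ →L[ℝ] F') {f : G → F} {g : G → ℝ}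
    (hcg : HasCompactSupport g) (hf : LocallyIntegrable f μ) (hg : ContDiff ℝ 1 g) (x : G) :
    Integrable (fun t => L.precompR G (f t) (fderiv ℝ g (x - t))) μ ∧
      HasFDerivAt (fun z => ∫ t, L (f t) (g (z - t)) ∂μ)
        (∫ t, L.precompR G (f t) (fderiv ℝ g (x - t)) ∂μ) x :=
  ⟨(hcg.fderiv ℝ).convolutionExists_right (L.precompR G) hf (hg.continuous_fderiv one_ne_zero) x,
    hcg.hasFDerivAt_convolution_right L hf hg x⟩

/-- The Newtonian potential of a radial bump centred at `x`, equal to `1` near `x`, has Hessian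
`-δ_{ij} / 3` at `x`. One derivative falls on the kernel and the other on the bump. -/
lemma exists_hasFDerivAt_bump_potential (x : E3) :
    ∃ H : E3 →L[ℝ] E3 →L[ℝ] ℝ,
      HasFDerivAt (fun z => ∫ y, bump (x - y) • newtonGrad (z - y)) H x ∧
      ∀ i j : Fin 3, H (EuclideanSpace.single i 1) (EuclideanSpace.single j 1) =
        -(if i = j then (1 : ℝ) / 3 else 0) := by
  set L : (E3 →L[ℝ] ℝ) →L[ℝ] ℝ →L[ℝ] (E3 →L[ℝ] ℝ) :=
    (ContinuousLinearMap.lsmul ℝ ℝ).flip with hL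
  obtain ⟨hint, hconv⟩ := integrable_and_hasFDerivAt_convolution L hasCompactSupport_bump
    locallyIntegrable_newtonGrad contDiff_bump (x - x)
  refine ⟨∫ t, (L.precompR E3) (newtonGrad t) (fderiv ℝ bump (x - x - t)), ?_, ?_⟩
  · have h3 : HasFDerivAt (fun z : E3 => z - x) (ContinuousLinearMap.id ℝ E3) x :=
      (hasFDerivAt_id x).sub_const x
    have h4 := HasFDerivAt.comp (f := fun z : E3 => z - x) x hconv h3
    rw [ContinuousLinearMap.comp_id] at h4
    refine h4.congr_of_eventuallyEq (.of_forall fun z => ?_)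
    simp only [Function.comp]
    rw [← integral_sub_left_eq_self _ volume z]
    congr 1 with t : 1
    rw [← bump_neg]
    simp only [hL, ContinuousLinearMap.flip_apply, ContinuousLinearMap.lsmul_apply]
    congr 2
    · abel
    · abel
  · intro i j
    have hint2 := hint.apply_continuousLinearMap (EuclideanSpace.single i (1:ℝ))
    have hint3 := hint2.apply_continuousLinearMap (EuclideanSpace.single j (1:ℝ))
    rw [ContinuousLinearMap.integral_apply hint,
      ContinuousLinearMap.integral_apply hint2]
    have e : ∀ t : E3, (L.precompR E3) (newtonGrad t) (fderiv ℝ bump (x - x - t))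
        (EuclideanSpace.single i 1) (EuclideanSpace.single j 1) =
        (2 * Real.pi)⁻¹ * deriv cutoff (‖t‖ ^ 2) * (‖t‖ ^ 3)⁻¹ * (t i * t j) := by
      intro t
      change (L (newtonGrad t)) (fderiv ℝ bump (x - x - t) (EuclideanSpace.single i 1))
        (EuclideanSpace.single j 1) = _
      rw [sub_self, zero_sub, fderiv_bump_apply_single]
      simp only [hL, ContinuousLinearMap.flip_apply, ContinuousLinearMap.lsmul_apply,
        smul_apply, newtonGrad_apply_single, norm_neg, PiLp.neg_apply, smul_eq_mul]
      field_simp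
      ring
    simp only [e] at hint3 ⊢
    rw [integral_polar_s6 hint3]
    have e2 : ∀ θ : sphere (0 : E3) 1, (∫ r in Set.Ioi (0 : ℝ), r ^ 2 *
        ((2 * Real.pi)⁻¹ * deriv cutoff (‖r • (θ : E3)‖ ^ 2) * (‖r • (θ : E3)‖ ^ 3)⁻¹ *
          ((r • (θ : E3)) i * (r • (θ : E3)) j))) =
        -(4 * Real.pi)⁻¹ * ((θ : E3) i * (θ : E3) j) := by
      intro θ
      have hθ : ‖(θ : E3)‖ = 1 := by simp
      have e3 : ∀ r ∈ Set.Ioi (0 : ℝ), r ^ 2 *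
        ((2 * Real.pi)⁻¹ * deriv cutoff (‖r • (θ : E3)‖ ^ 2) * (‖r • (θ : E3)‖ ^ 3)⁻¹ *
          ((r • (θ : E3)) i * (r • (θ : E3)) j)) =
          ((2 * Real.pi)⁻¹ * ((θ : E3) i * (θ : E3) j)) * (r * deriv cutoff (r ^ 2)) := by
        intro r hr
        have hr0 : (0 : ℝ) < r := hr
        rw [norm_smul, hθ, mul_one, Real.norm_of_nonneg hr0.le]
        simp only [PiLp.smul_apply, smul_eq_mul]
        field_simp
      rw [setIntegral_congr_fun measurableSet_Ioi e3, integral_const_mul,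
        integral_mul_deriv_cutoff]
      field_simp
      ring
    simp only [e2]
    rw [integral_const_mul, integral_sphere_mul]
    have hpi := Real.pi_pos
    split_ifs
    · field_simp
    · simp

/-! ### Truncated integrals outside the exclusion volume -/

/-- The complement of the exclusion volume of size `ε` and shape `ρ`, translated to the origin. -/
def outside (ρ : E3 → ℝ) (ε : ℝ) : Set E3 := {a | a ≠ 0 ∧ ε * ρ (‖a‖⁻¹ • a) < ‖a‖}

lemma normalize_mem_sphere {a : E3} (ha : a ≠ 0) : ‖a‖⁻¹ • a ∈ sphere (0 : E3) 1 := by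
  have := norm_ne_zero_iff.2 ha
  simp [norm_smul, this]

lemma isOpen_outside {ρ : E3 → ℝ} (hρ : ContinuousOn ρ (sphere 0 1)) (ε : ℝ) :
    IsOpen (outside ρ ε) := by
  have h1 : ContinuousOn (fun a : E3 => ‖a‖⁻¹ • a) {a | a ≠ 0} :=
    (continuousOn_id.norm.inv₀ fun a ha => norm_ne_zero_iff.2 ha).smul continuousOn_id
  have h2 : ContinuousOn (fun a : E3 => ‖a‖ - ε * ρ (‖a‖⁻¹ • a)) {a | a ≠ 0} :=
    continuousOn_id.norm.sub (continuousOn_const.mul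
      (hρ.comp h1 fun a ha => normalize_mem_sphere ha))
  convert h2.isOpen_inter_preimage isOpen_ne (isOpen_Ioi (a := 0)) using 1
  ext a
  simp [outside]

lemma le_norm_of_mem_outside {ρ : E3 → ℝ} {ε m : ℝ} (hε : 0 ≤ ε)
    (hm : ∀ θ ∈ sphere (0 : E3) 1, m ≤ ρ θ) {a : E3} (ha : a ∈ outside ρ ε) : ε * m ≤ ‖a‖ :=
  (mul_le_mul_of_nonneg_left (hm _ (normalize_mem_sphere ha.1)) hε).trans ha.2.le

lemma smul_mem_outside {ρ : E3 → ℝ} {ε r : ℝ} (hr : 0 < r) (θ : sphere (0 : E3) 1) :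
    r • (θ : E3) ∈ outside ρ ε ↔ ε * ρ θ < r := by
  have hθ : ‖(θ : E3)‖ = 1 := by simp
  have hθ0 : (θ : E3) ≠ 0 := by
    intro h
    simp [h] at hθ
  simp only [outside, Set.mem_ofPred_eq, norm_smul, hθ, mul_one, Real.norm_of_nonneg hr.le,
    smul_smul, inv_mul_cancel₀ hr.ne', one_smul, ne_eq, smul_eq_zero, hr.ne', hθ0, or_self,
    not_false_eq_true, true_and]

/-- The `(i, j)` entry of `newtonHess`. -/
noncomputable def hessEntry (i j : Fin 3) (a : E3) : ℝ :=
  newtonHess a (EuclideanSpace.single i 1) (EuclideanSpace.single j 1)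

lemma abs_hessEntry_le (i j : Fin 3) (a : E3) : |hessEntry i j a| ≤ ‖newtonHess a‖ := by
  have := (newtonHess a).le_opNorm₂ (EuclideanSpace.single i 1) (EuclideanSpace.single j 1)
  simpa [hessEntry] using this

lemma stronglyMeasurable_hessEntry (i j : Fin 3) : StronglyMeasurable (hessEntry i j) := by
  have h : hessEntry i j = fun a : E3 => (-(4 * Real.pi)⁻¹ * ((if i = j then (1 : ℝ) else 0)
      - 3 * (‖a‖⁻¹ • a) i * (‖a‖⁻¹ • a) j)) * (‖a‖ ^ 3)⁻¹ := by
    funext a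
    exact newtonHess_apply_single a i j
  rw [h]
  refine Measurable.stronglyMeasurable ?_
  simp only [PiLp.smul_apply, smul_eq_mul]
  fun_prop

/-- Away from the exclusion volume the singular kernel is bounded, so that it can be integrated
against bounded functions of bounded support. -/
lemma integrable_mul_indicator_outside {ρ : E3 → ℝ} (hρ : ContinuousOn ρ (sphere 0 1)) {ε m : ℝ}
    (hε : 0 < ε) (hm0 : 0 < m) (hm : ∀ θ ∈ sphere (0 : E3) 1, m ≤ ρ θ) (i j : Fin 3)
    {w : E3 → ℝ} {M R : ℝ} (hw : Measurable w) (hM : ∀ a, |w a| ≤ M)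
    (hR : ∀ a, R ≤ ‖a‖ → w a = 0) :
    Integrable fun a => w a * (outside ρ ε).indicator (hessEntry i j) a := by
  refine integrable_bdd_smul_of_norm_le (k := (outside ρ ε).indicator (hessEntry i j)) (m := 0)
    (c := (ε * m) ^ (-(3 : ℝ)))
    ((stronglyMeasurable_hessEntry i j).indicator (isOpen_outside hρ ε).measurableSet)
    (by norm_num) (fun a ha => ?_) hw hM hR
  rw [neg_zero, Real.rpow_zero, mul_one]
  by_cases h : a ∈ outside ρ ε
  · rw [Set.indicator_of_mem h]
    refine (abs_hessEntry_le i j a).trans ((newtonHess_bound a ha).trans ?_)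
    rw [one_mul]
    exact Real.rpow_le_rpow_of_nonpos (by positivity) (le_norm_of_mem_outside hε.le hm h)
      (by norm_num)
  · rw [Set.indicator_of_notMem h, norm_zero]
    positivity

/-- The radial integral of the cut-off kernel grows logarithmically at the inner radius. -/
lemma integral_Ioi_inv_mul_cutoff {t : ℝ} (ht : 0 < t) (ht1 : t ≤ 1) :
    ∫ r in Set.Ioi t, r⁻¹ * cutoff (r ^ 2) =
      (∫ r in Set.Ioi 1, r⁻¹ * cutoff (r ^ 2)) - Real.log t := by
  have hint : IntegrableOn (fun r : ℝ => r⁻¹ * cutoff (r ^ 2)) (Set.Ioi t) := by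
    have hz : ∀ r ∈ Set.Ioi t \ Set.Icc t 2, r⁻¹ * cutoff (r ^ 2) = 0 := by
      intro r hr
      have h1 : t < r := hr.1
      have h2 : 2 < r := by
        by_contra! h
        exact hr.2 ⟨h1.le, h⟩
      rw [cutoff_of_two_le (by nlinarith), mul_zero]
    refine IntegrableOn.of_forall_sdiff_eq_zero (ContinuousOn.integrableOn_Icc (a := t) (b := 2) ?_)
      measurableSet_Ioi hz
    refine (continuousOn_id.inv₀ fun r hr => (ht.trans_le hr.1).ne').mul
      (contDiff_cutoff.continuous.comp (continuous_pow 2)).continuousOn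
  rw [← Set.Ioc_union_Ioi_eq_Ioi ht1, setIntegral_union (Set.Ioc_disjoint_Ioi le_rfl)
    measurableSet_Ioi (hint.mono_set Set.Ioc_subset_Ioi_self)
    (hint.mono_set (Set.Ioi_subset_Ioi ht1))]
  have h1 : ∫ r in Set.Ioc t 1, r⁻¹ * cutoff (r ^ 2) = ∫ r in Set.Ioc t 1, r⁻¹ := by
    refine setIntegral_congr_fun measurableSet_Ioc fun r hr => ?_
    have h2 : r ≤ 1 := hr.2
    have h3 : 0 < r := ht.trans hr.1
    rw [cutoff_of_le_one (by nlinarith), mul_one]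
  rw [h1, ← intervalIntegral.integral_of_le ht1, integral_inv_of_pos ht one_pos, one_div,
    Real.log_inv]
  ring

/-- The truncated integral of the Hessian kernel against a radial bump does not depend on the size
of a small exclusion volume: the angular factor has mean zero on the sphere, which kills the
diverging `log ε`, and only the logarithm of the shape is left. -/
lemma integral_bump_mul_indicator_outside {ρ : E3 → ℝ} (hρ : ContinuousOn ρ (sphere 0 1))
    {ε m M : ℝ} (hε : 0 < ε) (hm0 : 0 < m) (hm : ∀ θ ∈ sphere (0 : E3) 1, m ≤ ρ θ)
    (hM : ∀ θ ∈ sphere (0 : E3) 1, ρ θ ≤ M) (hεM : ε * M ≤ 1) (i j : Fin 3) :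
    ∫ a, bump a * (outside ρ ε).indicator (hessEntry i j) a =
      (4 * Real.pi)⁻¹ * ∫ θ : sphere (0 : E3) 1,
        ((if i = j then (1 : ℝ) else 0) - 3 * (θ : E3) i * (θ : E3) j) * Real.log (ρ θ)
          ∂(volume : Measure E3).toSphere := by
  rw [integral_polar_s6 (integrable_mul_indicator_outside hρ hε hm0 hm i j
    contDiff_bump.continuous.measurable (fun a => abs_cutoff_le _)
    (fun a => bump_of_two_le_norm))]
  set c := ∫ r in Set.Ioi (1 : ℝ), r⁻¹ * cutoff (r ^ 2) with hc
  have e : ∀ θ : sphere (0 : E3) 1, (∫ r in Set.Ioi (0 : ℝ), r ^ 2 *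
      (bump (r • (θ : E3)) * (outside ρ ε).indicator (hessEntry i j) (r • (θ : E3)))) =
      (-(4 * Real.pi)⁻¹ * (c - Real.log ε)) *
        ((if i = j then (1 : ℝ) else 0) - 3 * (θ : E3) i * (θ : E3) j) +
      (4 * Real.pi)⁻¹ *
        (((if i = j then (1 : ℝ) else 0) - 3 * (θ : E3) i * (θ : E3) j) * Real.log (ρ θ)) := by
    intro θ
    have hθ : ‖(θ : E3)‖ = 1 := by simp
    have hρθ : 0 < ρ θ := hm0.trans_le (hm θ θ.2)
    have hpos : 0 < ε * ρ θ := mul_pos hε hρθ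
    have e1 : ∀ r ∈ Set.Ioi (0 : ℝ), r ^ 2 *
        (bump (r • (θ : E3)) * (outside ρ ε).indicator (hessEntry i j) (r • (θ : E3))) =
        (Set.Ioi (ε * ρ θ)).indicator (fun r => (-(4 * Real.pi)⁻¹ *
          ((if i = j then (1 : ℝ) else 0) - 3 * (θ : E3) i * (θ : E3) j)) *
            (r⁻¹ * cutoff (r ^ 2))) r := by
      intro r hr
      have hr0 : (0 : ℝ) < r := hr
      by_cases h : ε * ρ θ < r
      · rw [Set.indicator_of_mem ((smul_mem_outside hr0 θ).2 h),
          Set.indicator_of_mem (Set.mem_Ioi.2 h), hessEntry, newtonHess_apply_single, bump,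
          norm_smul, hθ, mul_one, Real.norm_of_nonneg hr0.le, smul_smul,
          inv_mul_cancel₀ hr0.ne', one_smul]
        field_simp
      · rw [Set.indicator_of_notMem (mt (smul_mem_outside hr0 θ).1 h),
          Set.indicator_of_notMem (by simpa using h)]
        simp
    rw [setIntegral_congr_fun measurableSet_Ioi e1, setIntegral_indicator measurableSet_Ioi,
      Set.inter_eq_self_of_subset_right (Set.Ioi_subset_Ioi hpos.le), integral_const_mul,
      integral_Ioi_inv_mul_cutoff hpos
        ((mul_le_mul_of_nonneg_left (hM θ θ.2) hε.le).trans hεM),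
      Real.log_mul hε.ne' hρθ.ne', ← hc]
    ring
  have hang : Continuous fun θ : sphere (0 : E3) 1 =>
      ((if i = j then (1 : ℝ) else 0) - 3 * (θ : E3) i * (θ : E3) j) := by fun_prop
  have hlog : Continuous fun θ : sphere (0 : E3) 1 => Real.log (ρ θ) :=
    (continuousOn_iff_continuous_domRestrict.1 hρ).log fun θ => (hm0.trans_le (hm θ θ.2)).ne'
  have hmul : Continuous fun θ : sphere (0 : E3) 1 =>
      ((if i = j then (1 : ℝ) else 0) - 3 * (θ : E3) i * (θ : E3) j) * Real.log (ρ θ) :=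
    hang.mul hlog
  simp only [e]
  rw [integral_add (integrable_sphere_of_continuous (hang.const_mul _))
    (integrable_sphere_of_continuous (hmul.const_mul _)), integral_const_mul,
    integral_const_mul, integral_sphere_angular, mul_zero, zero_add]

/-- The truncated singular integrals against a density that vanishes at `x` converge to the
absolutely convergent one. -/
lemma tendsto_integral_mul_indicator_outside {ρ : E3 → ℝ} (hρ : ContinuousOn ρ (sphere 0 1))
    (i j : Fin 3) {x : E3} {v : E3 → ℝ} (hv : Measurable v)
    (hint : Integrable fun y => v y * hessEntry i j (x - y)) :
    Tendsto (fun ε => ∫ y, v y * (outside ρ ε).indicator (hessEntry i j) (x - y)) (𝓝[>] 0)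
      (𝓝 (∫ y, v y * hessEntry i j (x - y))) := by
  refine tendsto_integral_filter_of_dominated_convergence (fun y => ‖v y * hessEntry i j (x - y)‖)
    ?_ ?_ hint.norm ?_
  · filter_upwards [self_mem_nhdsWithin] with ε hε
    exact (hv.mul (((stronglyMeasurable_hessEntry i j).indicator
      (isOpen_outside hρ ε).measurableSet).measurable.comp
        (measurable_const.sub measurable_id))).aestronglyMeasurable
  · refine .of_forall fun ε => .of_forall fun y => ?_
    rw [norm_mul, norm_mul]
    exact mul_le_mul_of_nonneg_left (norm_indicator_le_norm_self _ _) (norm_nonneg _)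
  · have h0 : ∀ᵐ y : E3, y ≠ x := by simp [ae_iff]
    filter_upwards [h0] with y hy
    refine tendsto_const_nhds.congr' ?_
    have hxy : x - y ≠ 0 := sub_ne_zero.2 hy.symm
    have ht : Tendsto (fun ε : ℝ => ε * ρ (‖x - y‖⁻¹ • (x - y))) (𝓝[>] 0) (𝓝 0) := by
      have : Tendsto (fun ε : ℝ => ε * ρ (‖x - y‖⁻¹ • (x - y))) (𝓝 0)
          (𝓝 (0 * ρ (‖x - y‖⁻¹ • (x - y)))) := tendsto_id.mul_const _
      rw [zero_mul] at this
      exact this.mono_left nhdsWithin_le_nhds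
    filter_upwards [ht.eventually (gt_mem_nhds (norm_pos_iff.2 hxy))] with ε hε
    rw [Set.indicator_of_mem (show x - y ∈ outside ρ ε from ⟨hxy, hε⟩)]

/-- Subtracting a multiple of a bump turns a density that is Hölder continuous near `x` into one
that vanishes at `x` to Hölder order. -/
lemma exists_abs_sub_bump_le {D : Set E3} (hD : IsOpen D) {x : E3} (hx : x ∈ D) {u : E3 → ℝ}
    {M : ℝ} (hM : ∀ y, |D.indicator u y| ≤ M) {α C : ℝ≥0} (hu : HolderOnWith C α u D) :
    ∃ A, 0 ≤ A ∧ ∀ y, |D.indicator u y - u x * bump (x - y)| ≤ A * ‖x - y‖ ^ (α : ℝ) := by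
  obtain ⟨δ₀, hδ₀, hball⟩ := Metric.isOpen_iff.1 hD x hx
  set δ := min δ₀ 1
  have hδ : 0 < δ := lt_min hδ₀ one_pos
  have hM0 : 0 ≤ M := (abs_nonneg _).trans (hM x)
  refine ⟨C + (M + |u x|) * (δ ^ (α : ℝ))⁻¹, by positivity, fun y => ?_⟩
  have hpow : 0 ≤ ‖x - y‖ ^ (α : ℝ) := by positivity
  rcases lt_or_ge ‖x - y‖ δ with h | h
  · have hy : y ∈ D := hball (by
      rw [mem_ball', dist_eq_norm]
      exact h.trans_le (min_le_left _ _))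
    rw [Set.indicator_of_mem hy, bump_of_norm_le_one (h.le.trans (min_le_right _ _)), mul_one]
    have h1 := hu.dist_le hy hx
    rw [Real.dist_eq, dist_comm, dist_eq_norm] at h1
    refine h1.trans (mul_le_mul_of_nonneg_right ?_ hpow)
    have : 0 ≤ (M + |u x|) * (δ ^ (α : ℝ))⁻¹ := by positivity
    linarith
  · have h1 : |D.indicator u y - u x * bump (x - y)| ≤ M + |u x| := by
      refine (abs_sub _ _).trans (add_le_add (hM y) ?_)
      rw [abs_mul]
      exact mul_le_of_le_one_right (abs_nonneg _) (abs_cutoff_le _)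
    have h2 : 1 ≤ (δ ^ (α : ℝ))⁻¹ * ‖x - y‖ ^ (α : ℝ) := by
      rw [inv_mul_eq_div, one_le_div (by positivity)]
      exact Real.rpow_le_rpow hδ.le h α.2
    calc _ ≤ (M + |u x|) * 1 := by rw [mul_one]; exact h1
      _ ≤ (M + |u x|) * ((δ ^ (α : ℝ))⁻¹ * ‖x - y‖ ^ (α : ℝ)) :=
        mul_le_mul_of_nonneg_left h2 (by positivity)
      _ ≤ _ := by
        have : 0 ≤ C * ‖x - y‖ ^ (α : ℝ) := by positivity
        linarith

/-- The Newtonian potential of a bounded density of bounded support is differentiable, and its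
derivative is obtained by differentiating under the integral sign. -/
lemma hasFDerivAt_newton_potential {w : E3 → ℝ} {M R : ℝ} (hw : Measurable w)
    (hM : ∀ y, |w y| ≤ M) (hR : ∀ y, R ≤ ‖y‖ → w y = 0) (z : E3) :
    Integrable (fun y => w y • newtonGrad (z - y)) ∧
      HasFDerivAt (fun z => ∫ y, w y • newtonKernel (z - y)) (∫ y, w y • newtonGrad (z - y)) z :=
  hasFDerivAt_singular (m := 1) (c := 1) (β := 0) (A := M) (R := R + ‖z‖)
    (fun a ha => hasFDerivAt_newtonKernel ha) stronglyMeasurable_newtonKernel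
    stronglyMeasurable_newtonGrad zero_le_one le_rfl zero_le_one (by norm_num) zero_le_one
    ((abs_nonneg _).trans (hM 0)) newtonKernel_bound
    (fun a ha => by
      have := newtonGrad_bound a ha
      norm_num at this ⊢
      exact this)
    hw z (fun y => by simpa using hM y)
    (fun y hy => hR y (by linarith [norm_sub_le z y]))

/-- Linearity of the derivative, stated for abstract normed spaces so that it applies to functions
with values in spaces of linear forms. -/
lemma hasFDerivAt_add_smul {E F : Type*} [NormedAddCommGroup E] [NormedSpace ℝ E]
    [NormedAddCommGroup F] [NormedSpace ℝ F] {f g : E → F} {f' g' : E →L[ℝ] F} {x : E}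
    (hf : HasFDerivAt f f' x) (hg : HasFDerivAt g g' x) (c : ℝ) :
    HasFDerivAt (fun z => f z + c • g z) (f' + c • g') x :=
  hf.add (hg.const_smul c)

/-! ### The second derivative of the Newtonian potential -/

/-- **Second derivative of the Newtonian potential with a non-spherical exclusion volume.**
For `u` bounded and Hölder continuous on a bounded open `D ⊂ ℝ³` and a shrinking exclusion
volume `V(x,ε)` of shape `ρ` (Lipschitz, positive on `S²`), the Newtonian potential
`N(z) = ∫_D u(y)/(4π|z−y|) dy` is twice differentiable at `x ∈ D` and
`∂²N/∂x_i∂x_j(x) = lim_{ε→0⁺} ∫_{D∖V(x,ε)} ∂²G/∂x_i∂x_j · u − (L_ρ)_{ij} u(x)`, where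
`(L_ρ)_{ij} = δ_{ij}/3 + (1/4π)∫_{S²}(δ_{ij}−3θ_iθ_j) log ρ(θ) dσ(θ)`. -/
theorem newtonian_second_derivative_exclusion_volume
    (D : Set (EuclideanSpace ℝ (Fin 3))) (hDopen : IsOpen D) (hDbdd : Bornology.IsBounded D)
    (x : EuclideanSpace ℝ (Fin 3)) (hx : x ∈ D)
    (u : EuclideanSpace ℝ (Fin 3) → ℝ)
    (hu_bdd : ∃ C : ℝ, ∀ y ∈ D, |u y| ≤ C)
    (α : ℝ≥0) (hα0 : 0 < α) (hα1 : α ≤ 1)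
    (C : ℝ≥0) (hu_holder : HolderOnWith C α u D)
    -- shape of the exclusion volume
    (ρ : EuclideanSpace ℝ (Fin 3) → ℝ)
    (hρ_pos : ∀ θ ∈ Metric.sphere (0 : EuclideanSpace ℝ (Fin 3)) 1, 0 < ρ θ)
    (K : ℝ≥0) (hρ_lip : LipschitzOnWith K ρ (Metric.sphere (0 : EuclideanSpace ℝ (Fin 3)) 1))
    -- the Newtonian potential of u
    (N : EuclideanSpace ℝ (Fin 3) → ℝ)
    (hN : N = fun z => ∫ y in D, u y / (4 * Real.pi * ‖z - y‖))
    -- the second-derivative kernel  ∂²/∂x_i∂x_j [1/(4π|x−y|)] = f_{ij}((x−y)/|x−y|)|x−y|^{−3}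
    (Ker : Fin 3 → Fin 3 → EuclideanSpace ℝ (Fin 3) → EuclideanSpace ℝ (Fin 3) → ℝ)
    (hKer : Ker = fun i j z y =>
      (-(4 * Real.pi)⁻¹ * ((if i = j then (1 : ℝ) else 0)
          - 3 * (‖z - y‖⁻¹ • (z - y)) i * (‖z - y‖⁻¹ • (z - y)) j)) * (‖z - y‖ ^ 3)⁻¹)
    -- the L dyadic of the exclusion volume
    (Lρ : Fin 3 → Fin 3 → ℝ)
    (hLρ : Lρ = fun i j =>
      (if i = j then (1 : ℝ) / 3 else 0)
        + (4 * Real.pi)⁻¹ *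
          ∫ θ : Metric.sphere (0 : EuclideanSpace ℝ (Fin 3)) 1,
            ((if i = j then (1 : ℝ) else 0)
                - 3 * (θ : EuclideanSpace ℝ (Fin 3)) i * (θ : EuclideanSpace ℝ (Fin 3)) j)
              * Real.log (ρ θ)
            ∂((volume : Measure (EuclideanSpace ℝ (Fin 3))).toSphere)) :
    ∃ (N' : EuclideanSpace ℝ (Fin 3) → (EuclideanSpace ℝ (Fin 3) →L[ℝ] ℝ))
      (N'' : EuclideanSpace ℝ (Fin 3) →L[ℝ] EuclideanSpace ℝ (Fin 3) →L[ℝ] ℝ),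
      (∀ᶠ z in 𝓝 x, HasFDerivAt N (N' z) z) ∧
      HasFDerivAt N' N'' x ∧
      ∀ i j : Fin 3,
        Tendsto
          (fun ε : ℝ =>
            ∫ y in D \ ({x} ∪ {y : EuclideanSpace ℝ (Fin 3) |
                0 < ‖x - y‖ ∧ ‖x - y‖ ≤ ε * ρ (‖x - y‖⁻¹ • (x - y))}),
              Ker i j x y * u y)
          (𝓝[>] (0 : ℝ))
          (𝓝 (N'' (EuclideanSpace.single i 1) (EuclideanSpace.single j 1) + Lρ i j * u x)) := by
  obtain ⟨M₀, hM₀⟩ := hu_bdd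
  set M := max M₀ 0 with hMdef
  set w : EuclideanSpace ℝ (Fin 3) → ℝ := D.indicator u with hw_def
  have hM : ∀ y, |w y| ≤ M := by
    intro y
    by_cases hy : y ∈ D
    · rw [hw_def, Set.indicator_of_mem hy]
      exact (hM₀ y hy).trans (le_max_left _ _)
    · rw [hw_def, Set.indicator_of_notMem hy, abs_zero]
      exact le_max_right _ _
  have hw : Measurable w := by
    classical
    rw [hw_def, ← Set.piecewise_eq_indicator]
    exact (hu_holder.continuousOn hα0).measurable_piecewise continuousOn_const
      hDopen.measurableSet
  obtain ⟨R, hRD⟩ := hDbdd.subset_ball (0 : EuclideanSpace ℝ (Fin 3))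
  have hR : ∀ y, R ≤ ‖y‖ → w y = 0 := fun y hy =>
    Set.indicator_of_notMem (fun h => absurd (mem_ball_zero_iff.1 (hRD h)) (not_lt.2 hy)) _
  have hρc : ContinuousOn ρ (sphere 0 1) := hρ_lip.continuousOn
  have hne : (sphere (0 : EuclideanSpace ℝ (Fin 3)) 1).Nonempty :=
    NormedSpace.sphere_nonempty.2 zero_le_one
  obtain ⟨θ₁, hθ₁, hmin⟩ := (isCompact_sphere _ _).exists_isMinOn hne hρc
  obtain ⟨θ₂, hθ₂, hmax⟩ := (isCompact_sphere _ _).exists_isMaxOn hne hρc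
  have hm0 := hρ_pos θ₁ hθ₁
  have hm : ∀ θ ∈ sphere (0 : EuclideanSpace ℝ (Fin 3)) 1, ρ θ₁ ≤ ρ θ := fun θ h => hmin h
  have hP : ∀ θ ∈ sphere (0 : EuclideanSpace ℝ (Fin 3)) 1, ρ θ ≤ ρ θ₂ := fun θ h => hmax h
  -- `w = v + u x • b` with `b` a bump equal to `1` near `x`, so that `v` vanishes at `x`
  set b : EuclideanSpace ℝ (Fin 3) → ℝ := fun y => bump (x - y) with hb_def
  set v : EuclideanSpace ℝ (Fin 3) → ℝ := fun y => w y - u x * b y with hv_def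
  have hb : Measurable b :=
    contDiff_bump.continuous.measurable.comp (measurable_const.sub measurable_id)
  have hb1 : ∀ y, |b y| ≤ 1 := fun y => abs_cutoff_le _
  have hbR : ∀ y, 2 ≤ ‖x - y‖ → b y = 0 := fun y => bump_of_two_le_norm
  have hv : Measurable v := hw.sub (hb.const_mul _)
  have hwv : ∀ y, w y = v y + u x * b y := fun y => by simp [hv_def]
  have hvM : ∀ y, |v y| ≤ M + |u x| := fun y => by
    refine (abs_sub _ _).trans (add_le_add (hM y) ?_)
    rw [abs_mul]
    exact mul_le_of_le_one_right (abs_nonneg _) (hb1 y)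
  have hvR : ∀ y, max (R + ‖x‖) 2 ≤ ‖x - y‖ → v y = 0 := fun y hy => by
    have h1 := (le_max_left _ _).trans hy
    simp only [hv_def, hR y (by linarith [norm_sub_le x y]), hbR y ((le_max_right _ _).trans hy)]
    ring
  have hvR' : ∀ y, max (R + ‖x‖) 2 + ‖x‖ ≤ ‖y‖ → v y = 0 := fun y hy =>
    hvR y (by linarith [norm_sub_norm_le y x, norm_sub_rev x y])
  have hbR' : ∀ y, 2 + ‖x‖ ≤ ‖y‖ → b y = 0 := fun y hy =>
    hbR y (by linarith [norm_sub_norm_le y x, norm_sub_rev x y])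
  obtain ⟨A, hA0, hA⟩ := exists_abs_sub_bump_le hDopen hx hM hu_holder
  obtain ⟨hvint, hvder⟩ := hasFDerivAt_singular (k := newtonGrad) (k' := newtonHess) (m := 2)
    (c := 1) (β := α) (A := A) (R := max (R + ‖x‖) 2) (v := v)
    (fun a ha => hasFDerivAt_newtonGrad ha) stronglyMeasurable_newtonGrad
    stronglyMeasurable_newtonHess zero_le_two α.2 (by exact_mod_cast hα1)
    (by
      have : (0 : ℝ) < α := by exact_mod_cast hα0
      linarith)
    zero_le_one hA0 newtonGrad_bound
    (fun a ha => by
      have := newtonHess_bound a ha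
      norm_num at this ⊢
      exact this)
    hv x hA hvR
  obtain ⟨H, hH, hHe⟩ := exists_hasFDerivAt_bump_potential x
  refine ⟨fun z => (∫ y, v y • newtonGrad (z - y)) + u x • ∫ y, b y • newtonGrad (z - y),
    (∫ y, v y • newtonHess (x - y)) + u x • H, .of_forall fun z => ?_,
    hasFDerivAt_add_smul hvder hH (u x), fun i j => ?_⟩
  · -- `N' z` is the derivative under the integral sign, split along `w = v + u x • b`
    have hNw : N = fun z => ∫ y, w y • newtonKernel (z - y) := by
      rw [hN]
      funext z
      rw [← integral_indicator hDopen.measurableSet]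
      congr 1 with y
      by_cases hy : y ∈ D
      · simp only [hw_def, Set.indicator_of_mem hy, newtonKernel, smul_eq_mul]
        rw [div_eq_mul_inv, mul_inv]
      · simp only [hw_def, Set.indicator_of_notMem hy, zero_smul]
    rw [hNw]
    refine (hasFDerivAt_newton_potential hw hM hR z).2.congr_fderiv ?_
    have hbint : Integrable fun y => u x • b y • newtonGrad (z - y) :=
      (hasFDerivAt_newton_potential hb hb1 hbR' z).1.smul (u x)
    beta_reduce
    rw [← integral_smul, ← integral_add (hasFDerivAt_newton_potential hv hvM hvR' z).1 hbint]
    congr 1 with y : 1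
    rw [hwv, add_smul, mul_smul]
  · have hint : ∀ {ε : ℝ}, 0 < ε → ∀ {f : EuclideanSpace ℝ (Fin 3) → ℝ} {B S : ℝ},
        Measurable f → (∀ y, |f y| ≤ B) → (∀ y, S ≤ ‖x - y‖ → f y = 0) →
        Integrable fun y => f y * (outside ρ ε).indicator (hessEntry i j) (x - y) := by
      intro ε hε f B S hf hB hS
      have h := (integrable_mul_indicator_outside hρc hε hm0 hm i j
        (hf.comp (measurable_const.sub measurable_id)) (fun a => hB (x - a))
        (fun a ha => hS (x - a) (by simpa using ha))).comp_sub_left x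
      simpa using h
    -- once `ε * max ρ ≤ 1` the bump contributes a constant to the truncated integral
    have key : ∀ ε : ℝ, 0 < ε → ε * ρ θ₂ ≤ 1 →
        ∫ y in D \ ({x} ∪ {y : EuclideanSpace ℝ (Fin 3) |
          0 < ‖x - y‖ ∧ ‖x - y‖ ≤ ε * ρ (‖x - y‖⁻¹ • (x - y))}), Ker i j x y * u y =
        (∫ y, v y * (outside ρ ε).indicator (hessEntry i j) (x - y)) +
          u x * (Lρ i j - if i = j then (1 : ℝ) / 3 else 0) := by
      intro ε hε hε1
      have hset : D \ ({x} ∪ {y : EuclideanSpace ℝ (Fin 3) |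
          0 < ‖x - y‖ ∧ ‖x - y‖ ≤ ε * ρ (‖x - y‖⁻¹ • (x - y))}) =
          D ∩ (fun y => x - y) ⁻¹' outside ρ ε := by
        ext y
        simp only [Set.mem_sdiff, Set.mem_union, Set.mem_singleton_iff, Set.mem_ofPred_eq,
          Set.mem_inter_iff, Set.mem_preimage, outside, norm_pos_iff, sub_ne_zero, not_or,
          not_and, not_le]
        constructor
        · rintro ⟨h1, h2, h3⟩
          exact ⟨h1, Ne.symm h2, h3 (Ne.symm h2)⟩
        · rintro ⟨h1, h2, h3⟩
          exact ⟨h1, Ne.symm h2, fun _ => h3⟩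
      have hmeas : MeasurableSet (D ∩ (fun y => x - y) ⁻¹' outside ρ ε) :=
        hDopen.measurableSet.inter ((isOpen_outside hρc ε).measurableSet.preimage
          (measurable_const.sub measurable_id))
      have hL : Lρ i j - (if i = j then (1 : ℝ) / 3 else 0) =
          ∫ y, b y * (outside ρ ε).indicator (hessEntry i j) (x - y) := by
        rw [integral_sub_left_eq_self
          (fun a => bump a * (outside ρ ε).indicator (hessEntry i j) a) volume x,
          integral_bump_mul_indicator_outside hρc hε hm0 hm hP hε1, hLρ, add_sub_cancel_left]
      rw [hset, ← integral_indicator hmeas, hL, ← integral_const_mul,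
        ← integral_add (hint hε hv hvM hvR) ((hint hε hb hb1 hbR).const_mul _)]
      congr 1 with y
      classical
      have e : v y * (outside ρ ε).indicator (hessEntry i j) (x - y) +
          u x * (b y * (outside ρ ε).indicator (hessEntry i j) (x - y)) =
          w y * (outside ρ ε).indicator (hessEntry i j) (x - y) := by
        rw [hwv]
        ring
      rw [e, Set.indicator_apply, Set.indicator_apply, hw_def, Set.indicator_apply]
      by_cases h1 : y ∈ D <;> by_cases h2 : x - y ∈ outside ρ ε <;>
        simp only [Set.mem_inter_iff, Set.mem_preimage, h1, h2, and_true, and_false, if_true,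
          if_false, mul_zero, zero_mul]
      rw [hessEntry, newtonHess_apply_single, hKer, mul_comm]
    have hvint2 := hvint.apply_continuousLinearMap (EuclideanSpace.single i (1 : ℝ))
    have hvint3 := hvint2.apply_continuousLinearMap (EuclideanSpace.single j (1 : ℝ))
    have hve : (∫ y, v y • newtonHess (x - y)) (EuclideanSpace.single i 1)
        (EuclideanSpace.single j 1) = ∫ y, v y * hessEntry i j (x - y) := by
      rw [ContinuousLinearMap.integral_apply hvint, ContinuousLinearMap.integral_apply hvint2]
      rfl
    -- the term `-δ_{ij} / 3` of `H` cancels the one in `Lρ`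
    have hlim := (tendsto_integral_mul_indicator_outside hρc i j hv hvint3).add_const
      (u x * (Lρ i j - if i = j then (1 : ℝ) / 3 else 0))
    have hval : ((∫ y, v y • newtonHess (x - y)) + u x • H) (EuclideanSpace.single i 1)
        (EuclideanSpace.single j 1) + Lρ i j * u x =
        (∫ y, v y * hessEntry i j (x - y)) + u x * (Lρ i j - if i = j then (1 : ℝ) / 3 else 0) := by
      change (∫ y, v y • newtonHess (x - y)) (EuclideanSpace.single i 1)
          (EuclideanSpace.single j 1) + u x * H (EuclideanSpace.single i 1)
          (EuclideanSpace.single j 1) + Lρ i j * u x = _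
      rw [hHe, hve]
      ring
    rw [hval]
    refine hlim.congr' ?_
    have hP0 := hρ_pos θ₂ hθ₂
    filter_upwards [Ioc_mem_nhdsGT (inv_pos.2 hP0)] with ε hε
    refine (key ε hε.1 ?_).symm
    have := mul_le_mul_of_nonneg_right hε.2 hP0.le
    rwa [inv_mul_cancel₀ hP0.ne'] at this
end
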